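/- arXiv:2408.04384 — 7 statements merged into one kernel-verified Lean document; each statement's English description precedes it below -/
import Mathlib

section
/- Let U be a domain in ℂ^d (a nonempty open connected subset of EuclideanSpace ℂ (Fin d)), let g be holomorphic on U, and let f : ℂ^d → ℂ be a nonzero affine-linear function, i.e. f(z) = l(z) + c for some ℂ-linear functional l and constant c ∈ ℂ with f not identically zero. If every zero of f lying in U is a zero of g (i.e. for all z ∈ U, f(z) = 0 implies g(z) = 0), then g/f extends holomorphically to U: there exists a function h holomorphic on U such that g(z) = f(z)·h(z) for all z ∈ U. -/
/-!
Since `f` is affine and not identically zero, its derivative vanishes at none of its zeros, and this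
is all that division by `f` requires.

In one variable, a zero `a` of `f` is then simple, so near `a` the quotient `g / f` is the quotient
of the slopes `(g z - g a) / (z - a)` and `(f z - f a) / (z - a)`. In several variables, let
`f a = 0` and choose `v` with `df(a) v ≠ 0`. For small `r` and `w` near `a`, the function
`s ↦ f (w + s v)` has only simple zeros in the disc `|s| ≤ r` and none on its boundary. By the mean
value property, the one-variable quotient along the line `w + s v` takes at `s = 0` the value
`h w = (2π)⁻¹ ∫ g (w + r exp(iθ) v) / f (w + r exp(iθ) v) dθ`.
The integrand is holomorphic in `w`, hence so is `h`. At a zero of `f`, the relation `g = f h` gives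
`dg = h df`; as `df ≠ 0` there, the value of `h` is determined and the local quotients agree.
-/

open Filter Metric Set Topology

section NormedSpace

lemma eventually_forall_add_smul {R E : Type*} [TopologicalSpace R] [TopologicalSpace E] [Add E]
    [ContinuousAdd E] [SMul R E] [ContinuousSMul R E] {K : Set R} (hK : IsCompact K) {a v : E}
    {p : E → Prop} (hp : ∀ s ∈ K, ∀ᶠ z in 𝓝 (a + s • v), p z) :
    ∀ᶠ w in 𝓝 a, ∀ s ∈ K, p (w + s • v) := by
  refine hK.eventually_forall_of_forall_eventually fun s hs => ?_
  have hcont : Continuous fun q : E × R => q.1 + q.2 • v := by fun_prop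
  exact hcont.tendsto (a, s) (hp s hs)

variable {𝕜 E F : Type*} [NontriviallyNormedField 𝕜] [NormedAddCommGroup E] [NormedSpace 𝕜 E]
  [NormedAddCommGroup F] [NormedSpace 𝕜 F]

lemma exists_forall_closedBall_add_smul_mem_and_ne {f : E → F} {U : Set E} {a v : E}
    (hU : U ∈ 𝓝 a) (hf : DifferentiableAt 𝕜 f a) (hv : fderiv 𝕜 f a v ≠ 0) :
    ∃ r > 0, ∀ s ∈ closedBall (0 : 𝕜) r, a + s • v ∈ U ∧ (s ≠ 0 → f (a + s • v) ≠ f a) := by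
  have hline : HasDerivAt (fun s : 𝕜 => a + s • v) v 0 := by
    simpa using ((hasDerivAt_id (0 : 𝕜)).smul_const v).const_add a
  have hzero : a = a + (0 : 𝕜) • v := by simp
  have hderiv : HasDerivAt (fun s : 𝕜 => f (a + s • v)) (fderiv 𝕜 f a v) 0 :=
    hf.hasFDerivAt.comp_hasDerivAt_of_eq 0 hline hzero
  have hmem : ∀ᶠ s in 𝓝 (0 : 𝕜), a + s • v ∈ U :=
    hline.continuousAt.eventually_mem (by rwa [← hzero])
  have hne : ∀ᶠ s in 𝓝 (0 : 𝕜), s ≠ 0 → f (a + s • v) ≠ f a :=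
    eventually_nhdsWithin_iff.1 (hderiv.eventually_ne hv)
  exact nhds_basis_closedBall.eventually_iff.1 (hmem.and hne)

lemma fderiv_ne_zero_of_eq_add_const {f : E → F} {l : E →L[𝕜] F} {c : F}
    (hf : ∀ z, f z = l z + c) (hfne : ∃ z, f z ≠ 0) {a : E} (hfa : f a = 0) :
    fderiv 𝕜 f a ≠ 0 := by
  intro hzero
  have hl : l = 0 := by rwa [funext hf, fderiv_add_const, l.fderiv] at hzero
  have hconst : ∀ z, f z = f a := fun z => by simp only [hf, hl, zero_apply]
  obtain ⟨z, hz⟩ := hfne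
  exact hz ((hconst z).trans hfa)

lemma eq_of_smul_eventuallyEq_smul {f : E → 𝕜} {h₁ h₂ : E → F} {a : E}
    (hf : DifferentiableAt 𝕜 f a) (hfa : f a = 0 → fderiv 𝕜 f a ≠ 0)
    (hh₁ : DifferentiableAt 𝕜 h₁ a) (hh₂ : DifferentiableAt 𝕜 h₂ a)
    (heq : f • h₁ =ᶠ[𝓝 a] f • h₂) : h₁ a = h₂ a := by
  by_cases hzero : f a = 0
  · obtain ⟨v, hv⟩ := DFunLike.ne_iff.1 (hfa hzero)
    have hderiv := DFunLike.congr_fun (heq.fderiv_eq (𝕜 := 𝕜)) v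
    simp only [fderiv_smul hf hh₁, fderiv_smul hf hh₂, hzero, zero_smul, zero_add,
      ContinuousLinearMap.smulRight_apply] at hderiv
    exact smul_right_injective F hv hderiv
  · exact smul_right_injective F hzero heq.self_of_nhds

lemma exists_differentiableOn_eq_smul_of_local {f : E → 𝕜} {g : E → F} {U : Set E}
    (hU : IsOpen U) (hf : DifferentiableOn 𝕜 f U) (hg : DifferentiableOn 𝕜 g U)
    (hf' : ∀ z ∈ U, f z = 0 → fderiv 𝕜 f z ≠ 0)
    (hloc : ∀ a ∈ U, f a = 0 →
      ∃ h : E → F, ∀ᶠ w in 𝓝 a, DifferentiableAt 𝕜 h w ∧ g w = f w • h w) :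
    ∃ h : E → F, DifferentiableOn 𝕜 h U ∧ ∀ z ∈ U, g z = f z • h z := by
  have hquot : ∀ a ∈ U, ∃ h : E → F, ∀ᶠ w in 𝓝 a, DifferentiableAt 𝕜 h w ∧ g w = f w • h w := by
    intro a ha
    by_cases hfa : f a = 0
    · exact hloc a ha hfa
    have hUa := hU.mem_nhds ha
    refine ⟨fun w => (f w)⁻¹ • g w, ?_⟩
    filter_upwards [hU.eventually_mem ha, (hf.differentiableAt hUa).continuousAt.eventually_ne hfa]
      with w hw hfw
    exact ⟨((hf.differentiableAt (hU.mem_nhds hw)).inv hfw).smul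
      (hg.differentiableAt (hU.mem_nhds hw)), (smul_inv_smul₀ hfw _).symm⟩
  choose! h hh using hquot
  refine ⟨fun z => h z z, fun a ha => ?_, fun z hz => (hh z hz).self_of_nhds.2⟩
  suffices hcongr : (fun z => h z z) =ᶠ[𝓝 a] h a from
    ((hh a ha).self_of_nhds.1.congr_of_eventuallyEq hcongr).differentiableWithinAt
  filter_upwards [hU.mem_nhds ha, (hh a ha).eventually_nhds] with w hw hha
  refine eq_of_smul_eventuallyEq_smul (hf.differentiableAt (hU.mem_nhds hw)) (hf' w hw)
    (hh w hw).self_of_nhds.1 hha.self_of_nhds.1 ?_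
  filter_upwards [hh w hw, hha] with z hz hza
  exact hz.2.symm.trans hza.2

end NormedSpace

section OneVariable

variable {F : Type*} [NormedAddCommGroup F] [NormedSpace ℂ F] [CompleteSpace F]
  {f : ℂ → ℂ} {g : ℂ → F} {D : Set ℂ}

lemma exists_eventually_differentiableAt_eq_smul_of_deriv_ne_zero {a : ℂ} (hD : D ∈ 𝓝 a)
    (hf : DifferentiableOn ℂ f D) (hg : DifferentiableOn ℂ g D) (hfa : f a = 0) (hga : g a = 0)
    (hf' : deriv f a ≠ 0) :
    ∃ h : ℂ → F, ∀ᶠ z in 𝓝 a, DifferentiableAt ℂ h z ∧ g z = f z • h z := by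
  have hfs := (Complex.differentiableOn_dslope hD).2 hf
  have hgs := (Complex.differentiableOn_dslope hD).2 hg
  have hne : ∀ᶠ z in 𝓝 a, dslope f a z ≠ 0 :=
    (hfs.differentiableAt hD).continuousAt.eventually_ne (by rwa [dslope_same])
  refine ⟨fun z => (dslope f a z)⁻¹ • dslope g a z, ?_⟩
  filter_upwards [hne, eventually_mem_nhds_iff.2 hD] with z hz hDz
  refine ⟨((hfs.differentiableAt hDz).inv hz).smul (hgs.differentiableAt hDz), ?_⟩
  have hfz : f z = (z - a) * dslope f a z := by
    rw [← smul_eq_mul, sub_smul_dslope, hfa, sub_zero]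
  have hgz : g z = (z - a) • dslope g a z := by rw [sub_smul_dslope, hga, sub_zero]
  rw [hfz, hgz, mul_smul, smul_inv_smul₀ hz]

lemma exists_differentiableOn_eq_smul_of_deriv_ne_zero (hD : IsOpen D)
    (hf : DifferentiableOn ℂ f D) (hg : DifferentiableOn ℂ g D)
    (hf' : ∀ z ∈ D, f z = 0 → deriv f z ≠ 0) (hfg : ∀ z ∈ D, f z = 0 → g z = 0) :
    ∃ h : ℂ → F, DifferentiableOn ℂ h D ∧ ∀ z ∈ D, g z = f z • h z :=
  exists_differentiableOn_eq_smul_of_local hD hf hg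
    (fun z hz hfz hzero => hf' z hz hfz (by rw [← fderiv_apply_one_eq_deriv, hzero]; rfl))
    (fun a ha hfa => exists_eventually_differentiableAt_eq_smul_of_deriv_ne_zero
      (hD.mem_nhds ha) hf hg hfa (hfg a ha hfa) (hf' a ha hfa))

lemma smul_circleAverage_inv_smul {c : ℂ} {R : ℝ} (hD : IsOpen D) (hcD : closedBall c |R| ⊆ D)
    (hf : DifferentiableOn ℂ f D) (hg : DifferentiableOn ℂ g D)
    (hf' : ∀ z ∈ D, f z = 0 → deriv f z ≠ 0) (hfg : ∀ z ∈ D, f z = 0 → g z = 0)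
    (hsphere : ∀ z ∈ sphere c |R|, f z ≠ 0) :
    f c • Real.circleAverage (fun z => (f z)⁻¹ • g z) c R = g c := by
  obtain ⟨h, hh, heq⟩ := exists_differentiableOn_eq_smul_of_deriv_ne_zero hD hf hg hf' hfg
  have hquot : EqOn (fun z => (f z)⁻¹ • g z) h (sphere c |R|) := fun z hz => by
    simp only [heq z (hcD (sphere_subset_closedBall hz)), inv_smul_smul₀ (hsphere z hz)]
  have hmean : Real.circleAverage h c R = h c :=
    DiffContOnCl.circleAverage (hh.mono (closure_ball_subset_closedBall.trans hcD)).diffContOnCl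
  rw [Real.circleAverage_congr_sphere hquot, hmean,
    heq c (hcD (mem_closedBall_self (abs_nonneg R)))]

end OneVariable

section Derivative

variable {E F : Type*} [NormedAddCommGroup E] [NormedSpace ℂ E] [NormedAddCommGroup F]
  [NormedSpace ℂ F] {f : E → F}

lemma norm_fderiv_le_of_forall_ball_norm_le {a : E} {r M : ℝ} (hr : 0 < r)
    (hf : DifferentiableOn ℂ f (ball a r)) (hM : ∀ z ∈ ball a r, ‖f z‖ ≤ M) :
    ‖fderiv ℂ f a‖ ≤ 2 * M / r := by
  refine Complex.norm_fderiv_le_div_of_mapsTo_ball hf (fun z hz => ?_) hr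
  rw [mem_closedBall_iff_norm, two_mul]
  exact (norm_sub_le _ _).trans (add_le_add (hM z hz) (hM a (mem_ball_self hr)))

lemma exists_lipschitzOnWith_ball_of_eventually_differentiableAt {a : E}
    (hf : ∀ᶠ z in 𝓝 a, DifferentiableAt ℂ f z) :
    ∃ r > 0, ∃ C, DifferentiableOn ℂ f (ball a r) ∧ LipschitzOnWith C f (ball a r) := by
  have hbound : ∀ᶠ z in 𝓝 a, ‖f z‖ < ‖f a‖ + 1 :=
    hf.self_of_nhds.continuousAt.norm.eventually_lt_const (lt_add_one _)
  obtain ⟨r, hr, hball⟩ := Metric.eventually_nhds_iff_ball.1 (hf.and hbound)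
  have hsub : ∀ z ∈ ball a (r / 2), ball z (r / 2) ⊆ ball a r := fun z hz =>
    ball_subset_ball' (by linarith [mem_ball.1 hz])
  have hdiff : ∀ z ∈ ball a (r / 2), DifferentiableAt ℂ f z := fun z hz =>
    (hball z (ball_subset_ball (by linarith) hz)).1
  refine ⟨r / 2, half_pos hr, (2 * (‖f a‖ + 1) / (r / 2)).toNNReal,
    fun z hz => (hdiff z hz).differentiableWithinAt, ?_⟩
  refine (convex_ball a (r / 2)).lipschitzOnWith_of_nnnorm_fderiv_le (𝕜 := ℂ) hdiff fun z hz => ?_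
  rw [← norm_toNNReal]
  exact Real.toNNReal_le_toNNReal <| norm_fderiv_le_of_forall_ball_norm_le (half_pos hr)
    (fun w hw => (hball w (hsub z hz hw)).1.differentiableWithinAt)
    (fun w hw => (hball w (hsub z hz hw)).2.le)

-- Cauchy's estimate applied to `z ↦ f (z + (y - a)) - f z`, which is bounded by a multiple of
-- `‖y - a‖` near `a`, shows that the derivative is Lipschitz at `a`.
lemma continuousAt_fderiv_of_eventually_differentiableAt {a : E}
    (hf : ∀ᶠ z in 𝓝 a, DifferentiableAt ℂ f z) : ContinuousAt (fderiv ℂ f) a := by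
  obtain ⟨r, hr, C, hdiff, hlip⟩ := exists_lipschitzOnWith_ball_of_eventually_differentiableAt hf
  have hdiffAt : ∀ z ∈ ball a r, DifferentiableAt ℂ f z := fun z hz =>
    hdiff.differentiableAt (isOpen_ball.mem_nhds hz)
  have hr2 : r / 2 ≤ r := half_le_self hr.le
  refine continuousAt_of_locally_lipschitz (half_pos hr) (2 * C / (r / 2)) fun y hy => ?_
  have hmem : ∀ z ∈ ball a (r / 2), z + (y - a) ∈ ball a r := fun z hz => by
    rw [mem_ball_iff_norm] at hz ⊢
    calc ‖z + (y - a) - a‖ = ‖(z - a) + (y - a)‖ := by congr 1; abel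
      _ ≤ ‖z - a‖ + ‖y - a‖ := norm_add_le _ _
      _ < r := by rw [dist_eq_norm] at hy; linarith
  have htranslate : ∀ z ∈ ball a (r / 2),
      HasFDerivAt (fun z => f (z + (y - a)) - f z)
        (fderiv ℂ f (z + (y - a)) - fderiv ℂ f z) z := fun z hz =>
    ((hasFDerivAt_comp_add_right _).2 (hdiffAt _ (hmem z hz)).hasFDerivAt).sub
      (hdiffAt z (ball_subset_ball hr2 hz)).hasFDerivAt
  have hderiv : fderiv ℂ (fun z => f (z + (y - a)) - f z) a = fderiv ℂ f y - fderiv ℂ f a := by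
    rw [(htranslate a (mem_ball_self (half_pos hr))).fderiv, add_sub_cancel]
  calc dist (fderiv ℂ f y) (fderiv ℂ f a)
      = ‖fderiv ℂ (fun z => f (z + (y - a)) - f z) a‖ := by rw [hderiv, dist_eq_norm]
    _ ≤ 2 * (C * dist y a) / (r / 2) := by
      refine norm_fderiv_le_of_forall_ball_norm_le (half_pos hr)
        (fun z hz => (htranslate z hz).differentiableAt.differentiableWithinAt) fun z hz => ?_
      have := hlip.dist_le_mul _ (hmem z hz) _ (ball_subset_ball hr2 hz)
      rwa [dist_eq_norm, dist_eq_norm, add_sub_cancel_left, ← dist_eq_norm y] at this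
    _ = 2 * C / (r / 2) * dist y a := by ring

end Derivative

section SeveralVariables

variable {E F : Type*} [NormedAddCommGroup E] [NormedSpace ℂ E] [NormedAddCommGroup F]
  [NormedSpace ℂ F]

lemma differentiableAt_circleAverage_add_smul {k : E → F} {a v : E} {r : ℝ}
    (hk : ∀ s ∈ sphere (0 : ℂ) |r|, ∀ᶠ z in 𝓝 (a + s • v), DifferentiableAt ℂ k z) :
    DifferentiableAt ℂ (fun w => Real.circleAverage (fun s => k (w + s • v)) 0 r) a := by
  have hsphere : ∀ θ, circleMap 0 r θ ∈ sphere (0 : ℂ) |r| := circleMap_mem_sphere' 0 r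
  have hcircle : ∀ w, Continuous fun θ => w + circleMap 0 r θ • v := fun w => by fun_prop
  have hderiv : ∀ s ∈ sphere (0 : ℂ) |r|, ContinuousAt (fderiv ℂ k) (a + s • v) := fun s hs =>
    continuousAt_fderiv_of_eventually_differentiableAt (hk s hs)
  obtain ⟨C, hC⟩ : ∃ C, ∀ s ∈ sphere (0 : ℂ) |r|, ‖fderiv ℂ k (a + s • v)‖ ≤ C :=
    (isCompact_sphere 0 |r|).exists_bound_of_continuousOn fun s hs =>
      (ContinuousAt.comp (f := fun s => a + s • v) (hderiv s hs)
        (by fun_prop)).continuousWithinAt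
  have hnear : ∀ᶠ w in 𝓝 a, ∀ s ∈ sphere (0 : ℂ) |r|,
      DifferentiableAt ℂ k (w + s • v) ∧ ‖fderiv ℂ k (w + s • v)‖ < C + 1 :=
    eventually_forall_add_smul (isCompact_sphere 0 |r|) fun s hs =>
      (hk s hs).and ((hderiv s hs).norm.eventually_lt_const (by linarith [hC s hs]))
  have hcont : ∀ᶠ w in 𝓝 a, Continuous fun θ => k (w + circleMap 0 r θ • v) :=
    hnear.mono fun w hw => continuous_iff_continuousAt.2 fun θ =>
      ContinuousAt.comp (f := fun θ => w + circleMap 0 r θ • v)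
        (hw _ (hsphere θ)).1.continuousAt (hcircle w).continuousAt
  have hcont_fderiv : Continuous fun θ => fderiv ℂ k (a + circleMap 0 r θ • v) :=
    continuous_iff_continuousAt.2 fun θ =>
      ContinuousAt.comp (f := fun θ => a + circleMap 0 r θ • v)
        (hderiv _ (hsphere θ)) (hcircle a).continuousAt
  have hint := intervalIntegral.hasFDerivAt_integral_of_dominated_of_fderiv_le
    (μ := MeasureTheory.volume) (a := 0) (b := 2 * Real.pi)
    (F' := fun w θ => fderiv ℂ k (w + circleMap 0 r θ • v)) (bound := fun _ => C + 1) hnear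
    (hcont.mono fun w hw => hw.aestronglyMeasurable)
    (hcont.self_of_nhds.intervalIntegrable _ _) hcont_fderiv.aestronglyMeasurable
    (.of_forall fun θ _ w hw => (hw _ (hsphere θ)).2.le) intervalIntegrable_const
    (.of_forall fun θ _ w hw =>
      (hasFDerivAt_comp_add_right _).2 (hw _ (hsphere θ)).1.hasFDerivAt)
  exact hint.differentiableAt.const_smul (2 * Real.pi)⁻¹

variable [CompleteSpace F] {f : E → ℂ} {g : E → F} {U : Set E}

lemma smul_circleAverage_inv_smul_add_smul (hU : IsOpen U) (hf : DifferentiableOn ℂ f U)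
    (hg : DifferentiableOn ℂ g U) (hfg : ∀ z ∈ U, f z = 0 → g z = 0) {w v : E} {r : ℝ}
    (hf' : ∀ z ∈ U, f z = 0 → fderiv ℂ f z v ≠ 0)
    (hdisc : ∀ s ∈ closedBall (0 : ℂ) |r|, w + s • v ∈ U)
    (hsphere : ∀ s ∈ sphere (0 : ℂ) |r|, f (w + s • v) ≠ 0) :
    f w • Real.circleAverage (fun s => (f (w + s • v))⁻¹ • g (w + s • v)) 0 r = g w := by
  have hline : ∀ s : ℂ, HasDerivAt (fun s : ℂ => w + s • v) v s := fun s => by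
    simpa using ((hasDerivAt_id s).smul_const v).const_add w
  have hderiv : ∀ s : ℂ, w + s • v ∈ U →
      deriv (fun s : ℂ => f (w + s • v)) s = fderiv ℂ f (w + s • v) v := fun s hs =>
    ((hf.differentiableAt (hU.mem_nhds hs)).hasFDerivAt.comp_hasDerivAt s (hline s)).deriv
  have hdiff : Differentiable ℂ fun s : ℂ => w + s • v := fun s => (hline s).differentiableAt
  simpa only [zero_smul, add_zero] using
    smul_circleAverage_inv_smul (f := fun s => f (w + s • v)) (g := fun s => g (w + s • v))
      (hU.preimage hdiff.continuous) hdisc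
      (hf.comp hdiff.differentiableOn fun _ hs => hs)
      (hg.comp hdiff.differentiableOn fun _ hs => hs)
      (fun s hs hfs => by rw [hderiv s hs]; exact hf' _ hs hfs) (fun s hs => hfg _ hs) hsphere

lemma exists_eventually_differentiableAt_eq_smul_of_fderiv_apply_ne_zero {a v : E} (hU : IsOpen U)
    (haU : a ∈ U) (hf : DifferentiableOn ℂ f U) (hg : DifferentiableOn ℂ g U)
    (hf' : ∀ z ∈ U, f z = 0 → fderiv ℂ f z v ≠ 0) (hfg : ∀ z ∈ U, f z = 0 → g z = 0)
    (hfa : f a = 0) :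
    ∃ h : E → F, ∀ᶠ w in 𝓝 a, DifferentiableAt ℂ h w ∧ g w = f w • h w := by
  obtain ⟨r, hr, hdisc⟩ := exists_forall_closedBall_add_smul_mem_and_ne (hU.mem_nhds haU)
    (hf.differentiableAt (hU.mem_nhds haU)) (hf' a haU hfa)
  rw [← abs_of_pos hr, hfa] at hdisc
  have hball : ∀ᶠ w in 𝓝 a, ∀ s ∈ closedBall (0 : ℂ) |r|, w + s • v ∈ U :=
    eventually_forall_add_smul (isCompact_closedBall 0 |r|) fun s hs =>
      hU.eventually_mem (hdisc s hs).1
  have hopen : IsOpen (U ∩ f ⁻¹' {0}ᶜ) :=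
    hf.continuousOn.isOpen_inter_preimage hU isOpen_compl_singleton
  have hsphere : ∀ᶠ w in 𝓝 a, ∀ s ∈ sphere (0 : ℂ) |r|, w + s • v ∈ U ∩ f ⁻¹' {0}ᶜ :=
    eventually_forall_add_smul (isCompact_sphere 0 |r|) fun s hs =>
      have ⟨hsU, hfs⟩ := hdisc s (sphere_subset_closedBall hs)
      hopen.eventually_mem ⟨hsU, hfs (ne_of_mem_sphere hs (abs_pos.2 hr.ne').ne')⟩
  have hquot : DifferentiableOn ℂ (fun z => (f z)⁻¹ • g z) (U ∩ f ⁻¹' {0}ᶜ) :=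
    ((hf.mono inter_subset_left).fun_inv fun z hz => hz.2).smul (hg.mono inter_subset_left)
  refine ⟨fun w => Real.circleAverage (fun s => (f (w + s • v))⁻¹ • g (w + s • v)) 0 r, ?_⟩
  filter_upwards [hsphere, hball] with w hws hwb
  exact ⟨differentiableAt_circleAverage_add_smul (k := fun z => (f z)⁻¹ • g z) fun s hs =>
      hquot.eventually_differentiableAt (hopen.mem_nhds (hws s hs)),
    (smul_circleAverage_inv_smul_add_smul hU hf hg hfg hf' hwb fun s hs => (hws s hs).2).symm⟩

lemma exists_eventually_differentiableAt_eq_smul_of_fderiv_ne_zero {a : E} (hU : IsOpen U)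
    (haU : a ∈ U) (hf : DifferentiableOn ℂ f U) (hg : DifferentiableOn ℂ g U)
    (hfg : ∀ z ∈ U, f z = 0 → g z = 0) (hfa : f a = 0) (hf' : fderiv ℂ f a ≠ 0) :
    ∃ h : E → F, ∀ᶠ w in 𝓝 a, DifferentiableAt ℂ h w ∧ g w = f w • h w := by
  obtain ⟨v, hv⟩ := DFunLike.ne_iff.1 hf'
  have hcont : ContinuousAt (fun z => fderiv ℂ f z v) a :=
    (continuousAt_fderiv_of_eventually_differentiableAt
      (hf.eventually_differentiableAt (hU.mem_nhds haU))).clm_apply continuousAt_const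
  obtain ⟨V, hVprop, hV, haV⟩ :=
    _root_.eventually_nhds_iff.1 ((hU.eventually_mem haU).and (hcont.eventually_ne hv))
  have hVU : V ⊆ U := fun z hz => (hVprop z hz).1
  exact exists_eventually_differentiableAt_eq_smul_of_fderiv_apply_ne_zero hV haV (hf.mono hVU)
    (hg.mono hVU) (fun z hz _ => (hVprop z hz).2) (fun z hz => hfg z (hVU hz)) hfa

theorem stmt_0_general (hU : IsOpen U) (hf : DifferentiableOn ℂ f U) (hg : DifferentiableOn ℂ g U)
    (hf' : ∀ z ∈ U, f z = 0 → fderiv ℂ f z ≠ 0) (hfg : ∀ z ∈ U, f z = 0 → g z = 0) :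
    ∃ h : E → F, DifferentiableOn ℂ h U ∧ ∀ z ∈ U, g z = f z • h z :=
  exists_differentiableOn_eq_smul_of_local hU hf hg hf' fun a ha hfa =>
    exists_eventually_differentiableAt_eq_smul_of_fderiv_ne_zero hU ha hf hg hfg hfa (hf' a ha hfa)

end SeveralVariables

/-- If `g` is holomorphic on a domain `U ⊆ ℂ^d`, `f` is a nonzero
affine-linear function whose zeros in `U` are zeros of `g`, then `g / f` extends
holomorphically to `U`. -/
theorem stmt_0 (d : ℕ) (hd : 1 ≤ d)
    (U : Set (EuclideanSpace ℂ (Fin d)))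
    (hUopen : IsOpen U) (hUconn : IsConnected U)
    (g : EuclideanSpace ℂ (Fin d) → ℂ) (hg : DifferentiableOn ℂ g U)
    (f : EuclideanSpace ℂ (Fin d) → ℂ)
    (l : EuclideanSpace ℂ (Fin d) →ₗ[ℂ] ℂ) (c : ℂ)
    (hf : ∀ z, f z = l z + c)
    (hfne : ∃ z, f z ≠ 0)
    (hzg : ∀ z ∈ U, f z = 0 → g z = 0) :
    ∃ h : EuclideanSpace ℂ (Fin d) → ℂ,
      DifferentiableOn ℂ h U ∧ ∀ z ∈ U, g z = f z * h z := by
  have hfl : ∀ z, f z = l.toContinuousLinearMap z + c := hf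
  have hfdiff : Differentiable ℂ f := by rw [funext hfl]; fun_prop
  exact stmt_0_general hUopen hfdiff.differentiableOn hg
    (fun z _ hfz => fderiv_ne_zero_of_eq_add_const hfl hfne hfz) hzg
end

section
/- Let U, V be domains in ℂ^d and let φ : U → V be a holomorphic 2-proper map. Suppose σ₁, σ₂ : U → U are holomorphic involutions (σⱼ∘σⱼ = id on U) such that for j = 1, 2: σⱼ is not the identity map of U, φ(σⱼ(z)) = φ(z) for all z ∈ U, and the fixed-point set {z ∈ U : σⱼ(z) = z} equals the zero set Z(J_φ) = {z ∈ U : J_φ(z) = 0}. Then σ₁ = σ₂ on U. -/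
/-!
Both maps preserve the fibers of `φ`, which have at most two points. Since they have the same fixed
points, at any other point each of them must take the one remaining value in the fiber.
-/

section

variable {α β : Type*}

theorem eq_of_ne_of_ne_of_encard_le_two {s : Set α} (hs : s.encard ≤ 2) {x y z : α}
    (hx : x ∈ s) (hy : y ∈ s) (hz : z ∈ s) (hyx : y ≠ x) (hzx : z ≠ x) : y = z := by
  have hfin : s.Finite := Set.finite_of_encard_le_coe hs
  have hcard : s.ncard ≤ 2 := (Set.encard_le_coe_iff_finite_ncard_le.1 hs).2
  by_contra hyz
  exact hcard.not_gt
    ((Set.two_lt_ncard hfin).2 ⟨x, hx, y, hy, z, hz, hyx.symm, hzx.symm, hyz⟩)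

theorem encard_fiber_le_two {φ : α → β} {U Z : Set α} {V : Set β} (hmaps : Set.MapsTo φ U V)
    (hreg : ∀ v ∈ V \ φ '' Z, Nat.card {z ∈ U | φ z = v} = 2)
    (hcrit : ∀ v ∈ φ '' Z, Nat.card {z ∈ U | φ z = v} = 1) {z : α} (hz : z ∈ U) :
    {w ∈ U | φ w = φ z}.encard ≤ 2 := by
  have hcard : {w ∈ U | φ w = φ z}.ncard = 1 ∨ {w ∈ U | φ w = φ z}.ncard = 2 :=
    (em (φ z ∈ φ '' Z)).imp (hcrit _) fun hv ↦ hreg _ ⟨hmaps hz, hv⟩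
  have hfin : {w ∈ U | φ w = φ z}.Finite := Set.finite_of_ncard_ne_zero (by lia)
  exact Set.encard_le_coe_iff_finite_ncard_le.2 ⟨hfin, by lia⟩

theorem stmt_1_general {φ : α → β} {U : Set α} {σ₁ σ₂ : α → α}
    (hfib : ∀ z ∈ U, {w ∈ U | φ w = φ z}.encard ≤ 2)
    (hσ₁maps : Set.MapsTo σ₁ U U) (hσ₂maps : Set.MapsTo σ₂ U U)
    (hσ₁φ : ∀ z ∈ U, φ (σ₁ z) = φ z) (hσ₂φ : ∀ z ∈ U, φ (σ₂ z) = φ z)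
    (hfix : {z ∈ U | σ₁ z = z} = {z ∈ U | σ₂ z = z}) :
    Set.EqOn σ₁ σ₂ U := by
  intro z hz
  have hfixz : σ₁ z = z ↔ σ₂ z = z := by simpa [hz] using Set.ext_iff.1 hfix z
  by_cases h₁ : σ₁ z = z
  · rw [h₁, hfixz.1 h₁]
  · exact eq_of_ne_of_ne_of_encard_le_two (hfib z hz) ⟨hz, rfl⟩ ⟨hσ₁maps hz, hσ₁φ z hz⟩
      ⟨hσ₂maps hz, hσ₂φ z hz⟩ h₁ (mt hfixz.2 h₁)

end

/-- Uniqueness of the holomorphic involution associated with a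
holomorphic 2-proper map `φ : U → V`. -/
theorem stmt_1 (d : ℕ) (hd : 1 ≤ d)
    (U V : Set (EuclideanSpace ℂ (Fin d)))
    (hUopen : IsOpen U) (hUconn : IsConnected U)
    (hVopen : IsOpen V) (hVconn : IsConnected V)
    (φ : EuclideanSpace ℂ (Fin d) → EuclideanSpace ℂ (Fin d))
    (hφholo : DifferentiableOn ℂ φ U)
    (hφmaps : Set.MapsTo φ U V)
    (hφsurj : φ '' U = V)
    (hφproper : ∀ K : Set (EuclideanSpace ℂ (Fin d)), K ⊆ V → IsCompact K →
      IsCompact {z ∈ U | φ z ∈ K})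
    (hfib2 : ∀ v ∈ V \ (φ '' {z ∈ U | (fderiv ℂ φ z).det = 0}),
      Nat.card {z ∈ U | φ z = v} = 2)
    (hfib1 : ∀ v ∈ φ '' {z ∈ U | (fderiv ℂ φ z).det = 0},
      Nat.card {z ∈ U | φ z = v} = 1)
    (σ₁ σ₂ : EuclideanSpace ℂ (Fin d) → EuclideanSpace ℂ (Fin d))
    (hσ₁maps : Set.MapsTo σ₁ U U) (hσ₂maps : Set.MapsTo σ₂ U U)
    (hσ₁holo : DifferentiableOn ℂ σ₁ U) (hσ₂holo : DifferentiableOn ℂ σ₂ U)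
    (hσ₁inv : ∀ z ∈ U, σ₁ (σ₁ z) = z) (hσ₂inv : ∀ z ∈ U, σ₂ (σ₂ z) = z)
    (hσ₁ne : ¬ (∀ z ∈ U, σ₁ z = z)) (hσ₂ne : ¬ (∀ z ∈ U, σ₂ z = z))
    (hσ₁φ : ∀ z ∈ U, φ (σ₁ z) = φ z) (hσ₂φ : ∀ z ∈ U, φ (σ₂ z) = φ z)
    (hσ₁fix : {z ∈ U | σ₁ z = z} = {z ∈ U | (fderiv ℂ φ z).det = 0})
    (hσ₂fix : {z ∈ U | σ₂ z = z} = {z ∈ U | (fderiv ℂ φ z).det = 0}) :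
    Set.EqOn σ₁ σ₂ U :=
  stmt_1_general (fun _ ↦ encard_fiber_le_two hφmaps hfib2 hfib1) hσ₁maps hσ₂maps hσ₁φ hσ₂φ
    (hσ₁fix.trans hσ₂fix.symm)
end

section
/- Let U, V be domains in ℂ^d and let φ : U → V be an admissible proper holomorphic map: φ is proper, holomorphic on U, surjective onto V, and the fiber {x ∈ U : φ(x) = v} is a singleton for every v ∈ φ(Z(J_φ)). Let h be holomorphic on U and constant on the fibers of φ (i.e. for all x, y ∈ U, φ(x) = φ(y) implies h(x) = h(y)). Then there exists a function f holomorphic on V such that h(z) = f(φ(z)) for all z ∈ U. -/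
/-!
Since `h` is constant on the fibers, `h = f ∘ φ` for a unique `f`, which is continuous because a
proper surjection is a quotient map, and holomorphic wherever it can be computed through a local
holomorphic section of `φ`, that is, at the images of regular points.

By Sard's lemma and Fubini's theorem these images are dense in almost every complex line parallel
to a given one. Let `F` be continuous on a closed disc of such a line and holomorphic at the images
of regular points. On the compact preimage of the disc the functions `F ^ n * J_φ` vanish at the
critical points, hence obey the maximum principle, and letting `n → ∞` bounds `|F|` by its maximum
on the boundary circle. Applying this to `exp (±(f - P))` with `P` entire, as in Radó's theorem,
identifies `re f` on the disc with its Poisson integral. Hence `f` is smooth there, and the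
Cauchy-Riemann equations extend from a dense subset. By continuity `f` is then holomorphic on every
complex line, and Osgood's lemma gives the claim.
-/

open Metric Set Filter Topology

section Topology

lemma continuousOn_of_comp_of_isCompact_preimage {X Y Z : Type*} [TopologicalSpace X]
    [TopologicalSpace Y] [TopologicalSpace Z] [T2Space Y] {U : Set X} {V : Set Y}
    [WeaklyLocallyCompactSpace V] {φ : X → Y} (hφ : ContinuousOn φ U) (himage : φ '' U = V)
    (hproper : ∀ K ⊆ V, IsCompact K → IsCompact {x ∈ U | φ x ∈ K}) {f : Y → Z}
    (hf : ContinuousOn (f ∘ φ) U) : ContinuousOn f V := by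
  have hmaps : MapsTo φ U V := mapsTo_iff_image_subset.2 himage.subset
  have hcont : Continuous (hmaps.restrict φ U V) := hφ.mapsToRestrict hmaps
  have hprop : IsProperMap (hmaps.restrict φ U V) := by
    refine isProperMap_iff_isCompact_preimage.2 ⟨hcont, fun K hK => ?_⟩
    rw [Subtype.isCompact_iff] at hK ⊢
    convert hproper (Subtype.val '' K) (Subtype.coe_image_subset V K) hK using 1
    ext x
    constructor
    · rintro ⟨y, hy, rfl⟩
      exact ⟨y.2, _, hy, rfl⟩
    · rintro ⟨hx, y, hy, hyx⟩
      have hyx' : y = hmaps.restrict φ U V ⟨x, hx⟩ := Subtype.ext hyx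
      exact ⟨⟨x, hx⟩, mem_preimage.2 (hyx' ▸ hy), rfl⟩
  have hsurj : Function.Surjective (hmaps.restrict φ U V) :=
    hmaps.restrict_surjective_iff.2 himage.superset
  rw [continuousOn_iff_continuous_domRestrict,
    (hprop.isClosedMap.isQuotientMap hcont hsurj).continuous_iff]
  exact continuousOn_iff_continuous_domRestrict.1 hf

lemma isCompact_setOf_eq_comp {A X Y : Type*} [TopologicalSpace A] [TopologicalSpace X]
    [TopologicalSpace Y] [T2Space Y] {S : Set A} {U : Set X} {φ : X → Y} {γ : A → Y}
    (hS : IsCompact S) (hφ : ContinuousOn φ U) (hγ : ContinuousOn γ S)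
    (hpre : IsCompact {x ∈ U | φ x ∈ γ '' S}) :
    IsCompact {p : A × X | p.1 ∈ S ∧ p.2 ∈ U ∧ φ p.2 = γ p.1} := by
  have hpair : ContinuousOn (fun p : A × X => (φ p.2, γ p.1)) (S ×ˢ {x ∈ U | φ x ∈ γ '' S}) :=
    (hφ.comp continuousOn_snd fun p hp => hp.2.1).prodMk
      (hγ.comp continuousOn_fst fun p hp => hp.1)
  obtain ⟨Z, hZ, heq⟩ := continuousOn_iff_isClosed.1 hpair (diagonal Y) isClosed_diagonal
  convert (hS.prod hpre).inter_left hZ using 1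
  rw [← heq]
  ext ⟨t, x⟩
  exact ⟨fun ⟨ht, hx, hxt⟩ => ⟨hxt, ht, hx, t, ht, hxt.symm⟩,
    fun ⟨hxt, ht, hx, _⟩ => ⟨ht, hx, hxt⟩⟩

end Topology

section SeveralVariables

variable {E F : Type*} [NormedAddCommGroup E] [NormedSpace ℂ E]
  [NormedAddCommGroup F] [NormedSpace ℂ F]

/-- The Schwarz lemma applied to `t ↦ g t - t • g' 0`, whose increment vanishes to second order. -/
lemma norm_sub_sub_smul_deriv_le {g : ℂ → F} {R M : ℝ}
    (hg : DifferentiableOn ℂ g (ball 0 R)) (hM : ∀ t ∈ ball (0 : ℂ) R, ‖g t‖ ≤ M)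
    {t : ℂ} (ht : t ∈ ball (0 : ℂ) R) :
    ‖g t - g 0 - t • deriv g 0‖ ≤ 4 * M * (‖t‖ / R) ^ 2 := by
  have hR : 0 < R := pos_of_mem_ball ht
  have h0 : (0 : ℂ) ∈ ball (0 : ℂ) R := mem_ball_self hR
  have hosc : ∀ s ∈ ball (0 : ℂ) R, ‖g s - g 0‖ ≤ 2 * M := fun s hs => by
    linarith [norm_sub_le (g s) (g 0), hM s hs, hM 0 h0]
  have hderiv : ‖deriv g 0‖ ≤ 2 * M / R :=
    Complex.norm_deriv_le_div_of_mapsTo_ball hg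
      (fun s hs => mem_closedBall_iff_norm.2 (hosc s hs)) hR
  have hlin : ∀ s ∈ ball (0 : ℂ) R, ‖s • deriv g 0‖ ≤ 2 * M := fun s hs => by
    have hs' : ‖s‖ ≤ R := (mem_ball_zero_iff.1 hs).le
    calc ‖s • deriv g 0‖ = ‖s‖ * ‖deriv g 0‖ := norm_smul _ _
      _ ≤ R * (2 * M / R) := by gcongr
      _ = 2 * M := by field_simp
  have hrem : ∀ s, g s - s • deriv g 0 - (g 0 - (0 : ℂ) • deriv g 0)
      = g s - g 0 - s • deriv g 0 := fun s => by simp only [zero_smul, sub_zero, sub_right_comm]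
  have hmaps : MapsTo (fun s => g s - s • deriv g 0) (ball 0 R)
      (closedBall (g 0 - (0 : ℂ) • deriv g 0) (4 * M)) := fun s hs => by
    rw [mem_closedBall_iff_norm, hrem]
    linarith [norm_sub_le (g s - g 0) (s • deriv g 0), hosc s hs, hlin s hs]
  have hlittle : (fun s => g s - s • deriv g 0 - (g 0 - (0 : ℂ) • deriv g 0))
      =o[𝓝 0] fun s : ℂ => ‖s - 0‖ ^ 1 := by
    simp only [hrem, pow_one, Asymptotics.isLittleO_norm_right]
    simpa only [sub_zero] using (hg.differentiableAt (isOpen_ball.mem_nhds h0)).hasDerivAt.isLittleO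
  have hschwarz := Complex.dist_le_mul_div_pow_of_mapsTo_ball_of_isLittleO
    (f := fun s => g s - s • deriv g 0) (by fun_prop) hmaps hlittle ht
  rwa [dist_eq_norm, hrem, dist_zero_right] at hschwarz

lemma norm_sub_sub_lineDeriv_le {f : E → F} {z w : E} {r M : ℝ}
    (hl : ∀ y ∈ ball z r, LineDifferentiableAt ℂ f y w) (hM : ∀ y ∈ ball z r, ‖f y‖ ≤ M)
    (hw : ‖w‖ < r) :
    ‖f (z + w) - f z - lineDeriv ℂ f z w‖ ≤ 4 * M * (‖w‖ / r) ^ 2 := by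
  rcases eq_or_ne w 0 with rfl | hw0
  · simp [lineDeriv_zero]
  have hwpos : 0 < ‖w‖ := norm_pos_iff.2 hw0
  have hmem : ∀ t ∈ ball (0 : ℂ) (r / ‖w‖), z + t • w ∈ ball z r := fun t ht => by
    rw [mem_ball_iff_norm, add_sub_cancel_left, norm_smul]
    exact (lt_div_iff₀ hwpos).1 (mem_ball_zero_iff.1 ht)
  have hg : DifferentiableOn ℂ (fun t : ℂ => f (z + t • w)) (ball 0 (r / ‖w‖)) := fun t ht => by
    have hline : DifferentiableAt ℂ (fun s : ℂ => f (z + t • w + s • w)) (t - t) := by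
      simpa only [sub_self, LineDifferentiableAt] using hl _ (hmem t ht)
    refine DifferentiableAt.differentiableWithinAt ?_
    simpa [Function.comp_def, sub_smul, add_assoc] using
      hline.comp (f := fun s : ℂ => s - t) t (by fun_prop)
  have htaylor := norm_sub_sub_smul_deriv_le hg (fun t ht => hM _ (hmem t ht))
    (t := 1) (by simpa using (one_lt_div hwpos).2 hw)
  simpa [lineDeriv, div_div_eq_mul_div] using htaylor

variable {W : Set E} {f : E → F}

lemma isBigO_sub_sub_lineDeriv (hW : IsOpen W) (hf : ContinuousOn f W)
    (hl : ∀ z ∈ W, ∀ w, LineDifferentiableAt ℂ f z w) {z₀ : E} (hz₀ : z₀ ∈ W) :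
    (fun p : E × E => f (p.1 + p.2) - f p.1 - lineDeriv ℂ f p.1 p.2)
      =O[𝓝 (z₀, 0)] fun p => ‖p.2‖ ^ 2 := by
  have hbdd : ∀ᶠ z in 𝓝 z₀, z ∈ W ∧ ‖f z‖ < ‖f z₀‖ + 1 :=
    (hW.eventually_mem hz₀).and ((hf.continuousAt (hW.mem_nhds hz₀)).norm.eventually_lt
      continuousAt_const (by simp))
  obtain ⟨ε, hε, hball⟩ := Metric.eventually_nhds_iff_ball.1 hbdd
  refine Asymptotics.IsBigO.of_bound (4 * (‖f z₀‖ + 1) * (1 / (ε / 2)) ^ 2) ?_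
  filter_upwards [prod_mem_nhds (ball_mem_nhds z₀ (half_pos hε))
    (ball_mem_nhds (0 : E) (half_pos hε))] with ⟨z, w⟩ ⟨hz, hw⟩
  have hsub : ball z (ε / 2) ⊆ ball z₀ ε := ball_subset_ball' (by linarith [mem_ball.1 hz])
  refine (norm_sub_sub_lineDeriv_le (fun y hy => hl y (hball y (hsub hy)).1 w)
    (fun y hy => (hball y (hsub hy)).2.le) (mem_ball_zero_iff.1 hw)).trans_eq ?_
  simp only [norm_pow, norm_norm]
  ring

lemma tendstoLocallyUniformlyOn_lineDeriv (hW : IsOpen W) (hf : ContinuousOn f W)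
    (hl : ∀ z ∈ W, ∀ w, LineDifferentiableAt ℂ f z w) (w : E) :
    TendstoLocallyUniformlyOn (fun (t : ℂ) z => t⁻¹ • (f (z + t • w) - f z))
      (fun z => lineDeriv ℂ f z w) (𝓝[≠] 0) W := by
  rw [tendstoLocallyUniformlyOn_iff_filter]
  intro z₀ hz₀
  have hpair : Tendsto (fun p : ℂ × E => (p.2, p.1 • w)) (𝓝[≠] 0 ×ˢ 𝓝[W] z₀) (𝓝 (z₀, 0)) := by
    have hc : Continuous fun p : ℂ × E => (p.2, p.1 • w) := by fun_prop
    refine (hc.tendsto' (0, z₀) (z₀, 0) (by simp)).mono_left ?_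
    rw [nhds_prod_eq]
    exact prod_mono nhdsWithin_le_nhds nhdsWithin_le_nhds
  have hne : ∀ᶠ p : ℂ × E in 𝓝[≠] 0 ×ˢ 𝓝[W] z₀, p.1 ≠ 0 :=
    tendsto_fst.eventually self_mem_nhdsWithin
  obtain ⟨C, hC⟩ := ((isBigO_sub_sub_lineDeriv hW hf hl hz₀).comp_tendsto hpair).bound
  have hsmall : Tendsto (fun p : ℂ × E => C * ‖w‖ ^ 2 * ‖p.1‖) (𝓝[≠] 0 ×ˢ 𝓝[W] z₀) (𝓝 0) := by
    have hc : Continuous fun t : ℂ => C * ‖w‖ ^ 2 * ‖t‖ := by fun_prop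
    exact ((hc.tendsto' 0 0 (by simp)).mono_left nhdsWithin_le_nhds).comp tendsto_fst
  rw [Metric.tendstoUniformlyOnFilter_iff]
  intro ε hε
  filter_upwards [hC, hne, hsmall.eventually_lt_const hε] with ⟨t, z⟩ hbound ht hlt
  have hrem : t⁻¹ • (f (z + t • w) - f z) - lineDeriv ℂ f z w
      = t⁻¹ • (f (z + t • w) - f z - lineDeriv ℂ f z (t • w)) := by
    rw [lineDeriv_smul, smul_sub _ (f (z + t • w) - f z), inv_smul_smul₀ ht]
  have htpos : 0 < ‖t‖ := norm_pos_iff.2 ht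
  rw [dist_comm, dist_eq_norm, hrem, norm_smul, norm_inv]
  refine lt_of_le_of_lt ((inv_mul_le_iff₀ htpos).2 (hbound.trans_eq ?_)) hlt
  simp only [Function.comp_apply, norm_pow, norm_smul, norm_mul, norm_norm]
  ring

lemma exists_isOpen_forall_add_smul_mem (hW : IsOpen W) {z₀ : E} (hz₀ : z₀ ∈ W) (w : E) :
    ∃ O ⊆ W, IsOpen O ∧ z₀ ∈ O ∧ ∀ᶠ t : ℂ in 𝓝 0, ∀ z ∈ O, z + t • w ∈ W := by
  have hc : Continuous fun p : E × ℂ => p.1 + p.2 • w := by fun_prop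
  have hmem : ∀ᶠ p in 𝓝 z₀ ×ˢ 𝓝 (0 : ℂ), p.1 + p.2 • w ∈ W := by
    rw [← nhds_prod_eq]
    exact (hc.tendsto' (z₀, 0) z₀ (by simp)).eventually (hW.mem_nhds hz₀)
  obtain ⟨p, hp, q, hq, hpq⟩ := eventually_prod_iff.1 hmem
  obtain ⟨O, hOp, hO, hzO⟩ := _root_.mem_nhds_iff.1 (hp.and (hW.mem_nhds hz₀))
  exact ⟨O, fun z hz => (hOp hz).2, hO, hzO, hq.mono fun t ht z hz => hpq (hOp hz).1 ht⟩

lemma lineDifferentiableAt_of_dense [CompleteSpace F] (hW : IsOpen W) (hf : ContinuousOn f W)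
    {D : Set E} {w : E} (hD : Dense D)
    (hslice : ∀ v ∈ D, ∀ R, (∀ t ∈ closedBall (0 : ℂ) R, v + t • w ∈ W) →
      DifferentiableOn ℂ (fun t : ℂ => f (v + t • w)) (ball 0 R)) {z : E} (hz : z ∈ W) :
    LineDifferentiableAt ℂ f z w := by
  obtain ⟨O, -, hO, hzO, hmem⟩ := exists_isOpen_forall_add_smul_mem hW hz w
  obtain ⟨R, hR, hRmem⟩ := nhds_basis_closedBall.eventually_iff.1 hmem
  have : (𝓝[D] z).NeBot := mem_closure_iff_nhdsWithin_neBot.1 (hD z)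
  have hlim : TendstoLocallyUniformlyOn (fun (v : E) (t : ℂ) => f (v + t • w))
      (fun t => f (z + t • w)) (𝓝[D] z) (ball 0 R) := by
    rw [tendstoLocallyUniformlyOn_iff_forall_tendsto]
    intro t ht
    have hft : ContinuousAt f (z + t • w) :=
      hf.continuousAt (hW.mem_nhds (hRmem (ball_subset_closedBall ht) z hzO))
    have hpair : ContinuousAt (fun p : E × ℂ => (f (z + p.2 • w), f (p.1 + p.2 • w))) (z, t) :=
      (ContinuousAt.comp (f := fun p : E × ℂ => z + p.2 • w) hft (by fun_prop)).prodMk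
        (ContinuousAt.comp (f := fun p : E × ℂ => p.1 + p.2 • w) hft (by fun_prop))
    have hle : 𝓝[D] z ×ˢ 𝓝[ball (0 : ℂ) R] t ≤ 𝓝 (z, t) := by
      rw [nhds_prod_eq]
      exact prod_mono nhdsWithin_le_nhds nhdsWithin_le_nhds
    exact (hpair.tendsto.mono_left hle).mono_right (nhds_le_uniformity _)
  have hdiff : ∀ᶠ v in 𝓝[D] z, DifferentiableOn ℂ (fun t : ℂ => f (v + t • w)) (ball 0 R) := by
    filter_upwards [self_mem_nhdsWithin, nhdsWithin_le_nhds (hO.mem_nhds hzO)] with v hvD hvO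
    exact hslice v hvD R fun t ht => hRmem ht v hvO
  exact (hlim.differentiableOn hdiff isOpen_ball).differentiableAt (ball_mem_nhds 0 hR)

lemma continuousOn_lineDeriv (hW : IsOpen W) (hf : ContinuousOn f W)
    (hl : ∀ z ∈ W, ∀ w, LineDifferentiableAt ℂ f z w) (w : E) :
    ContinuousOn (fun z => lineDeriv ℂ f z w) W := by
  intro z₀ hz₀
  obtain ⟨O, hOW, hO, hzO, hmem⟩ := exists_isOpen_forall_add_smul_mem hW hz₀ w
  have hquot : ∀ᶠ t : ℂ in 𝓝[≠] 0, ContinuousOn (fun z => t⁻¹ • (f (z + t • w) - f z)) O :=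
    (hmem.filter_mono nhdsWithin_le_nhds).mono fun t ht =>
      ((hf.comp (by fun_prop) ht).sub (hf.mono hOW)).const_smul _
  have hcont := ((tendstoLocallyUniformlyOn_lineDeriv hW hf hl w).mono hOW).continuousOn
    hquot.frequently
  exact (hcont.continuousAt (hO.mem_nhds hzO)).continuousWithinAt

/-- Moving first along `u` and then along `v` computes the derivative along `u + v`, because the
quotients in the direction `v` converge uniformly. -/
lemma lineDeriv_add_of_continuousOn (hW : IsOpen W) (hf : ContinuousOn f W)
    (hl : ∀ z ∈ W, ∀ w, LineDifferentiableAt ℂ f z w) {z : E} (hz : z ∈ W) (u v : E) :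
    lineDeriv ℂ f z (u + v) = lineDeriv ℂ f z u + lineDeriv ℂ f z v := by
  have hslope : ∀ w, Tendsto (fun t : ℂ => t⁻¹ • (f (z + t • w) - f z)) (𝓝[≠] 0)
      (𝓝 (lineDeriv ℂ f z w)) := fun w =>
    (hl z hz w).hasLineDerivAt.tendsto_slope_zero
  have hmove : Tendsto (fun t : ℂ => z + t • u) (𝓝[≠] 0) (𝓝 z) := by
    have hc : Continuous fun t : ℂ => z + t • u := by fun_prop
    exact (hc.tendsto' 0 z (by simp)).mono_left nhdsWithin_le_nhds
  have hmoved : Tendsto (fun t : ℂ => t⁻¹ • (f (z + t • u + t • v) - f (z + t • u))) (𝓝[≠] 0)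
      (𝓝 (lineDeriv ℂ f z v)) :=
    (tendstoLocallyUniformlyOn_lineDeriv hW hf hl v).tendsto_comp
      (continuousOn_lineDeriv hW hf hl v z hz) hz
      (tendsto_nhdsWithin_iff.2 ⟨hmove, hmove.eventually (hW.mem_nhds hz)⟩)
  refine tendsto_nhds_unique (hslope (u + v)) (((hslope u).add hmoved).congr fun t => ?_)
  rw [← smul_add, smul_add t u v, ← add_assoc]
  abel_nf

/-- **Osgood's lemma**. -/
lemma differentiableOn_of_lineDifferentiableAt [FiniteDimensional ℂ E] (hW : IsOpen W)
    (hf : ContinuousOn f W) (hl : ∀ z ∈ W, ∀ w, LineDifferentiableAt ℂ f z w) :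
    DifferentiableOn ℂ f W := by
  intro z hz
  let A : E →L[ℂ] F := LinearMap.toContinuousLinearMap
    { toFun := fun w => lineDeriv ℂ f z w
      map_add' := lineDeriv_add_of_continuousOn hW hf hl hz
      map_smul' := fun _ _ => lineDeriv_smul }
  have hO : (fun w => f (z + w) - f z - A w) =O[𝓝 0] fun w : E => ‖w‖ ^ 2 :=
    (isBigO_sub_sub_lineDeriv hW hf hl hz).comp_tendsto (k := fun w : E => (z, w))
      ((by fun_prop : Continuous fun w : E => (z, w)).tendsto' 0 (z, 0) rfl)
  have hA : HasFDerivAt f A z := by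
    rw [hasFDerivAt_iff_isLittleO_nhds_zero]
    refine hO.trans_isLittleO ?_
    simpa using Asymptotics.isLittleO_norm_pow_id (E' := E) one_lt_two
  exact hA.differentiableAt.differentiableWithinAt

lemma differentiableOn_fderiv_apply [FiniteDimensional ℂ E] [CompleteSpace F] (hW : IsOpen W)
    (hf : DifferentiableOn ℂ f W) (w : E) : DifferentiableOn ℂ (fun z => fderiv ℂ f z w) W := by
  have hda : ∀ z ∈ W, DifferentiableAt ℂ f z := fun z hz => hf.differentiableAt (hW.mem_nhds hz)
  have hl : ∀ z ∈ W, ∀ w, LineDifferentiableAt ℂ f z w :=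
    fun z hz w => (hda z hz).lineDifferentiableAt
  suffices hline : ∀ z ∈ W, ∀ v, LineDifferentiableAt ℂ (fun y => lineDeriv ℂ f y w) z v from
    (differentiableOn_of_lineDifferentiableAt hW (continuousOn_lineDeriv hW hf.continuousOn hl w)
      hline).congr fun z hz => (hda z hz).lineDeriv_eq_fderiv.symm
  intro z hz v
  obtain ⟨O, hOW, hO, hzO, hmem⟩ := exists_isOpen_forall_add_smul_mem hW hz w
  have hmove : Continuous fun t : ℂ => z + t • v := by fun_prop
  have hlim := ((tendstoLocallyUniformlyOn_lineDeriv hW hf.continuousOn hl w).mono hOW).comp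
    (fun t : ℂ => z + t • v) (mapsTo_preimage _ O) hmove.continuousOn
  have hquot : ∀ᶠ s : ℂ in 𝓝[≠] 0, DifferentiableOn ℂ
      ((fun y => s⁻¹ • (f (y + s • w) - f y)) ∘ fun t : ℂ => z + t • v)
      ((fun t : ℂ => z + t • v) ⁻¹' O) := by
    filter_upwards [hmem.filter_mono nhdsWithin_le_nhds] with s hs
    have hshift : DifferentiableOn ℂ (fun y => f (y + s • w)) O := hf.comp (by fun_prop) hs
    exact ((hshift.sub (hf.mono hOW)).const_smul s⁻¹).comp (by fun_prop) (mapsTo_preimage _ O)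
  exact (hlim.differentiableOn hquot (hO.preimage hmove)).differentiableAt
    ((hO.preimage hmove).mem_nhds (by simpa using hzO))

lemma contDiffOn_natCast_of_differentiableOn [FiniteDimensional ℂ E] [CompleteSpace F]
    (hW : IsOpen W) (hf : DifferentiableOn ℂ f W) (n : ℕ) : ContDiffOn ℂ n f W := by
  have : CompleteSpace E := FiniteDimensional.complete ℂ E
  induction n generalizing f with
  | zero => exact contDiffOn_zero.2 hf.continuousOn
  | succ n ih =>
    rw [Nat.cast_succ, contDiffOn_succ_iff_fderiv_of_isOpen hW, contDiffOn_clm_apply]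
    exact ⟨hf, by simp, fun w => ih (differentiableOn_fderiv_apply hW hf w)⟩

end SeveralVariables

section RegularPoints

lemma contDiff_clm_det {𝕜 E : Type*} [NontriviallyNormedField 𝕜] [CompleteSpace 𝕜]
    [NormedAddCommGroup E] [NormedSpace 𝕜 E] [FiniteDimensional 𝕜 E] {n : WithTop ℕ∞} :
    ContDiff 𝕜 n fun A : E →L[𝕜] E => A.det := by
  let b := Module.finBasis 𝕜 E
  have hdet : ∀ A : E →L[𝕜] E, A.det = (LinearMap.toMatrix b b A).det := fun A =>
    (LinearMap.det_toMatrix b A.toLinearMap).symm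
  have hentry : ∀ i j, ContDiff 𝕜 n fun A : E →L[𝕜] E => LinearMap.toMatrix b b A i j := by
    intro i j
    simp only [LinearMap.toMatrix_apply]
    exact (LinearMap.toContinuousLinearMap (b.coord i)).contDiff.comp
      (contDiff_id.clm_apply contDiff_const)
  simp only [hdet, Matrix.det_apply']
  exact ContDiff.sum fun σ _ => contDiff_const.mul (contDiff_prod fun i _ => hentry (σ i) i)

variable {E : Type*} [NormedAddCommGroup E] [NormedSpace ℂ E] {U : Set E} {φ : E → E}

/-- The complement in `U` of the zero set of the Jacobian determinant `J_φ`. -/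
def regularPoints (φ : E → E) (U : Set E) : Set E := {z ∈ U | (fderiv ℂ φ z).det ≠ 0}

variable [FiniteDimensional ℂ E]

lemma differentiableOn_det_fderiv (hU : IsOpen U) (hφ : DifferentiableOn ℂ φ U) :
    DifferentiableOn ℂ (fun z => (fderiv ℂ φ z).det) U := by
  have : CompleteSpace E := FiniteDimensional.complete ℂ E
  have hderiv : ContDiffOn ℂ 1 (fderiv ℂ φ) U :=
    (contDiffOn_natCast_of_differentiableOn hU hφ 2).fderiv_of_isOpen hU (by norm_num)
  exact contDiff_clm_det.differentiable one_ne_zero |>.comp_differentiableOn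
    (hderiv.differentiableOn one_ne_zero)

lemma isOpen_regularPoints (hU : IsOpen U) (hφ : DifferentiableOn ℂ φ U) :
    IsOpen (regularPoints φ U) :=
  (differentiableOn_det_fderiv hU hφ).continuousOn.isOpen_inter_preimage hU isOpen_ne

lemma exists_local_section (hU : IsOpen U) (hφ : DifferentiableOn ℂ φ U) {x : E}
    (hx : x ∈ regularPoints φ U) :
    ∃ ψ : E → E, ψ (φ x) = x ∧
      ∀ᶠ y in 𝓝 (φ x), ψ y ∈ regularPoints φ U ∧ φ (ψ y) = y ∧ DifferentiableAt ℂ ψ y := by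
  have : CompleteSpace E := FiniteDimensional.complete ℂ E
  have hcd : ContDiffAt ℂ 1 φ x := by
    simpa using (contDiffOn_natCast_of_differentiableOn hU hφ 1).contDiffAt (hU.mem_nhds hx.1)
  have hderiv : HasFDerivAt φ ((fderiv ℂ φ x).toContinuousLinearEquivOfDetNeZero hx.2 : E →L[ℂ] E)
      x := by
    simpa using (hφ.differentiableAt (hU.mem_nhds hx.1)).hasFDerivAt
  have hself := hcd.localInverse_apply_image hderiv one_ne_zero
  have hinv := hcd.to_localInverse hderiv one_ne_zero
  refine ⟨hcd.localInverse hderiv one_ne_zero, hself, ?_⟩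
  filter_upwards [hinv.continuousAt.eventually_mem
      (by rw [hself]; exact (isOpen_regularPoints hU hφ).mem_nhds hx),
    (hcd.hasStrictFDerivAt' hderiv one_ne_zero).eventually_right_inverse,
    hinv.eventually (by simp)] with y hmem hright hdiff
  exact ⟨hmem, hright, hdiff.differentiableAt one_ne_zero⟩

lemma isOpen_image_regularPoints (hU : IsOpen U) (hφ : DifferentiableOn ℂ φ U) :
    IsOpen (φ '' regularPoints φ U) := by
  rw [isOpen_iff_mem_nhds]
  rintro _ ⟨x, hx, rfl⟩
  obtain ⟨ψ, -, hψ⟩ := exists_local_section hU hφ hx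
  filter_upwards [hψ] with y hy using ⟨ψ y, hy.1, hy.2.1⟩

lemma differentiableOn_image_regularPoints {F : Type*} [NormedAddCommGroup F] [NormedSpace ℂ F]
    (hU : IsOpen U) (hφ : DifferentiableOn ℂ φ U) {f h : E → F} (hh : DifferentiableOn ℂ h U)
    (hfh : ∀ z ∈ U, f (φ z) = h z) : DifferentiableOn ℂ f (φ '' regularPoints φ U) := by
  rintro _ ⟨x, hx, rfl⟩
  obtain ⟨ψ, hψx, hψ⟩ := exists_local_section hU hφ hx
  have hcomp : DifferentiableAt ℂ (h ∘ ψ) (φ x) :=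
    (hψx ▸ hh.differentiableAt (hU.mem_nhds hx.1)).comp _ hψ.self_of_nhds.2.2
  refine (hcomp.congr_of_eventuallyEq ?_).differentiableWithinAt
  filter_upwards [hψ] with y hy
  rw [Function.comp_apply, ← hfh _ hy.1.1, hy.2.1]

open MeasureTheory

lemma addHaar_image_diff_regularPoints [MeasurableSpace E] [BorelSpace E] (μ : Measure E)
    [μ.IsAddHaarMeasure] (hU : IsOpen U) (hφ : DifferentiableOn ℂ φ U) :
    μ (φ '' (U \ regularPoints φ U)) = 0 := by
  have : FiniteDimensional ℝ E := FiniteDimensional.complexToReal E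
  refine addHaar_image_eq_zero_of_det_fderivWithin_eq_zero μ
    (f' := fun z => (fderiv ℂ φ z).restrictScalars ℝ) (fun x hx => ?_) fun x hx => ?_
  · exact ((hφ.differentiableAt (hU.mem_nhds hx.1)).hasFDerivAt.restrictScalars
      ℝ).hasFDerivWithinAt
  · have hdet : (fderiv ℂ φ x).det = 0 := by_contra fun h => hx.2 ⟨hx.1, h⟩
    have hnorm := LinearMap.det_restrictScalars (R := ℝ) (f := (fderiv ℂ φ x : E →ₗ[ℂ] E))
    rw [show LinearMap.det (fderiv ℂ φ x : E →ₗ[ℂ] E) = 0 from hdet,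
      Algebra.norm_complex_eq] at hnorm
    exact hnorm.trans (by simp)

/-- Fubini for the map `(v, t) ↦ v + t • w`. -/
lemma dense_setOf_dense_add_smul_notMem [MeasurableSpace E] [BorelSpace E] (μ : Measure E)
    [μ.IsAddHaarMeasure] {N : Set E} (hN : μ N = 0) (w : E) :
    Dense {v : E | Dense {t : ℂ | v + t • w ∉ N}} := by
  have : ProperSpace E := FiniteDimensional.proper ℂ E
  have hmeas : MeasurableSet {p : E × ℂ | p.1 + p.2 • w ∉ toMeasurable μ N} := by
    have hc : Continuous fun p : E × ℂ => p.1 + p.2 • w := by fun_prop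
    exact (hc.measurable (measurableSet_toMeasurable μ N)).compl
  have hae : ∀ᵐ v ∂μ, ∀ᵐ t : ℂ, v + t • w ∉ toMeasurable μ N := by
    rw [Measure.ae_ae_comm hmeas]
    refine Eventually.of_forall fun t => ?_
    rw [ae_iff]
    simp only [not_not]
    rw [← (measure_toMeasurable N).trans hN]
    exact measure_preimage_add_right μ (t • w) _
  refine (Measure.dense_of_ae hae).mono fun v hv => (Measure.dense_of_ae hv).mono ?_
  exact fun t ht hmem => ht (subset_toMeasurable μ N hmem)

lemma dense_setOf_dense_slice (hU : IsOpen U) (hφ : DifferentiableOn ℂ φ U) (w : E) :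
    Dense {v : E | Dense {t : ℂ | v + t • w ∉ φ '' (U \ regularPoints φ U)}} := by
  borelize E
  exact dense_setOf_dense_add_smul_notMem (Measure.addHaar : Measure E)
    (addHaar_image_diff_regularPoints _ hU hφ) w

end RegularPoints

section MaximumPrinciple

variable {Y : Type*} [TopologicalSpace Y] {X : Set Y} {π : Y → ℂ}

/-- The image under `π` of the set where `‖G‖` attains a maximum above `C` would be a
nonempty compact open subset of `ℂ`. -/
lemma norm_le_of_forall_exists_section (hX : IsCompact X) (hπ : ContinuousOn π X) {G : Y → ℂ}
    (hG : ContinuousOn G X) {C : ℝ}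
    (hsec : ∀ q ∈ X, C < ‖G q‖ → ∃ g : ℂ → Y, g (π q) = q ∧
      ∀ᶠ s in 𝓝 (π q), g s ∈ X ∧ π (g s) = s ∧ DifferentiableAt ℂ (G ∘ g) s)
    {p : Y} (hp : p ∈ X) : ‖G p‖ ≤ C := by
  by_contra! hlt
  obtain ⟨q₀, hq₀, hmax⟩ := hX.exists_isMaxOn ⟨p, hp⟩ hG.norm
  let K : Set Y := (fun q => ‖G q‖) ⁻¹' {‖G q₀‖} ∩ X
  have hK : IsCompact K := by
    obtain ⟨Z, hZ, hKZ⟩ := continuousOn_iff_isClosed.1 hG.norm {‖G q₀‖} isClosed_singleton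
    have hKXZ : K = X ∩ Z := hKZ.trans (inter_comm Z X)
    exact hKXZ ▸ hX.inter_right hZ
  have hπK : IsCompact (π '' K) := hK.image_of_continuousOn (hπ.mono inter_subset_right)
  have hopen : IsOpen (π '' K) := by
    rw [isOpen_iff_mem_nhds]
    rintro _ ⟨q, ⟨hqmax : ‖G q‖ = ‖G q₀‖, hqX⟩, rfl⟩
    obtain ⟨g, hgq, hg⟩ := hsec q hqX (hqmax ▸ hlt.trans_le (hmax hp))
    have hconst := Complex.norm_eventually_eq_of_isLocalMax (f := G ∘ g)
      (hg.mono fun s hs => hs.2.2) (hg.mono fun s hs => by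
        simpa only [Function.comp_apply, hgq, hqmax] using isMaxOn_iff.1 hmax _ hs.1)
    filter_upwards [hg, hconst] with s hs hsmax
    rw [Function.comp_apply, Function.comp_apply, hgq, hqmax] at hsmax
    exact ⟨g s, ⟨hsmax, hs.1⟩, hs.2.1⟩
  have huniv : π '' K = univ :=
    IsClopen.eq_univ ⟨hπK.isClosed, hopen⟩ ⟨π q₀, q₀, ⟨rfl, hq₀⟩, rfl⟩
  exact noncompact_univ ℂ (huniv ▸ hπK)

/-- Apply the maximum principle to `F ^ n * J` and let `n` tend to infinity. -/
lemma norm_le_of_forall_exists_section_of_weight (hX : IsCompact X) (hπ : ContinuousOn π X)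
    {F J : Y → ℂ} (hF : ContinuousOn F X) (hJ : ContinuousOn J X) {M : ℝ} (hM : 0 ≤ M)
    (hsec : ∀ q ∈ X, J q ≠ 0 → M < ‖F q‖ → ∃ g : ℂ → Y, g (π q) = q ∧
      ∀ᶠ s in 𝓝 (π q), g s ∈ X ∧ π (g s) = s ∧
        DifferentiableAt ℂ (F ∘ g) s ∧ DifferentiableAt ℂ (J ∘ g) s)
    {p : Y} (hp : p ∈ X) (hJp : J p ≠ 0) : ‖F p‖ ≤ M := by
  obtain ⟨C, hC⟩ := hX.exists_bound_of_continuousOn hJ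
  have hJpos : 0 < ‖J p‖ := norm_pos_iff.2 hJp
  have hCpos : 0 < C := hJpos.trans_le (hC p hp)
  have hpow : ∀ n : ℕ, ‖F p‖ ^ n * ‖J p‖ ≤ M ^ n * C := fun n => by
    rw [← norm_pow, ← norm_mul]
    refine norm_le_of_forall_exists_section hX hπ (G := fun q => F q ^ n * J q)
      ((hF.pow n).mul hJ) (fun q hq hlt => ?_) hp
    rw [norm_mul, norm_pow] at hlt
    have hJq : J q ≠ 0 := by
      rintro h0
      rw [h0, norm_zero, mul_zero] at hlt
      exact hlt.not_ge (by positivity)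
    have hFq : M < ‖F q‖ := by
      by_contra! hle
      exact hlt.not_ge (by gcongr; exact hC q hq)
    obtain ⟨g, hgq, hg⟩ := hsec q hq hJq hFq
    exact ⟨g, hgq, hg.mono fun s ⟨hsX, hπs, hFs, hJs⟩ => ⟨hsX, hπs, (hFs.pow n).mul hJs⟩⟩
  by_contra! hlt
  have hFpos : 0 < ‖F p‖ := hM.trans_lt hlt
  obtain ⟨n, hn⟩ := exists_pow_lt_of_lt_one (div_pos hJpos hCpos) ((div_lt_one hFpos).2 hlt)
  rw [div_pow, div_lt_div_iff₀ (by positivity) hCpos] at hn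
  linarith [hpow n]

end MaximumPrinciple

section Rado

open Real (circleAverage)

variable {R : ℝ}

lemma exists_entire_re_eq_of_mem_span_fourier {L : ℝ} {q : C(AddCircle L, ℂ)}
    (hq : q ∈ Submodule.span ℂ (range (@fourier L))) :
    ∃ P : ℂ → ℂ, Differentiable ℂ P ∧ ∀ θ : AddCircle L, (q θ).re = (P θ.toCircle).re := by
  suffices hsmul : ∀ a : ℂ, ∃ P : ℂ → ℂ, Differentiable ℂ P ∧
      ∀ θ : AddCircle L, (a * q θ).re = (P θ.toCircle).re by simpa using hsmul 1
  induction hq using Submodule.span_induction with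
  | mem q hq =>
    obtain ⟨n, rfl⟩ := hq
    have hpow : ∀ (k : ℕ) (θ : AddCircle L), fourier k θ = (θ.toCircle : ℂ) ^ k := fun k θ => by
      rw [fourier_apply, AddCircle.toCircle_zsmul, Circle.coe_zpow, zpow_natCast]
    intro a
    obtain ⟨k, rfl | rfl⟩ := Int.eq_nat_or_neg n
    · exact ⟨fun z => a * z ^ k, by fun_prop, fun θ => by rw [hpow]⟩
    · refine ⟨fun z => (starRingEnd ℂ) a * z ^ k, by fun_prop, fun θ => ?_⟩
      rw [fourier_neg, hpow, ← Complex.conj_re, map_mul, Complex.conj_conj]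
  | zero => exact fun a => ⟨0, differentiable_const 0, by simp⟩
  | add q₁ q₂ _ _ ih₁ ih₂ =>
    intro a
    obtain ⟨P₁, hP₁, hre₁⟩ := ih₁ a
    obtain ⟨P₂, hP₂, hre₂⟩ := ih₂ a
    refine ⟨P₁ + P₂, hP₁.add hP₂, fun θ => ?_⟩
    rw [ContinuousMap.add_apply, mul_add, Complex.add_re, hre₁, hre₂, Pi.add_apply, Complex.add_re]
  | smul b q _ ih =>
    intro a
    simpa only [ContinuousMap.smul_apply, smul_eq_mul, mul_assoc] using ih (a * b)

lemma exists_entire_re_approx_of_pos (hR : 0 < R) {u : ℂ → ℝ} (hu : ContinuousOn u (sphere 0 R))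
    {ε : ℝ} (hε : 0 < ε) :
    ∃ P : ℂ → ℂ, Differentiable ℂ P ∧ ∀ z ∈ sphere (0 : ℂ) R, |u z - (P z).re| ≤ ε := by
  have : Fact ((0 : ℝ) < 1) := ⟨one_pos⟩
  let g : C(AddCircle (1 : ℝ), ℂ) := ⟨fun θ => (u (R * θ.toCircle) : ℂ),
    Complex.continuous_ofReal.comp (hu.comp_continuous
      (continuous_const.mul (continuous_subtype_val.comp AddCircle.continuous_toCircle))
      fun θ => by
        rw [mem_sphere_zero_iff_norm, norm_mul, Circle.norm_coe, mul_one, Complex.norm_real,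
          Real.norm_of_nonneg hR.le])⟩
  have hg : g ∈ (Submodule.span ℂ (range (@fourier 1))).topologicalClosure := by
    rw [span_fourier_closure_eq_top]; trivial
  obtain ⟨q, hq, hgq⟩ := Metric.mem_closure_iff.1 hg ε hε
  obtain ⟨P, hP, hqP⟩ := exists_entire_re_eq_of_mem_span_fourier hq
  refine ⟨fun z => P (z / R), by fun_prop, fun z hz => ?_⟩
  have hR' : (R : ℂ) ≠ 0 := Complex.ofReal_ne_zero.2 hR.ne'
  obtain ⟨ζ, hζ⟩ : ∃ ζ : Circle, (ζ : ℂ) = z / R :=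
    ⟨⟨z / R, mem_sphere_zero_iff_norm.2 (by simp_all [abs_of_pos hR])⟩, rfl⟩
  obtain ⟨θ, rfl⟩ := (AddCircle.homeomorphCircle (one_ne_zero (α := ℝ))).surjective ζ
  rw [AddCircle.homeomorphCircle_apply, eq_div_iff hR', mul_comm] at hζ
  calc |u z - (P (z / R)).re| = |(g θ - q θ).re| := by
        rw [Complex.sub_re, hqP, ← hζ, mul_div_cancel_left₀ _ hR']; rfl
    _ ≤ ‖g θ - q θ‖ := Complex.abs_re_le_norm _
    _ ≤ ε := by rw [← dist_eq_norm]; exact (ContinuousMap.dist_apply_le_dist θ).trans hgq.le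

lemma continuousOn_re_herglotzRieszKernel {c w : ℂ} (hw : w ∈ ball c R) :
    ContinuousOn (Complex.re ∘ herglotzRieszKernel c w) (sphere c R) := by
  simpa only [abs_of_pos (pos_of_mem_ball hw)] using
    Complex.continuous_re.comp_continuousOn (continuousOn_herglotzRieszKernel_sphere hw)

lemma circleAverage_re_herglotzRieszKernel_smul_mono {c w : ℂ} (hw : w ∈ ball c R) {u v : ℂ → ℝ}
    (hu : ContinuousOn u (sphere c R)) (hv : ContinuousOn v (sphere c R))
    (huv : ∀ ζ ∈ sphere c R, u ζ ≤ v ζ) :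
    circleAverage ((Complex.re ∘ herglotzRieszKernel c w) • u) c R ≤
      circleAverage ((Complex.re ∘ herglotzRieszKernel c w) • v) c R := by
  have hR := pos_of_mem_ball hw
  have hK := continuousOn_re_herglotzRieszKernel hw
  refine Real.circleAverage_mono ((hK.smul hu).circleIntegrable hR.le)
    ((hK.smul hv).circleIntegrable hR.le) fun ζ hζ => ?_
  rw [abs_of_pos hR] at hζ
  have hw' : ‖w - c‖ < R := mem_ball_iff_norm.1 hw
  have hpos : 0 ≤ (herglotzRieszKernel c w ζ).re :=
    (div_nonneg (sub_nonneg.2 hw'.le) (by positivity)).trans (le_re_herglotzRieszKernel hζ hw)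
  exact mul_le_mul_of_nonneg_left (huv ζ hζ) hpos

lemma circleAverage_re_herglotzRieszKernel_smul_re {c w : ℂ} (hw : w ∈ ball c R) {P : ℂ → ℂ}
    (hP : DiffContOnCl ℂ P (ball c R)) :
    circleAverage ((Complex.re ∘ herglotzRieszKernel c w) • (Complex.re ∘ P)) c R = (P w).re := by
  have hR := pos_of_mem_ball hw
  have hint : CircleIntegrable ((Complex.re ∘ herglotzRieszKernel c w) • P) c R :=
    ((continuousOn_re_herglotzRieszKernel hw).smul (hP.continuousOn_ball.mono
      sphere_subset_closedBall)).circleIntegrable hR.le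
  rw [← hP.circleAverage_re_herglotzRieszKernel_smul hw]
  refine Eq.trans ?_ (Complex.reCLM.circleAverage_comp_comm hint)
  congr 1
  ext ζ
  simp

/-- The maximum modulus principle on the disc of radius `R` for functions that are continuous on
the closed disc but are only known to be holomorphic at the points of `T`. -/
def HasMaxModulusPrinciple (T : Set ℂ) (R : ℝ) : Prop :=
  ∀ F : ℂ → ℂ, ContinuousOn F (closedBall 0 R) → (∀ t ∈ T, DifferentiableAt ℂ F t) →
    ∀ M : ℝ, (∀ t ∈ sphere 0 R, ‖F t‖ ≤ M) → ∀ t ∈ ball 0 R, ‖F t‖ ≤ M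

namespace HasMaxModulusPrinciple

variable {T : Set ℂ} {g : ℂ → ℂ}

lemma re_le_re (hT : HasMaxModulusPrinciple T R) {F G : ℂ → ℂ}
    (hF : ContinuousOn F (closedBall 0 R)) (hFT : ∀ t ∈ T, DifferentiableAt ℂ F t)
    (hG : ContinuousOn G (closedBall 0 R)) (hGT : ∀ t ∈ T, DifferentiableAt ℂ G t)
    (hle : ∀ t ∈ sphere 0 R, (F t).re ≤ (G t).re) {z : ℂ} (hz : z ∈ ball 0 R) :
    (F z).re ≤ (G z).re := by
  have hexp := hT (fun t => Complex.exp (F t - G t)) (hF.sub hG).cexp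
    (fun t ht => ((hFT t ht).sub (hGT t ht)).cexp) 1 (fun t ht => by
      simpa [Complex.norm_exp] using hle t ht) z hz
  simpa [Complex.norm_exp] using hexp

lemma re_eq_circleAverage (hT : HasMaxModulusPrinciple T R) (hg : ContinuousOn g (closedBall 0 R))
    (hgT : ∀ t ∈ T, DifferentiableAt ℂ g t) {z : ℂ} (hz : z ∈ ball 0 R) :
    (g z).re = circleAverage ((Complex.re ∘ herglotzRieszKernel 0 z) • (Complex.re ∘ g)) 0 R := by
  have hgs : ContinuousOn (Complex.re ∘ g) (sphere 0 R) :=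
    Complex.continuous_re.comp_continuousOn (hg.mono sphere_subset_closedBall)
  have hle_re : ∀ {P : ℂ → ℂ}, Differentiable ℂ P → (∀ t ∈ sphere 0 R, (g t).re ≤ (P t).re) →
      (g z).re ≤ (P z).re ∧
        circleAverage ((Complex.re ∘ herglotzRieszKernel 0 z) • (Complex.re ∘ g)) 0 R ≤ (P z).re :=
    fun hP hle => ⟨hT.re_le_re hg hgT hP.continuous.continuousOn (fun t _ => hP t) hle hz, by
      rw [← circleAverage_re_herglotzRieszKernel_smul_re hz hP.diffContOnCl]
      exact circleAverage_re_herglotzRieszKernel_smul_mono hz hgs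
        (Complex.continuous_re.comp hP.continuous).continuousOn hle⟩
  have hre_le : ∀ {P : ℂ → ℂ}, Differentiable ℂ P → (∀ t ∈ sphere 0 R, (P t).re ≤ (g t).re) →
      (P z).re ≤ (g z).re ∧
        (P z).re ≤ circleAverage ((Complex.re ∘ herglotzRieszKernel 0 z) • (Complex.re ∘ g)) 0 R :=
    fun hP hle => ⟨hT.re_le_re hP.continuous.continuousOn (fun t _ => hP t) hg hgT hle hz, by
      rw [← circleAverage_re_herglotzRieszKernel_smul_re hz hP.diffContOnCl]
      exact circleAverage_re_herglotzRieszKernel_smul_mono hz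
        (Complex.continuous_re.comp hP.continuous).continuousOn hgs hle⟩
  refine eq_of_forall_dist_le fun ε hε => ?_
  obtain ⟨P, hP, hgP⟩ := exists_entire_re_approx_of_pos (pos_of_mem_ball hz) hgs (half_pos hε)
  simp only [Function.comp_apply, abs_le] at hgP
  have hupper := hle_re (hP.add_const ((ε / 2 : ℝ) : ℂ)) fun t ht => by
    rw [Complex.add_re, Complex.ofReal_re]; linarith [(hgP t ht).2]
  have hlower := hre_le (hP.sub_const ((ε / 2 : ℝ) : ℂ)) fun t ht => by
    rw [Complex.sub_re, Complex.ofReal_re]; linarith [(hgP t ht).1]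
  simp only [Complex.add_re, Complex.sub_re, Complex.ofReal_re] at hupper hlower
  rw [Real.dist_eq, abs_le]
  constructor <;> linarith [hupper.1, hupper.2, hlower.1, hlower.2]

lemma contDiffOn_re (hT : HasMaxModulusPrinciple T R) (hg : ContinuousOn g (closedBall 0 R))
    (hgT : ∀ t ∈ T, DifferentiableAt ℂ g t) :
    ContDiffOn ℝ 1 (fun z => (g z).re) (ball 0 R) := by
  intro z hz
  have hint : CircleIntegrable (Complex.re ∘ g) 0 R :=
    (Complex.continuous_re.comp_continuousOn (hg.mono sphere_subset_closedBall)).circleIntegrable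
      (pos_of_mem_ball hz).le
  have hint' : CircleIntegrable (fun ζ => ((g ζ).re : ℂ)) 0 R :=
    (Complex.continuous_ofReal.comp_continuousOn (Complex.continuous_re.comp_continuousOn
      (hg.mono sphere_subset_closedBall))).circleIntegrable (pos_of_mem_ball hz).le
  have hG := (differentiableOn_circleAverage_herglotzRieszKernel_smul hint').contDiffOn
    (n := 1) isOpen_ball |>.restrict_scalars ℝ
  refine (Complex.reCLM.contDiff.comp_contDiffOn hG).congr (fun y hy => ?_) z hz
  rw [hT.re_eq_circleAverage hg hgT hy, ← re_circleAverage_herglotzRieszKernel_smul hint hy]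
  rfl

end HasMaxModulusPrinciple

lemma differentiableOn_of_contDiffOn_of_subset_closure {F : Type*} [NormedAddCommGroup F]
    [NormedSpace ℂ F] {W T : Set ℂ} (hW : IsOpen W) {f : ℂ → F} (hf : ContDiffOn ℝ 1 f W)
    (hWT : W ⊆ closure T) (hfT : ∀ t ∈ T, DifferentiableAt ℂ f t) : DifferentiableOn ℂ f W := by
  intro z hz
  have hcont : ContinuousAt (fderiv ℝ f) z :=
    (hf.continuousOn_fderiv_of_isOpen hW le_rfl).continuousAt (hW.mem_nhds hz)
  have hdiff := (hf.differentiableOn one_ne_zero).differentiableAt (hW.mem_nhds hz)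
  refine (differentiableAt_complex_iff_differentiableAt_real.2
    ⟨hdiff, ?_⟩).differentiableWithinAt
  have : (𝓝[T] z).NeBot := mem_closure_iff_nhdsWithin_neBot.1 (hWT hz)
  refine tendsto_nhds_unique_of_eventuallyEq (l := 𝓝[T] z)
    ((hcont.clm_apply continuousAt_const).tendsto.mono_left nhdsWithin_le_nhds)
    (((hcont.clm_apply continuousAt_const).const_smul Complex.I).tendsto.mono_left
      nhdsWithin_le_nhds) ?_
  filter_upwards [self_mem_nhdsWithin] with t ht
  exact (differentiableAt_complex_iff_differentiableAt_real.1 (hfT t ht)).2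

lemma HasMaxModulusPrinciple.differentiableOn {T : Set ℂ} (hT : HasMaxModulusPrinciple T R)
    (hdense : ball 0 R ⊆ closure T) {f : ℂ → ℂ} (hf : ContinuousOn f (closedBall 0 R))
    (hfT : ∀ t ∈ T, DifferentiableAt ℂ f t) : DifferentiableOn ℂ f (ball 0 R) := by
  have hre := hT.contDiffOn_re hf hfT
  have him := hT.contDiffOn_re (g := fun z => -Complex.I * f z) (continuousOn_const.mul hf)
    fun t ht => (hfT t ht).const_mul _
  refine differentiableOn_of_contDiffOn_of_subset_closure isOpen_ball ?_ hdense hfT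
  refine ((Complex.ofRealCLM.contDiff.comp_contDiffOn hre).add
    ((Complex.ofRealCLM.contDiff.comp_contDiffOn him).mul contDiffOn_const (g := fun _ =>
      Complex.I))).congr fun z _ => ?_
  simp [Complex.re_add_im]

end Rado

section Descent

variable {E : Type*} [NormedAddCommGroup E] [NormedSpace ℂ E]
  {U : Set E} {φ : E → E} {f : E → ℂ} {v w : E} {R : ℝ}

lemma subset_closure_slice (hline : ∀ t ∈ closedBall (0 : ℂ) R, v + t • w ∈ φ '' U)
    (hdense : Dense {t : ℂ | v + t • w ∉ φ '' (U \ regularPoints φ U)}) :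
    ball 0 R ⊆ closure (ball 0 R ∩ {t : ℂ | v + t • w ∈ φ '' regularPoints φ U}) := by
  intro t ht
  refine closure_mono ?_ (isOpen_ball.inter_closure ⟨ht, hdense t⟩)
  rintro s ⟨hs, hsreg⟩
  obtain ⟨x, hx, hxs⟩ := hline s (ball_subset_closedBall hs)
  exact ⟨hs, x, by_contra fun hreg => hsreg ⟨x, ⟨hx, hreg⟩, hxs⟩, hxs⟩

variable [FiniteDimensional ℂ E]

lemma norm_le_of_add_smul_mem_image_regularPoints (hU : IsOpen U) (hφ : DifferentiableOn ℂ φ U)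
    (hpre : IsCompact {x ∈ U | φ x ∈ (fun t : ℂ => v + t • w) '' closedBall 0 R})
    {F : ℂ → ℂ} (hF : ContinuousOn F (closedBall 0 R))
    (hFT : ∀ t : ℂ, v + t • w ∈ φ '' regularPoints φ U → DifferentiableAt ℂ F t) {M : ℝ}
    (hM : 0 ≤ M) (hFM : ∀ t ∈ sphere 0 R, ‖F t‖ ≤ M) {t : ℂ} (ht : t ∈ closedBall 0 R)
    (htreg : v + t • w ∈ φ '' regularPoints φ U) : ‖F t‖ ≤ M := by
  obtain ⟨x, hx, hxt⟩ := htreg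
  have hline : Continuous fun t : ℂ => v + t • w := by fun_prop
  have hJ := differentiableOn_det_fderiv hU hφ
  refine norm_le_of_forall_exists_section_of_weight (π := Prod.fst) (F := F ∘ Prod.fst)
    (J := fun p : ℂ × E => (fderiv ℂ φ p.2).det) (p := (t, x))
    (isCompact_setOf_eq_comp (isCompact_closedBall 0 R) hφ.continuousOn hline.continuousOn hpre)
    continuousOn_fst (hF.comp continuousOn_fst fun p hp => hp.1)
    (hJ.continuousOn.comp continuousOn_snd fun p hp => hp.2.1) hM ?_ ⟨ht, hx.1, hxt⟩ hx.2
  rintro ⟨s, y⟩ ⟨hs, hy, hys⟩ hJy hMs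
  obtain ⟨ψ, hψy, hψ⟩ := exists_local_section hU hφ ⟨hy, hJy⟩
  rw [hys] at hψy hψ
  have hsball : s ∈ ball (0 : ℂ) R := by
    rw [← closedBall_sdiff_sphere]
    exact ⟨hs, fun hsphere => hMs.not_ge (hFM s hsphere)⟩
  refine ⟨fun r => (r, ψ (v + r • w)), Prod.ext rfl hψy, ?_⟩
  filter_upwards [hline.continuousAt.eventually hψ, isOpen_ball.mem_nhds hsball] with r hr hrball
  obtain ⟨hreg, hright, hdiff⟩ := hr
  refine ⟨⟨ball_subset_closedBall hrball, hreg.1, hright⟩, rfl, hFT r ⟨_, hreg, hright⟩, ?_⟩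
  exact DifferentiableAt.comp (g := fun x => (fderiv ℂ φ x).det) r
    (hJ.differentiableAt (hU.mem_nhds hreg.1))
    (DifferentiableAt.comp (g := ψ) r hdiff (by fun_prop))

lemma hasMaxModulusPrinciple_slice (hU : IsOpen U) (hφ : DifferentiableOn ℂ φ U)
    (hpre : IsCompact {x ∈ U | φ x ∈ (fun t : ℂ => v + t • w) '' closedBall 0 R})
    (hline : ∀ t ∈ closedBall (0 : ℂ) R, v + t • w ∈ φ '' U)
    (hdense : Dense {t : ℂ | v + t • w ∉ φ '' (U \ regularPoints φ U)}) :
    HasMaxModulusPrinciple {t : ℂ | v + t • w ∈ φ '' regularPoints φ U} R := by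
  intro F hF hFT M hFM t ht
  obtain ⟨s, hs⟩ := NormedSpace.sphere_nonempty (x := (0 : ℂ)).2 (pos_of_mem_ball ht).le
  have hM : 0 ≤ M := (norm_nonneg _).trans (hFM s hs)
  refine ContinuousWithinAt.closure_le (subset_closure_slice hline hdense ht)
    ((hF t (ball_subset_closedBall ht)).norm.mono fun r hr => ball_subset_closedBall hr.1)
    continuousWithinAt_const fun r hr => ?_
  exact norm_le_of_add_smul_mem_image_regularPoints hU hφ hpre hF hFT hM hFM
    (ball_subset_closedBall hr.1) hr.2

lemma differentiableOn_slice (hU : IsOpen U) (hφ : DifferentiableOn ℂ φ U)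
    (hpre : IsCompact {x ∈ U | φ x ∈ (fun t : ℂ => v + t • w) '' closedBall 0 R})
    (hline : ∀ t ∈ closedBall (0 : ℂ) R, v + t • w ∈ φ '' U)
    (hdense : Dense {t : ℂ | v + t • w ∉ φ '' (U \ regularPoints φ U)})
    (hf : ContinuousOn f (φ '' U)) (hfreg : DifferentiableOn ℂ f (φ '' regularPoints φ U)) :
    DifferentiableOn ℂ (fun t : ℂ => f (v + t • w)) (ball 0 R) := by
  refine (hasMaxModulusPrinciple_slice hU hφ hpre hline hdense).differentiableOn
    ((subset_closure_slice hline hdense).trans (closure_mono inter_subset_right))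
    (hf.comp (by fun_prop) hline) fun t ht => ?_
  exact DifferentiableAt.comp (g := f) t
    (hfreg.differentiableAt ((isOpen_image_regularPoints hU hφ).mem_nhds ht)) (by fun_prop)

theorem stmt_5_general {V : Set E} (hU : IsOpen U) (hV : IsOpen V) (hφ : DifferentiableOn ℂ φ U)
    (himage : φ '' U = V) (hproper : ∀ K ⊆ V, IsCompact K → IsCompact {x ∈ U | φ x ∈ K})
    {h : E → ℂ} (hh : DifferentiableOn ℂ h U)
    (hfib : ∀ x ∈ U, ∀ y ∈ U, φ x = φ y → h x = h y) :
    ∃ f : E → ℂ, DifferentiableOn ℂ f V ∧ ∀ z ∈ U, h z = f (φ z) := by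
  subst himage
  have : ProperSpace E := FiniteDimensional.proper ℂ E
  have : LocallyCompactSpace (φ '' U) := hV.locallyCompactSpace
  let f : E → ℂ := fun v => h (Function.invFunOn φ U v)
  have hfh : ∀ z ∈ U, f (φ z) = h z := fun z hz =>
    hfib _ (Function.invFunOn_mem ⟨z, hz, rfl⟩) _ hz (Function.invFunOn_eq ⟨z, hz, rfl⟩)
  have hf : ContinuousOn f (φ '' U) :=
    continuousOn_of_comp_of_isCompact_preimage hφ.continuousOn rfl hproper
      (hh.continuousOn.congr hfh)
  have hfreg := differentiableOn_image_regularPoints hU hφ hh hfh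
  refine ⟨f, differentiableOn_of_lineDifferentiableAt hV hf fun z hz w => ?_,
    fun z hz => (hfh z hz).symm⟩
  refine lineDifferentiableAt_of_dense hV hf (dense_setOf_dense_slice hU hφ w)
    (fun v hv R hline => ?_) hz
  have hpre := hproper _ (image_subset_iff.2 hline)
    ((isCompact_closedBall 0 R).image (by fun_prop))
  exact differentiableOn_slice hU hφ hpre hline hv hf hfreg

end Descent

/-- If `φ : U → V` is an admissible proper holomorphic map and `h`
is holomorphic on `U` and constant on the fibers of `φ`, then `h = f ∘ φ` for
some `f` holomorphic on `V`. -/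
theorem stmt_5 (d : ℕ) (hd : 1 ≤ d)
    (U V : Set (EuclideanSpace ℂ (Fin d)))
    (hUopen : IsOpen U) (hUconn : IsConnected U)
    (hVopen : IsOpen V) (hVconn : IsConnected V)
    (φ : EuclideanSpace ℂ (Fin d) → EuclideanSpace ℂ (Fin d))
    (hφholo : DifferentiableOn ℂ φ U)
    (hφmaps : Set.MapsTo φ U V)
    (hφsurj : φ '' U = V)
    (hφproper : ∀ K : Set (EuclideanSpace ℂ (Fin d)), K ⊆ V → IsCompact K →
      IsCompact {x ∈ U | φ x ∈ K})
    (hadm : ∀ v ∈ φ '' {z ∈ U | (fderiv ℂ φ z).det = 0},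
      ∃! x, x ∈ U ∧ φ x = v)
    (h : EuclideanSpace ℂ (Fin d) → ℂ)
    (hholo : DifferentiableOn ℂ h U)
    (hfib : ∀ x ∈ U, ∀ y ∈ U, φ x = φ y → h x = h y) :
    ∃ f : EuclideanSpace ℂ (Fin d) → ℂ,
      DifferentiableOn ℂ f V ∧ ∀ z ∈ U, h z = f (φ z) := by
  exact stmt_5_general hUopen hVopen hφholo hφsurj hφproper hholo hfib
end

section
/- Let σ : ℂ^d → ℂ^d be an affine-linear involution (σ(z) = A z + B, σ∘σ = id), let U, V be domains in ℂ^d with σ(U) ⊆ U, and let φ : U → V be an admissible holomorphic surjection (the fiber over every point of φ(Z(J_φ)) is a singleton) satisfying φ(σ(z)) = φ(z) for all z ∈ U. Then Z(J_φ) ⊆ {z ∈ U : σ(z) = z}. If moreover J_σ := det A = −1, then Z(J_φ) = {z ∈ U : σ(z) = z}. -/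
/-!
If `J_φ` vanishes at `z`, then `z` and `σ z` lie in the same fiber of `φ`, over a point of
`φ(Z(J_φ))`; that fiber is a singleton, so `σ z = z`. Conversely, differentiating `φ ∘ σ = φ`
at a fixed point `z` of `σ` gives `Dφ(z) ∘ Dσ(z) = Dφ(z)`, hence `J_φ(z) * J_σ(z) = J_φ(z)`, and
`J_σ(z) ≠ 1` forces `J_φ(z) = 0`.
-/

open Function Set Topology

theorem isFixedPt_of_subsingleton_fiber {α β : Type*} {σ : α → α} {φ : α → β} {U : Set α} {z : α}
    (hσU : MapsTo σ U U) (hφσ : EqOn (φ ∘ σ) φ U) (hz : z ∈ U)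
    (hfiber : {x ∈ U | φ x = φ z}.Subsingleton) : IsFixedPt σ z :=
  hfiber ⟨hσU hz, hφσ hz⟩ ⟨hz, rfl⟩

section Derivative

variable {𝕜 E F : Type*} [NontriviallyNormedField 𝕜] [NormedAddCommGroup E] [NormedSpace 𝕜 E]
  [NormedAddCommGroup F] [NormedSpace 𝕜 F] {σ : E → E} {z : E}

theorem fderiv_comp_fderiv_of_isFixedPt {φ : E → F} (hφ : DifferentiableAt 𝕜 φ z)
    (hσ : DifferentiableAt 𝕜 σ z) (hz : IsFixedPt σ z) (hφσ : φ ∘ σ =ᶠ[𝓝 z] φ) :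
    fderiv 𝕜 φ z ∘L fderiv 𝕜 σ z = fderiv 𝕜 φ z :=
  calc fderiv 𝕜 φ z ∘L fderiv 𝕜 σ z
      = fderiv 𝕜 φ (σ z) ∘L fderiv 𝕜 σ z := by rw [hz.eq]
    _ = fderiv 𝕜 (φ ∘ σ) z := (fderiv_comp z (by rwa [hz.eq]) hσ).symm
    _ = fderiv 𝕜 φ z := hφσ.fderiv_eq

theorem det_fderiv_mul_det_fderiv_of_isFixedPt {φ : E → E} (hφ : DifferentiableAt 𝕜 φ z)
    (hσ : DifferentiableAt 𝕜 σ z) (hz : IsFixedPt σ z) (hφσ : φ ∘ σ =ᶠ[𝓝 z] φ) :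
    (fderiv 𝕜 φ z).det * (fderiv 𝕜 σ z).det = (fderiv 𝕜 φ z).det :=
  calc (fderiv 𝕜 φ z).det * (fderiv 𝕜 σ z).det
      = (fderiv 𝕜 φ z ∘L fderiv 𝕜 σ z).det := (LinearMap.det_comp _ _).symm
    _ = (fderiv 𝕜 φ z).det := by rw [fderiv_comp_fderiv_of_isFixedPt hφ hσ hz hφσ]

theorem det_fderiv_eq_zero_of_isFixedPt {φ : E → E} (hφ : DifferentiableAt 𝕜 φ z)
    (hσ : DifferentiableAt 𝕜 σ z) (hz : IsFixedPt σ z) (hφσ : φ ∘ σ =ᶠ[𝓝 z] φ)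
    (hdet : (fderiv 𝕜 σ z).det ≠ 1) : (fderiv 𝕜 φ z).det = 0 :=
  eq_zero_of_mul_eq_self_right hdet (det_fderiv_mul_det_fderiv_of_isFixedPt hφ hσ hz hφσ)

theorem hasFDerivAt_linearMap_add_const [CompleteSpace 𝕜] [FiniteDimensional 𝕜 E]
    (A : E →ₗ[𝕜] F) (b : F) (z : E) :
    HasFDerivAt (fun x ↦ A x + b) A.toContinuousLinearMap z :=
  A.toContinuousLinearMap.hasFDerivAt.add_const b

end Derivative

section Admissible

variable {𝕜 E : Type*} [NontriviallyNormedField 𝕜] [NormedAddCommGroup E] [NormedSpace 𝕜 E]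
  {σ φ : E → E} {U : Set E}

variable (𝕜) in
/-- The zero set `Z(J_φ)` in `U` of the Jacobian determinant `J_φ` of `φ`. -/
def jacobianZeros (φ : E → E) (U : Set E) : Set E :=
  {z ∈ U | (fderiv 𝕜 φ z).det = 0}

variable (𝕜) in
/-- Admissibility of `φ` on `U`: the fiber in `U` over every point of `φ(Z(J_φ))` is a singleton.
This is the fiber condition alone, without holomorphy of `φ` or surjectivity onto a target. -/
def IsAdmissibleOn (φ : E → E) (U : Set E) : Prop :=
  ∀ v ∈ φ '' jacobianZeros 𝕜 φ U, ∃! x, x ∈ U ∧ φ x = v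

theorem jacobianZeros_subset_fixedPoints (hσU : MapsTo σ U U) (hφσ : EqOn (φ ∘ σ) φ U)
    (hadm : IsAdmissibleOn 𝕜 φ U) : jacobianZeros 𝕜 φ U ⊆ U ∩ fixedPoints σ := fun z hz ↦
  ⟨hz.1, isFixedPt_of_subsingleton_fiber hσU hφσ hz.1 fun _ hx _ hy ↦
    (hadm (φ z) (mem_image_of_mem φ hz)).unique hx hy⟩

theorem inter_fixedPoints_subset_jacobianZeros (hU : IsOpen U) (hφ : DifferentiableOn 𝕜 φ U)
    (hφσ : EqOn (φ ∘ σ) φ U)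
    (hσ : ∀ z ∈ U, IsFixedPt σ z → DifferentiableAt 𝕜 σ z ∧ (fderiv 𝕜 σ z).det ≠ 1) :
    U ∩ fixedPoints σ ⊆ jacobianZeros 𝕜 φ U := by
  rintro z ⟨hzU, hfix⟩
  have hU_nhds : U ∈ 𝓝 z := hU.mem_nhds hzU
  obtain ⟨hσ_diff, hσ_det⟩ := hσ z hzU hfix
  exact ⟨hzU, det_fderiv_eq_zero_of_isFixedPt (hφ.differentiableAt hU_nhds) hσ_diff hfix
    (hφσ.eventuallyEq_of_mem hU_nhds) hσ_det⟩

theorem stmt_6_general [FiniteDimensional 𝕜 E] (hU : IsOpen U) (hσU : MapsTo σ U U)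
    (hφ : DifferentiableOn 𝕜 φ U) (hadm : IsAdmissibleOn 𝕜 φ U) (hφσ : EqOn (φ ∘ σ) φ U) :
    jacobianZeros 𝕜 φ U ⊆ U ∩ fixedPoints σ ∧
    ((∀ z ∈ U, IsFixedPt σ z → DifferentiableAt 𝕜 σ z ∧ (fderiv 𝕜 σ z).det ≠ 1) →
      jacobianZeros 𝕜 φ U = U ∩ fixedPoints σ) :=
  have hsub := jacobianZeros_subset_fixedPoints hσU hφσ hadm
  ⟨hsub, fun hσ ↦ hsub.antisymm (inter_fixedPoints_subset_jacobianZeros hU hφ hφσ hσ)⟩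

end Admissible

/-- For an affine-linear involution `σ` and a `σ`-invariant
admissible holomorphic surjection `φ : U → V`, one has `Z(J_φ) ⊆ Fix(σ)`;
if moreover `J_σ = det A = -1`, then `Z(J_φ) = Fix(σ)`. -/
theorem stmt_6 (d : ℕ) (hd : 1 ≤ d)
    (σ : EuclideanSpace ℂ (Fin d) → EuclideanSpace ℂ (Fin d))
    (A : EuclideanSpace ℂ (Fin d) →ₗ[ℂ] EuclideanSpace ℂ (Fin d))
    (B : EuclideanSpace ℂ (Fin d))
    (hσ : ∀ z, σ z = A z + B)
    (hσinv : ∀ z, σ (σ z) = z)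
    (U V : Set (EuclideanSpace ℂ (Fin d)))
    (hUopen : IsOpen U) (hUconn : IsConnected U)
    (hVopen : IsOpen V) (hVconn : IsConnected V)
    (hUinv : σ '' U ⊆ U)
    (φ : EuclideanSpace ℂ (Fin d) → EuclideanSpace ℂ (Fin d))
    (hφholo : DifferentiableOn ℂ φ U)
    (hφmaps : Set.MapsTo φ U V)
    (hφsurj : φ '' U = V)
    (hadm : ∀ v ∈ φ '' {z ∈ U | (fderiv ℂ φ z).det = 0},
      ∃! x, x ∈ U ∧ φ x = v)
    (hφσ : ∀ z ∈ U, φ (σ z) = φ z) :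
    {z ∈ U | (fderiv ℂ φ z).det = 0} ⊆ {z ∈ U | σ z = z} ∧
    (LinearMap.det A = -1 →
      {z ∈ U | (fderiv ℂ φ z).det = 0} = {z ∈ U | σ z = z}) := by
  have hDσ (z) : HasFDerivAt σ A.toContinuousLinearMap z :=
    funext hσ ▸ hasFDerivAt_linearMap_add_const A B z
  refine (stmt_6_general hUopen (mapsTo_iff_image_subset.2 hUinv) hφholo hadm hφσ).imp_right
    fun hZ hdet ↦ hZ fun z _ _ ↦ ⟨(hDσ z).differentiableAt, ?_⟩
  rw [(hDσ z).fderiv, LinearMap.det_toContinuousLinearMap, hdet]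
  norm_num
end

section
/- (Waring–Lagrange theorem for σ-invariant holomorphic functions.) Let σ : ℂ^d → ℂ^d be an affine-linear involution with J_σ = −1, let U, V be domains in ℂ^d, and let φ : U → V be a σ-invariant 2-proper holomorphic map (σ(U) ⊆ U and φ∘σ = φ on U). Then for a function g holomorphic on U, one has g(σ(z)) = g(z) for all z ∈ U if and only if there exists a function f holomorphic on V with g(z) = f(φ(z)) for all z ∈ U. -/
/-!
The factor is forced, `f (φ z) = g z`, so one has to see that it is well defined and holomorphic.

Differentiating `φ ∘ σ = φ` at a fixed point of `σ` gives `J_φ · J_σ = J_φ`, so `J_φ = 0` there;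
conversely a critical point is fixed by `σ` because it is alone in its fiber. Hence the fibers of
`φ` are the `σ`-orbits and `f` is well defined. A proper surjection is a quotient map, so `f` is
continuous. At a regular value, `f` is `g` composed with a local inverse of `φ`, hence holomorphic.

It remains to remove the critical values, which are the `φ`-image of points in a hyperplane: some
non-constant affine function is constant on the fixed points of `σ`. Sard's theorem, applied to `φ`
on the hyperplane thickened by a direction `h`, shows that densely many lines parallel to `h` meet
this image in a countable set. On such lines `f` is holomorphic, countable sets being removable in
one variable; on the remaining lines it is a locally uniform limit of holomorphic functions. So `f`
is continuous and holomorphic on every line, and Osgood's lemma applies.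
-/

section

open Filter Function Metric Set Topology
open scoped NNReal

section Lines

variable {𝕜 E F : Type*} [NontriviallyNormedField 𝕜] [NormedAddCommGroup E] [NormedSpace 𝕜 E]
  {V : Set E} {x h : E}

theorem tendstoLocallyUniformlyOn_comp_add_smul {Y : Type*} [UniformSpace Y] {f : E → Y}
    {O : Set 𝕜} (hV : IsOpen V) (hf : ContinuousOn f V) (hO : MapsTo (fun ζ => x + ζ • h) O V) :
    TendstoLocallyUniformlyOn (fun (y : E) (ζ : 𝕜) => f (y + ζ • h)) (fun ζ => f (x + ζ • h))
      (𝓝 x) O := by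
  rw [tendstoLocallyUniformlyOn_iff_forall_tendsto]
  intro ζ hζ
  have hcont : ContinuousAt f (x + ζ • h) := hf.continuousAt (hV.mem_nhds (hO hζ))
  have hpair : Tendsto (fun p : E × 𝕜 => (f (x + p.2 • h), f (p.1 + p.2 • h))) (𝓝 (x, ζ))
      (𝓝 (f (x + ζ • h), f (x + ζ • h))) := by
    refine Tendsto.prodMk_nhds ?_ ?_ <;>
      exact Tendsto.comp hcont (Continuous.tendsto' (by fun_prop) _ _ rfl)
  rw [nhds_prod_eq] at hpair
  exact (hpair.mono_left (prod_mono le_rfl nhdsWithin_le_nhds)).mono_right (nhds_le_uniformity _)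

variable (𝕜) in
theorem exists_eventually_mapsTo_add_smul_closedBall (hV : IsOpen V) (hx : x ∈ V) (h : E) :
    ∃ δ : ℝ≥0, 0 < δ ∧ ∀ᶠ y in 𝓝 x, MapsTo (fun ζ : 𝕜 => y + ζ • h) (closedBall 0 δ) V := by
  have hline : Tendsto (fun p : E × 𝕜 => p.1 + p.2 • h) (𝓝 x ×ˢ 𝓝 0) (𝓝 x) := by
    rw [← nhds_prod_eq]
    exact Continuous.tendsto' (by fun_prop) _ _ (by simp)
  have hmem := hline.eventually (hV.mem_nhds hx)
  rw [((basis_sets _).prod nhds_basis_closedBall).eventually_iff] at hmem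
  obtain ⟨⟨N, δ⟩, ⟨hN, hδ⟩, hsub⟩ := hmem
  exact ⟨⟨δ, hδ.le⟩, hδ, mem_of_superset hN fun y hy ζ hζ => hsub (mk_mem_prod hy hζ)⟩

theorem hasDerivAt_of_hasLineDerivAt_add_smul [NormedAddCommGroup F] [NormedSpace 𝕜 F] {f : E → F}
    {f' : F} {ζ : 𝕜} (hf : HasLineDerivAt 𝕜 f f' (x + ζ • h) h) :
    HasDerivAt (fun s : 𝕜 => f (x + s • h)) f' ζ := by
  have hf₀ : HasDerivAt (fun t : 𝕜 => f (x + ζ • h + t • h)) f' (ζ - ζ) := by rwa [sub_self]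
  simpa [sub_smul, add_assoc] using hf₀.comp_sub_const ζ ζ

end Lines

section LineDerivatives

variable {𝕜 E F : Type*} [RCLike 𝕜] [NormedAddCommGroup E] [NormedSpace 𝕜 E]
  [NormedAddCommGroup F] [NormedSpace 𝕜 F] {f : E → F} {x h k : E}

theorem lineDeriv_add_of_continuousAt
    (hfh : ∀ᶠ y in 𝓝 x, LineDifferentiableAt 𝕜 f y h)
    (hfk : ∀ᶠ y in 𝓝 x, LineDifferentiableAt 𝕜 f y k)
    (hch : ContinuousAt (fun y => lineDeriv 𝕜 f y h) x)
    (hck : ContinuousAt (fun y => lineDeriv 𝕜 f y k) x) :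
    lineDeriv 𝕜 f x (h + k) = lineDeriv 𝕜 f x h + lineDeriv 𝕜 f x k := by
  let P : 𝕜 × 𝕜 → E := fun p => x + p.1 • h + p.2 • k
  have hP0 : P 0 = x := by simp [P]
  have hP : Continuous P := by fun_prop
  have hPx : Tendsto P (𝓝 0) (𝓝 x) := hP.tendsto' _ _ hP0
  have hcont : ∀ v, ContinuousAt (fun y => lineDeriv 𝕜 f y v) x →
      ContinuousAt (fun p => ContinuousLinearMap.toSpanSingleton 𝕜 (lineDeriv 𝕜 f (P p) v)) 0 :=
    fun v hv => (ContinuousLinearMap.toSpanSingletonCLE (𝕜 := 𝕜)).continuous.continuousAt.comp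
      (hv.comp_of_eq hP.continuousAt hP0)
  have hstrict := hasStrictFDerivAt_uncurry_coprod (f := fun s t => f (P (s, t)))
    (f₁ := fun s t => .toSpanSingleton 𝕜 (lineDeriv 𝕜 f (P (s, t)) h))
    (f₂ := fun s t => .toSpanSingleton 𝕜 (lineDeriv 𝕜 f (P (s, t)) k))
    (by
      filter_upwards [hPx.eventually hfh] with p hp
      have hline := hp.hasLineDerivAt
      simp only [P, HasUncurry.uncurry, id_eq, add_right_comm x _ (_ • k)] at hline ⊢
      exact (hasDerivAt_of_hasLineDerivAt_add_smul hline).hasFDerivAt)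
    (by
      filter_upwards [hPx.eventually hfk] with p hp
      exact (hasDerivAt_of_hasLineDerivAt_add_smul hp.hasLineDerivAt).hasFDerivAt)
    (hcont h hch) (hcont k hck)
  refine HasLineDerivAt.lineDeriv ?_
  simpa [HasLineDerivAt, HasUncurry.uncurry, P, add_assoc] using
    hstrict.hasFDerivAt.hasLineDerivAt (1, 1)

theorem hasFDerivAt_of_hasLineDerivAt {L : E → E →L[𝕜] F}
    (hL : ∀ᶠ y in 𝓝 x, ∀ h, HasLineDerivAt 𝕜 f (L y h) y h) (hLc : ContinuousAt L x) :
    HasFDerivAt f (L x) x := by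
  rw [hasFDerivAt_iff_isLittleO, Asymptotics.isLittleO_iff]
  intro ε hε
  have hclose : ∀ᶠ y in 𝓝 x, ‖L y - L x‖ < ε := by
    simpa only [dist_eq_norm] using hLc.eventually (ball_mem_nhds _ hε)
  obtain ⟨r, hr, hball⟩ := eventually_nhds_iff_ball.1 (hL.and hclose)
  filter_upwards [ball_mem_nhds x hr] with y hy
  set v := y - x with hv
  have hmem : ∀ ζ ∈ closedBall (0 : 𝕜) 1, x + ζ • v ∈ ball x r := by
    intro ζ hζ
    rw [mem_ball_iff_norm] at hy ⊢
    rw [mem_closedBall_zero_iff] at hζ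
    rw [add_sub_cancel_left, norm_smul]
    exact (mul_le_of_le_one_left (norm_nonneg _) hζ).trans_lt hy
  have hderiv : ∀ ζ ∈ closedBall (0 : 𝕜) 1,
      HasDerivAt (fun s : 𝕜 => f (x + s • v) - s • L x v) ((L (x + ζ • v) - L x) v) ζ := by
    intro ζ hζ
    simpa using (hasDerivAt_of_hasLineDerivAt_add_smul ((hball _ (hmem ζ hζ)).1 v)).fun_sub
      ((hasDerivAt_id ζ).smul_const (L x v))
  have hbound : ∀ ζ ∈ closedBall (0 : 𝕜) 1, ‖(L (x + ζ • v) - L x) v‖ ≤ ε * ‖v‖ := fun ζ hζ =>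
    ContinuousLinearMap.le_of_opNorm_le _ (hball _ (hmem ζ hζ)).2.le v
  have := (convex_closedBall (0 : 𝕜) 1).norm_image_sub_le_of_norm_hasDerivWithin_le
    (fun ζ hζ => (hderiv ζ hζ).hasDerivWithinAt) hbound (mem_closedBall_self zero_le_one)
    (mem_closedBall_zero_iff.2 norm_one.le)
  simpa [hv, sub_right_comm] using this

theorem hasStrictFDerivAt_of_continuousOn_lineDeriv [FiniteDimensional 𝕜 E] {V : Set E}
    (hV : IsOpen V) (hf : ∀ y ∈ V, ∀ h, LineDifferentiableAt 𝕜 f y h)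
    (hc : ∀ h, ContinuousOn (fun y => lineDeriv 𝕜 f y h) V) (hx : x ∈ V) :
    HasStrictFDerivAt f (fderiv 𝕜 f x) x := by
  have hadd : ∀ y ∈ V, ∀ h k,
      lineDeriv 𝕜 f y (h + k) = lineDeriv 𝕜 f y h + lineDeriv 𝕜 f y k := fun y hy h k =>
    lineDeriv_add_of_continuousAt (eventually_of_mem (hV.mem_nhds hy) fun z hz => hf z hz h)
      (eventually_of_mem (hV.mem_nhds hy) fun z hz => hf z hz k)
      ((hc h).continuousAt (hV.mem_nhds hy)) ((hc k).continuousAt (hV.mem_nhds hy))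
  have hlinear : ∀ y ∈ V, ∃ L : E →L[𝕜] F, ∀ h, L h = lineDeriv 𝕜 f y h := fun y hy =>
    ⟨LinearMap.toContinuousLinearMap
      { toFun := lineDeriv 𝕜 f y, map_add' := hadd y hy, map_smul' := fun _ _ => lineDeriv_smul },
      fun _ => rfl⟩
  choose! L hL using hlinear
  have hLc : ContinuousOn L V :=
    continuousOn_clm_apply.2 fun h => (hc h).congr fun y hy => hL y hy h
  have hderiv : ∀ y ∈ V, HasFDerivAt f (L y) y := fun y hy =>
    hasFDerivAt_of_hasLineDerivAt
      (eventually_of_mem (hV.mem_nhds hy) fun z hz h => hL z hz h ▸ (hf z hz h).hasLineDerivAt)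
      (hLc.continuousAt (hV.mem_nhds hy))
  rw [(hderiv x hx).fderiv]
  exact hasStrictFDerivAt_of_hasFDerivAt_of_continuousAt
    (eventually_of_mem (hV.mem_nhds hx) hderiv) (hLc.continuousAt (hV.mem_nhds hx))

end LineDerivatives

section Slices

variable {E F : Type*} [NormedAddCommGroup E] [NormedSpace ℂ E] [NormedAddCommGroup F]
  [NormedSpace ℂ F] {f : E → F} {V : Set E} {x h : E}

theorem continuousOn_lineDeriv_of_lineDifferentiableAt [CompleteSpace F] (hV : IsOpen V)
    (hfc : ContinuousOn f V) (hf : ∀ y ∈ V, LineDifferentiableAt ℂ f y h) :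
    ContinuousOn (fun y => lineDeriv ℂ f y h) V := by
  intro x hx
  obtain ⟨δ, hδ, hδV⟩ := exists_eventually_mapsTo_add_smul_closedBall ℂ hV hx h
  have hdiff : ∀ᶠ y in 𝓝 x, DifferentiableOn ℂ (fun ζ : ℂ => f (y + ζ • h)) (ball 0 δ) := by
    filter_upwards [hδV] with y hy ζ hζ
    have hline := (hf _ (hy (ball_subset_closedBall hζ))).hasLineDerivAt
    exact (hasDerivAt_of_hasLineDerivAt_add_smul hline).differentiableAt.differentiableWithinAt
  have hderiv := (tendstoLocallyUniformlyOn_comp_add_smul hV hfc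
    (hδV.self_of_nhds.mono_left ball_subset_closedBall)).deriv hdiff isOpen_ball
  exact (hderiv.tendsto_at (mem_ball_self hδ)).mono_left nhdsWithin_le_nhds

/-- **Osgood's lemma**. -/
theorem hasStrictFDerivAt_of_lineDifferentiableAt [CompleteSpace F] [FiniteDimensional ℂ E]
    (hV : IsOpen V) (hfc : ContinuousOn f V) (hf : ∀ y ∈ V, ∀ h, LineDifferentiableAt ℂ f y h)
    (hx : x ∈ V) : HasStrictFDerivAt f (fderiv ℂ f x) x :=
  hasStrictFDerivAt_of_continuousOn_lineDeriv hV hf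
    (fun h => continuousOn_lineDeriv_of_lineDifferentiableAt hV hfc fun y hy => hf y hy h) hx

theorem hasStrictFDerivAt_of_differentiableOn [CompleteSpace F] [FiniteDimensional ℂ E]
    (hV : IsOpen V) (hf : DifferentiableOn ℂ f V) (hx : x ∈ V) :
    HasStrictFDerivAt f (fderiv ℂ f x) x :=
  hasStrictFDerivAt_of_lineDifferentiableAt hV hf.continuousOn
    (fun _ hy _ => (hf.differentiableAt (hV.mem_nhds hy)).lineDifferentiableAt) hx

/-- A set met by densely many complex lines of each direction in only countably many points. The
parameter `ζ` is counted rather than the point, so `h = 0` asks for `Cᶜ` to be dense. -/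
def IsSliceThin (C : Set E) : Prop :=
  ∀ h : E, Dense {y | {ζ : ℂ | y + ζ • h ∈ C}.Countable}

theorem IsSliceThin.mono {C D : Set E} (hD : IsSliceThin D) (hCD : C ⊆ D) : IsSliceThin C :=
  fun h => (hD h).mono fun _ hy => hy.mono fun _ hζ => hCD hζ

variable [CompleteSpace F] {C : Set E}

theorem IsSliceThin.lineDifferentiableAt (hC : IsSliceThin C) (hV : IsOpen V)
    (hfc : ContinuousOn f V) (hf : ∀ v ∈ V \ C, DifferentiableAt ℂ f v) (hx : x ∈ V) :
    LineDifferentiableAt ℂ f x h := by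
  -- Countable sets are removable in one variable, which settles the lines meeting `C` countably
  -- often; every other line is a limit of those.
  obtain ⟨δ, hδ, hδV⟩ := exists_eventually_mapsTo_add_smul_closedBall ℂ hV hx h
  set G := {y : E | {ζ : ℂ | y + ζ • h ∈ C}.Countable}
  have : (𝓝[G] x).NeBot := mem_closure_iff_nhdsWithin_neBot.1 (hC h x)
  have hconv := tendstoLocallyUniformlyOn_comp_add_smul hV hfc
    (hδV.self_of_nhds.mono_left ball_subset_closedBall)
  have hconvG : TendstoLocallyUniformlyOn (fun (y : E) (ζ : ℂ) => f (y + ζ • h))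
      (fun ζ => f (x + ζ • h)) (𝓝[G] x) (ball 0 δ) := fun u hu ζ hζ =>
    let ⟨t, ht, hmem⟩ := hconv u hu ζ hζ
    ⟨t, ht, hmem.filter_mono nhdsWithin_le_nhds⟩
  have hgood : ∀ᶠ y in 𝓝[G] x, DifferentiableOn ℂ (fun ζ : ℂ => f (y + ζ • h)) (ball 0 δ) := by
    filter_upwards [nhdsWithin_le_nhds hδV, self_mem_nhdsWithin] with y hy hyG
    have hline : Differentiable ℂ (fun ζ : ℂ => y + ζ • h) := by fun_prop
    have hpowerSeries := Complex.hasFPowerSeriesOnBall_of_differentiable_off_countable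
      (f := fun ζ : ℂ => f (y + ζ • h)) hyG (hfc.comp hline.continuous.continuousOn hy)
      (fun ζ hζ => (hf _ ⟨hy (ball_subset_closedBall hζ.1), hζ.2⟩).comp ζ hline.differentiableAt)
      hδ
    simpa only [eball_coe] using hpowerSeries.differentiableOn
  exact (hconvG.differentiableOn hgood isOpen_ball).differentiableAt (ball_mem_nhds _ hδ)

theorem IsSliceThin.differentiableOn [FiniteDimensional ℂ E] (hC : IsSliceThin C) (hV : IsOpen V)
    (hfc : ContinuousOn f V) (hf : ∀ v ∈ V \ C, DifferentiableAt ℂ f v) :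
    DifferentiableOn ℂ f V := fun _ hx =>
  (hasStrictFDerivAt_of_lineDifferentiableAt hV hfc
    (fun _ hy _ => hC.lineDifferentiableAt hV hfc hf hy) hx).differentiableAt.differentiableWithinAt

end Slices

section Critical

variable {E : Type*} [NormedAddCommGroup E] [NormedSpace ℂ E] {φ : E → E} {U : Set E}

/-- The zero set `Z(J_φ)` in `U` of the Jacobian determinant of `φ`. -/
def criticalSet (φ : E → E) (U : Set E) : Set E :=
  {z ∈ U | (fderiv ℂ φ z).det = 0}

variable [FiniteDimensional ℂ E]

theorem dense_compl_image_criticalSet (hφ : ∀ z ∈ U, DifferentiableAt ℂ φ z) :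
    Dense (φ '' criticalSet φ U)ᶜ := by
  let _ : MeasurableSpace E := borel E
  have : BorelSpace E := ⟨rfl⟩
  have : FiniteDimensional ℝ E := FiniteDimensional.complexToReal E
  have hnull : (MeasureTheory.Measure.addHaar : MeasureTheory.Measure E)
      (φ '' criticalSet φ U) = 0 := by
    refine MeasureTheory.addHaar_image_eq_zero_of_det_fderivWithin_eq_zero _
      (f' := fun z => (fderiv ℂ φ z).restrictScalars ℝ)
      (fun z hz => ((hφ z hz.1).hasFDerivAt.restrictScalars ℝ).hasFDerivWithinAt) fun z hz => ?_
    have hdet : LinearMap.det (fderiv ℂ φ z : E →ₗ[ℂ] E) = 0 := hz.2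
    change LinearMap.det ((fderiv ℂ φ z : E →ₗ[ℂ] E).restrictScalars ℝ) = 0
    rw [LinearMap.det_restrictScalars, hdet, Algebra.norm_zero]
  exact MeasureTheory.Measure.dense_of_ae (MeasureTheory.compl_mem_ae_iff.2 hnull)

theorem countable_fiber_of_notMem_image_criticalSet (hφ : ∀ z ∈ U, DifferentiableAt ℂ φ z) {y : E}
    (hy : y ∉ φ '' criticalSet φ U) : {z ∈ U | φ z = y}.Countable := by
  have : ProperSpace E := FiniteDimensional.proper ℂ E
  refine (HereditarilyLindelofSpace.isLindelof _).countable_of_isDiscrete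
    (IsDiscrete.of_nhdsWithin fun z ⟨hz, hzy⟩ => ?_)
  have hdet : (fderiv ℂ φ z).det ≠ 0 := fun hdet => hy ⟨z, ⟨hz, hdet⟩, hzy⟩
  have hisolated : ∀ᶠ w in 𝓝[≠] z, φ w ≠ y := (hφ z hz).hasFDerivAt.eventually_ne
    ⟨_, ((fderiv ℂ φ z).toContinuousLinearEquivOfDetNeZero hdet).antilipschitz⟩
  rw [le_pure_iff, mem_nhdsWithin_iff_eventually]
  filter_upwards [eventually_nhdsWithin_iff.1 hisolated] with w hw ⟨_, hwy⟩
  by_contra hwz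
  exact hw hwz hwy

theorem isSliceThin_image_inter_preimage_singleton (hU : IsOpen U) (hφ : DifferentiableOn ℂ φ U)
    {ℓ : Module.Dual ℂ E} (hℓ : ℓ ≠ 0) (c : ℂ) : IsSliceThin (φ '' (U ∩ ℓ ⁻¹' {c})) := by
  intro h
  obtain ⟨n, hn⟩ : ∃ n, ℓ n = 1 := LinearMap.surjective hℓ 1
  let ℓ' : E →L[ℂ] ℂ := LinearMap.toContinuousLinearMap ℓ
  let p : E → E := fun z => z - (ℓ' z - c) • n
  let Ψ : E → E := fun z => φ (p z) + (ℓ' z - c) • h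
  have hp : Differentiable ℂ p := by fun_prop
  have hΨ : ∀ z ∈ p ⁻¹' U, DifferentiableAt ℂ Ψ z := fun z hz => by
    have hφp : DifferentiableAt ℂ (fun z => φ (p z)) z :=
      (hφ.differentiableAt (hU.mem_nhds hz)).comp z (hp z)
    exact hφp.add (by fun_prop)
  refine (dense_compl_image_criticalSet hΨ).mono fun y hy => ?_
  -- If `y + ζ h = φ w` with `ℓ w = c`, then `w - ζ n` lies in the fiber of `Ψ` over `y`, and `ζ` is
  -- recovered from it through `ℓ`.
  have hfiber := countable_fiber_of_notMem_image_criticalSet hΨ hy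
  refine (hfiber.image fun z => c - ℓ' z).mono ?_
  rintro ζ ⟨w, ⟨hwU, hwc⟩, hwy⟩
  have hℓ'z : ℓ' (w - ζ • n) = c - ζ := by
    have hwc' : ℓ' w = c := hwc
    have hn' : ℓ' n = 1 := hn
    simp [hwc', hn']
  have hpz : p (w - ζ • n) = w := by simp [p, hℓ'z]
  refine ⟨w - ζ • n, ⟨?_, ?_⟩, ?_⟩
  · rwa [mem_preimage, hpz]
  · simp [Ψ, hpz, hℓ'z, hwy]
  · simp [hℓ'z]

end Critical

section LocalInverse

variable {𝕜 E E' F : Type*} [NontriviallyNormedField 𝕜] [NormedAddCommGroup E] [NormedSpace 𝕜 E]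
  [CompleteSpace E] [NormedAddCommGroup E'] [NormedSpace 𝕜 E'] [NormedAddCommGroup F]
  [NormedSpace 𝕜 F]

theorem differentiableAt_of_eventuallyEq_comp {φ : E → E'} {φ' : E ≃L[𝕜] E'} {f : E' → F}
    {g : E → F} {z : E} (hφ : HasStrictFDerivAt φ (φ' : E →L[𝕜] E') z)
    (hg : DifferentiableAt 𝕜 g z) (hgf : g =ᶠ[𝓝 z] f ∘ φ) : DifferentiableAt 𝕜 f (φ z) := by
  let ψ := hφ.localInverse φ φ' z
  have hψz : ψ (φ z) = z := hφ.localInverse_apply_image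
  have hψ : DifferentiableAt 𝕜 ψ (φ z) := hφ.to_localInverse.hasFDerivAt.differentiableAt
  have hfψ : f =ᶠ[𝓝 (φ z)] g ∘ ψ := by
    filter_upwards [hφ.eventually_right_inverse, hφ.localInverse_tendsto.eventually hgf]
      with v hv hgv
    simp only [comp_apply] at hgv ⊢
    rw [hgv, hv]
  have hgψ : DifferentiableAt 𝕜 (g ∘ ψ) (φ z) :=
    DifferentiableAt.comp (φ z) (by rwa [hψz]) hψ
  exact hgψ.congr_of_eventuallyEq hfψ

end LocalInverse

section FixedPoints

theorem exists_dual_fixedPoints_subset_preimage_singleton {K E : Type*} [Field K] [AddCommGroup E]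
    [Module K E] {σ : E →ᵃ[K] E} (hσ : σ.linear ≠ LinearMap.id) :
    ∃ ℓ : Module.Dual K E, ℓ ≠ 0 ∧ ∃ c, fixedPoints σ ⊆ ℓ ⁻¹' {c} := by
  obtain ⟨u, hu⟩ : ∃ u, u - σ.linear u ≠ 0 := by
    by_contra! hall
    exact hσ (LinearMap.ext fun u => (sub_eq_zero.1 (hall u)).symm)
  obtain ⟨ℓ, hℓ⟩ : ∃ ℓ : Module.Dual K E, ℓ (u - σ.linear u) ≠ 0 := by
    by_contra! hall
    exact hu ((Module.forall_dual_apply_eq_zero_iff K _).1 hall)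
  refine ⟨ℓ ∘ₗ (LinearMap.id - σ.linear), fun h0 => hℓ (LinearMap.congr_fun h0 u), ℓ (σ 0),
    fun z hz => ?_⟩
  have hσz : σ z = σ.linear z + σ 0 := congrFun σ.decomp z
  rw [hz.eq] at hσz
  rw [mem_preimage, mem_singleton_iff, LinearMap.comp_apply]
  exact congrArg ℓ (sub_eq_of_eq_add' hσz)

theorem det_eq_zero_of_comp_eventuallyEq {𝕜 E : Type*} [NontriviallyNormedField 𝕜]
    [NormedAddCommGroup E] [NormedSpace 𝕜 E] {φ σ : E → E} {φ' σ' : E →L[𝕜] E} {z : E}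
    (hφ : HasFDerivAt φ φ' z) (hσ : HasFDerivAt σ σ' z) (hz : IsFixedPt σ z)
    (hφσ : φ ∘ σ =ᶠ[𝓝 z] φ) (hdet : σ'.det ≠ 1) : φ'.det = 0 := by
  have hφσz : HasFDerivAt φ φ' (σ z) := by rwa [hz.eq]
  have hcomp : φ' ∘L σ' = φ' := ((hφσz.comp z hσ).congr_of_eventuallyEq hφσ.symm).unique hφ
  have hmul : φ'.det * σ'.det = φ'.det := by
    conv_rhs => rw [← hcomp]
    exact (LinearMap.det_comp _ _).symm
  by_contra hne
  exact hdet ((mul_eq_left₀ hne).1 hmul)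

end FixedPoints

theorem isQuotientMap_restrict_of_isCompact_inter_preimage {X Y : Type*} [TopologicalSpace X]
    [TopologicalSpace Y] [T2Space Y] {U : Set X} {V : Set Y} [CompactlyCoherentSpace V]
    {φ : X → Y} (hφ : ContinuousOn φ U) (hmaps : MapsTo φ U V) (hsurj : SurjOn φ U V)
    (hproper : ∀ K ⊆ V, IsCompact K → IsCompact (U ∩ φ ⁻¹' K)) :
    IsQuotientMap (hmaps.restrict φ U V) := by
  have hcont : Continuous (hmaps.restrict φ U V) := hφ.mapsToRestrict hmaps
  have hprop : IsProperMap (hmaps.restrict φ U V) := by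
    refine isProperMap_iff_isCompact_preimage.2 ⟨hcont, fun K hK => ?_⟩
    rw [Subtype.isCompact_iff]
    convert! hproper (Subtype.val '' K) (by simp) (hK.image continuous_subtype_val) using 1
    ext z
    constructor
    · rintro ⟨u, hu, rfl⟩
      exact ⟨u.2, _, hu, rfl⟩
    · rintro ⟨hz, v, hv, hvz⟩
      have hres : hmaps.restrict φ U V ⟨z, hz⟩ = v := Subtype.ext hvz.symm
      exact ⟨⟨z, hz⟩, by rwa [mem_preimage, hres], rfl⟩
  exact hprop.isClosedMap.isQuotientMap hcont ((hmaps.restrict_surjective_iff).2 hsurj)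

/-- A holomorphic map of `U` onto `V` is *2-proper* if it is proper and its fibers have one point
over the critical values and two points over the other values. -/
structure IsTwoProper {E : Type*} [NormedAddCommGroup E] [NormedSpace ℂ E] (φ : E → E)
    (U V : Set E) : Prop where
  differentiableOn : DifferentiableOn ℂ φ U
  image_eq : φ '' U = V
  isCompact_inter_preimage : ∀ K ⊆ V, IsCompact K → IsCompact (U ∩ φ ⁻¹' K)
  ncard_fiber_eq_two : ∀ v ∈ V \ φ '' criticalSet φ U, {z ∈ U | φ z = v}.ncard = 2
  ncard_fiber_eq_one : ∀ v ∈ φ '' criticalSet φ U, {z ∈ U | φ z = v}.ncard = 1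

namespace IsTwoProper

variable {E : Type*} [NormedAddCommGroup E] [NormedSpace ℂ E] {φ : E → E} {U V : Set E} {z w : E}

theorem mapsTo (hφ : IsTwoProper φ U V) : MapsTo φ U V :=
  mapsTo_iff_image_subset.2 hφ.image_eq.subset

theorem eq_of_mem_criticalSet (hφ : IsTwoProper φ U V) (hz : z ∈ criticalSet φ U) (hw : w ∈ U)
    (hwz : φ w = φ z) : w = z := by
  obtain ⟨a, ha⟩ := ncard_eq_one.1 (hφ.ncard_fiber_eq_one _ (mem_image_of_mem φ hz))
  have hwa : w ∈ ({a} : Set E) := ha ▸ ⟨hw, hwz⟩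
  have hza : z ∈ ({a} : Set E) := ha ▸ ⟨hz.1, rfl⟩
  exact hwa.trans hza.symm

variable [FiniteDimensional ℂ E]

theorem continuousOn_of_comp (hφ : IsTwoProper φ U V) (hV : IsOpen V) {Y : Type*}
    [TopologicalSpace Y] {f : E → Y} (hf : ContinuousOn (f ∘ φ) U) : ContinuousOn f V := by
  have : ProperSpace E := FiniteDimensional.proper ℂ E
  have : LocallyCompactSpace V := hV.locallyCompactSpace
  have hquot := isQuotientMap_restrict_of_isCompact_inter_preimage
    hφ.differentiableOn.continuousOn hφ.mapsTo hφ.image_eq.superset hφ.isCompact_inter_preimage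
  rw [continuousOn_iff_continuous_domRestrict, hquot.continuous_iff]
  exact hf.domRestrict

section Invariant

variable {σ : E →ᵃ[ℂ] E}

theorem mem_criticalSet_iff (hφ : IsTwoProper φ U V) (hU : IsOpen U)
    (hσ : LinearMap.det σ.linear ≠ 1) (hUσ : MapsTo σ U U) (hφσ : EqOn (φ ∘ σ) φ U) (hz : z ∈ U) :
    z ∈ criticalSet φ U ↔ IsFixedPt σ z := by
  refine ⟨fun hcrit => hφ.eq_of_mem_criticalSet hcrit (hUσ hz) (hφσ hz), fun hfix => ⟨hz, ?_⟩⟩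
  have hσ' : HasFDerivAt σ (LinearMap.toContinuousLinearMap σ.linear) z := by
    rw [σ.decomp]
    exact (LinearMap.toContinuousLinearMap σ.linear).hasFDerivAt.add_const (σ 0)
  have hnhds := hU.mem_nhds hz
  exact det_eq_zero_of_comp_eventuallyEq (hφ.differentiableOn.differentiableAt hnhds).hasFDerivAt
    hσ' hfix (eventually_of_mem hnhds hφσ) hσ

theorem eq_or_eq_of_apply_eq (hφ : IsTwoProper φ U V) (hU : IsOpen U)
    (hσ : LinearMap.det σ.linear ≠ 1) (hUσ : MapsTo σ U U) (hφσ : EqOn (φ ∘ σ) φ U) (hz : z ∈ U)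
    (hw : w ∈ U) (hwz : φ w = φ z) : w = z ∨ w = σ z := by
  by_cases hcrit : z ∈ criticalSet φ U
  · exact Or.inl (hφ.eq_of_mem_criticalSet hcrit hw hwz)
  have hregular : φ z ∈ V \ φ '' criticalSet φ U := by
    refine ⟨hφ.mapsTo hz, ?_⟩
    rintro ⟨u, hu, huz⟩
    exact hcrit (hφ.eq_of_mem_criticalSet hu hz huz.symm ▸ hu)
  have hne : z ≠ σ z := fun h => hcrit ((hφ.mem_criticalSet_iff hU hσ hUσ hφσ hz).2 h.symm)
  have hcard := hφ.ncard_fiber_eq_two _ hregular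
  have horbit : {z, σ z} ⊆ {w ∈ U | φ w = φ z} := pair_subset ⟨hz, rfl⟩ ⟨hUσ hz, hφσ hz⟩
  have hfiber : {z, σ z} = {w ∈ U | φ w = φ z} := eq_of_subset_of_ncard_le horbit
    (by rw [hcard, ncard_pair hne]) (finite_of_ncard_ne_zero (by rw [hcard]; exact two_ne_zero))
  exact hfiber.superset ⟨hw, hwz⟩

theorem isSliceThin_image_criticalSet (hφ : IsTwoProper φ U V) (hU : IsOpen U)
    (hσ : LinearMap.det σ.linear ≠ 1) (hUσ : MapsTo σ U U) (hφσ : EqOn (φ ∘ σ) φ U) :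
    IsSliceThin (φ '' criticalSet φ U) := by
  have hlinear : σ.linear ≠ LinearMap.id := fun h => hσ (h ▸ LinearMap.det_id)
  obtain ⟨ℓ, hℓ, c, hfix⟩ := exists_dual_fixedPoints_subset_preimage_singleton hlinear
  exact (isSliceThin_image_inter_preimage_singleton hU hφ.differentiableOn hℓ c).mono <|
    image_mono fun z hz => ⟨hz.1, hfix ((hφ.mem_criticalSet_iff hU hσ hUσ hφσ hz.1).1 hz)⟩

end Invariant

variable {F : Type*} [NormedAddCommGroup F] [NormedSpace ℂ F]

theorem differentiableAt_of_comp (hφ : IsTwoProper φ U V) (hU : IsOpen U) {f : E → F}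
    (hf : DifferentiableOn ℂ (f ∘ φ) U) {v : E} (hv : v ∈ V \ φ '' criticalSet φ U) :
    DifferentiableAt ℂ f v := by
  have : CompleteSpace E := FiniteDimensional.complete ℂ E
  obtain ⟨z, hz, rfl⟩ := hφ.image_eq.superset hv.1
  have hdet : (fderiv ℂ φ z).det ≠ 0 := fun hdet => hv.2 (mem_image_of_mem φ ⟨hz, hdet⟩)
  refine differentiableAt_of_eventuallyEq_comp
    (φ' := (fderiv ℂ φ z).toContinuousLinearEquivOfDetNeZero hdet) ?_
    (hf.differentiableAt (hU.mem_nhds hz)) .rfl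
  exact hasStrictFDerivAt_of_differentiableOn hU hφ.differentiableOn hz

theorem differentiableOn_of_comp [CompleteSpace F] (hφ : IsTwoProper φ U V) (hU : IsOpen U)
    (hV : IsOpen V) (hthin : IsSliceThin (φ '' criticalSet φ U)) {f : E → F}
    (hf : DifferentiableOn ℂ (f ∘ φ) U) : DifferentiableOn ℂ f V :=
  hthin.differentiableOn hV (hφ.continuousOn_of_comp hV hf.continuousOn) fun _ =>
    hφ.differentiableAt_of_comp hU hf

end IsTwoProper

theorem stmt_7_general {E F : Type*} [NormedAddCommGroup E] [NormedSpace ℂ E]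
    [FiniteDimensional ℂ E] [NormedAddCommGroup F] [NormedSpace ℂ F] [CompleteSpace F]
    {σ : E →ᵃ[ℂ] E} (hσ : LinearMap.det σ.linear ≠ 1) {U V : Set E} (hU : IsOpen U)
    (hV : IsOpen V) {φ : E → E} (hφ : IsTwoProper φ U V) (hUσ : MapsTo σ U U)
    (hφσ : EqOn (φ ∘ σ) φ U) {g : E → F} (hg : DifferentiableOn ℂ g U) :
    EqOn (g ∘ σ) g U ↔ ∃ f : E → F, DifferentiableOn ℂ f V ∧ EqOn g (f ∘ φ) U := by
  constructor
  · intro hgσ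
    let f : E → F := g ∘ invFunOn φ U
    have hgf : EqOn g (f ∘ φ) U := by
      intro z hz
      have hex : ∃ w ∈ U, φ w = φ z := ⟨z, hz, rfl⟩
      rcases hφ.eq_or_eq_of_apply_eq hU hσ hUσ hφσ hz (invFunOn_mem hex) (invFunOn_eq hex)
        with hw | hw
      · exact congrArg g hw.symm
      · exact (hgσ hz).symm.trans (congrArg g hw.symm)
    exact ⟨f, hφ.differentiableOn_of_comp hU hV
      (hφ.isSliceThin_image_criticalSet hU hσ hUσ hφσ) (hg.congr hgf.symm), hgf⟩
  · rintro ⟨f, -, hgf⟩ z hz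
    calc g (σ z) = f (φ (σ z)) := hgf (hUσ hz)
      _ = f (φ z) := congrArg f (hφσ hz)
      _ = g z := (hgf hz).symm

end

/-- Waring–Lagrange for σ-invariant holomorphic functions:
for a σ-invariant 2-proper holomorphic map `φ : U → V` (σ an affine-linear
involution with `J_σ = -1`), a holomorphic `g` on `U` is σ-invariant iff it
factors holomorphically through `φ`. -/
theorem stmt_7 (d : ℕ) (hd : 1 ≤ d)
    (σ : EuclideanSpace ℂ (Fin d) → EuclideanSpace ℂ (Fin d))
    (A : EuclideanSpace ℂ (Fin d) →ₗ[ℂ] EuclideanSpace ℂ (Fin d))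
    (B : EuclideanSpace ℂ (Fin d))
    (hσ : ∀ z, σ z = A z + B)
    (hσinv : ∀ z, σ (σ z) = z)
    (hdetA : LinearMap.det A = -1)
    (U V : Set (EuclideanSpace ℂ (Fin d)))
    (hUopen : IsOpen U) (hUconn : IsConnected U)
    (hVopen : IsOpen V) (hVconn : IsConnected V)
    (hUinv : σ '' U ⊆ U)
    (φ : EuclideanSpace ℂ (Fin d) → EuclideanSpace ℂ (Fin d))
    (hφholo : DifferentiableOn ℂ φ U)
    (hφmaps : Set.MapsTo φ U V)
    (hφsurj : φ '' U = V)
    (hφproper : ∀ K : Set (EuclideanSpace ℂ (Fin d)), K ⊆ V → IsCompact K →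
      IsCompact {z ∈ U | φ z ∈ K})
    (hfib2 : ∀ v ∈ V \ (φ '' {z ∈ U | (fderiv ℂ φ z).det = 0}),
      Nat.card {z ∈ U | φ z = v} = 2)
    (hfib1 : ∀ v ∈ φ '' {z ∈ U | (fderiv ℂ φ z).det = 0},
      Nat.card {z ∈ U | φ z = v} = 1)
    (hφσ : ∀ z ∈ U, φ (σ z) = φ z)
    (g : EuclideanSpace ℂ (Fin d) → ℂ)
    (hg : DifferentiableOn ℂ g U) :
    (∀ z ∈ U, g (σ z) = g z) ↔
    (∃ f : EuclideanSpace ℂ (Fin d) → ℂ,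
      DifferentiableOn ℂ f V ∧ ∀ z ∈ U, g z = f (φ z)) := by
  let τ : EuclideanSpace ℂ (Fin d) →ᵃ[ℂ] EuclideanSpace ℂ (Fin d) :=
    ⟨σ, A, fun z v => by simp [hσ, add_assoc]⟩
  have hτ : LinearMap.det τ.linear ≠ 1 := hdetA.trans_ne (by norm_num)
  exact stmt_7_general hτ hUopen hVopen ⟨hφholo, hφsurj, hφproper, hfib2, hfib1⟩
    (Set.mapsTo_iff_image_subset.2 hUinv) hφσ hg
end

section
/- Let σ : ℂ^d → ℂ^d be an affine-linear involution with J_σ = −1, let U, V be domains in ℂ^d, and let φ : U → V be a σ-invariant 2-proper holomorphic map whose Jacobian J_φ agrees on U with an affine-linear function. Then for every function g holomorphic on U satisfying g(σ(z)) = −g(z) for all z ∈ U, there exists a function f holomorphic on V such that g(z) = J_φ(z)·f(φ(z)) for all z ∈ U. -/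
/-!
Write `j` for the affine function `J_φ`. Differentiating `φ ∘ σ = φ` gives `j ∘ σ = -j`; since the
fibres through critical points are singletons, `σ` fixes the zeros of `j`, and the fibres of `φ`
are exactly the orbits of `σ`. Near a zero of `j`, the map `σ` is therefore a reflection
`z ↦ z - 2 j(z) e`, whose quotient map `F` squares the coordinate `j` and keeps the complementary
ones. By Cauchy's formula in that coordinate an odd function is `j · (h ∘ F)` with `h` holomorphic,
and, applying this to `j φ`, also `φ = Φ ∘ F` with `Φ` holomorphic. As `J_F = 2 j` and `J_φ = j`,
the chain rule forces `J_Φ = 1/2`: this is where the affine Jacobian enters, since it makes `Φ`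
locally invertible. So `g / j` is locally a holomorphic function of `φ`, both near critical points
and, by the inverse function theorem, elsewhere; being `σ`-invariant, it descends along `φ`.
-/

open Filter Function Metric Topology

section SeveralVariables

variable {E G : Type*} [NormedAddCommGroup E] [NormedSpace ℂ E]
  [NormedAddCommGroup G] [NormedSpace ℂ G]

theorem exists_closedBall_eventually_forall {X Y : Type*} [TopologicalSpace X] [PseudoMetricSpace Y]
    {x₀ : X} {y₀ : Y} {p : X × Y → Prop} (h : ∀ᶠ q in 𝓝 (x₀, y₀), p q) :
    ∃ r > 0, ∀ᶠ x in 𝓝 x₀, ∀ y ∈ closedBall y₀ r, p (x, y) := by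
  obtain ⟨P, hP, Q, hQ, hPQ⟩ := eventually_prod_iff.1 (nhds_prod_eq (x := x₀) (y := y₀) ▸ h)
  obtain ⟨r, hr, hrQ⟩ := nhds_basis_closedBall.eventually_iff.1 hQ
  exact ⟨r, hr, hP.mono fun x hx y hy => hPQ hx (hrQ hy)⟩

/-- Cauchy's estimate bounds the variation of a directional derivative by that of `f` on circles in
the complex lines of that direction. -/
theorem continuousAt_fderiv_apply {f : E → G} {z₀ : E}
    (hf : ∀ᶠ z in 𝓝 z₀, DifferentiableAt ℂ f z) (v : E) :
    ContinuousAt (fun z => fderiv ℂ f z v) z₀ := by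
  have hline : Tendsto (fun p : E × ℂ => p.1 + p.2 • v) (𝓝 (z₀, 0)) (𝓝 z₀) :=
    Continuous.tendsto' (by fun_prop) _ _ (by simp)
  obtain ⟨r, hr, hfr⟩ := exists_closedBall_eventually_forall (hline.eventually hf)
  have hderiv : ∀ z, ∀ ζ : ℂ, DifferentiableAt ℂ f (z + ζ • v) →
      HasDerivAt (fun ζ => f (z + ζ • v)) (fderiv ℂ f (z + ζ • v) v) ζ := fun z ζ h =>
    h.hasFDerivAt.comp_hasDerivAt ζ
      (by simpa using ((hasDerivAt_id ζ).smul_const v).const_add z)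
  rw [Metric.continuousAt_iff']
  intro ε hε
  have hclose : ∀ᶠ z in 𝓝 z₀, ∀ ζ ∈ sphere (0 : ℂ) r,
      ‖f (z + ζ • v) - f (z₀ + ζ • v)‖ < ε / 2 * r := by
    refine (isCompact_sphere 0 r).eventually_forall_of_forall_eventually fun ζ hζ => ?_
    have hfζ : ContinuousAt f (z₀ + ζ • v) :=
      (hfr.self_of_nhds ζ (sphere_subset_closedBall hζ)).continuousAt
    have hdiff : ContinuousAt
        (fun p : E × ℂ => ‖f (p.1 + p.2 • v) - f (z₀ + p.2 • v)‖) (z₀, ζ) := by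
      refine (ContinuousAt.sub ?_ ?_).norm <;>
        exact ContinuousAt.comp (g := f) hfζ (by fun_prop)
    exact hdiff.eventually_lt continuousAt_const (by simpa using by positivity)
  filter_upwards [hfr, hclose] with z hz hzε
  have hd : ∀ ζ ∈ closedBall (0 : ℂ) r, HasDerivAt (fun ζ => f (z + ζ • v) - f (z₀ + ζ • v))
      (fderiv ℂ f (z + ζ • v) v - fderiv ℂ f (z₀ + ζ • v) v) ζ := fun ζ hζ =>
    (hderiv z ζ (hz ζ hζ)).sub (hderiv z₀ ζ (hfr.self_of_nhds ζ hζ))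
  have hcauchy := Complex.norm_deriv_le_of_forall_mem_sphere_norm_le hr
    (DifferentiableOn.diffContOnCl_ball (U := closedBall (0 : ℂ) r)
      (fun ζ hζ => (hd ζ hζ).differentiableAt.differentiableWithinAt) subset_rfl)
    fun ζ hζ => (hzε ζ hζ).le
  rw [(hd 0 (mem_closedBall_self hr.le)).deriv, mul_div_cancel_right₀ _ hr.ne'] at hcauchy
  simp only [zero_smul, add_zero] at hcauchy
  rw [dist_eq_norm]
  linarith

theorem contDiffAt_one_iff_eventually_differentiableAt [FiniteDimensional ℂ E] {f : E → G}
    {z₀ : E} : ContDiffAt ℂ 1 f z₀ ↔ ∀ᶠ z in 𝓝 z₀, DifferentiableAt ℂ f z := by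
  refine ⟨fun h => (h.eventually (by simp)).mono fun z hz => hz.differentiableAt one_ne_zero,
    fun h => contDiffAt_one_iff.2 ⟨fderiv ℂ f, {z | ∀ᶠ w in 𝓝 z, DifferentiableAt ℂ f w},
      h.eventually_nhds, ?_, fun z hz => hz.self_of_nhds.hasFDerivAt⟩⟩
  exact continuousOn_clm_apply.2 fun v z hz => (continuousAt_fderiv_apply hz v).continuousWithinAt

end SeveralVariables

section Parametric

variable {𝕜 E G : Type*} [RCLike 𝕜] [NormedAddCommGroup E] [NormedSpace 𝕜 E]
  [NormedAddCommGroup G] [NormedSpace ℝ G] [NormedSpace 𝕜 G]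

theorem hasFDerivAt_intervalIntegral_of_continuousOn [ProperSpace E]
    {F : E → ℝ → G} {F' : E → ℝ → E →L[𝕜] G} {x₀ : E} {s : Set E} {a b : ℝ} (hs : s ∈ 𝓝 x₀)
    (hF : ∀ x ∈ s, ContinuousOn (F x) (Set.uIcc a b))
    (hF' : ContinuousOn (uncurry F') (s ×ˢ Set.uIcc a b))
    (hderiv : ∀ x ∈ s, ∀ t ∈ Set.uIcc a b, HasFDerivAt (F · t) (F' x t) x) :
    HasFDerivAt (fun x => ∫ t in a..b, F x t) (∫ t in a..b, F' x₀ t) x₀ := by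
  obtain ⟨r, hr, hrs⟩ := nhds_basis_closedBall.mem_iff.1 hs
  obtain ⟨C, hC⟩ := ((isCompact_closedBall x₀ r).prod isCompact_uIcc).exists_bound_of_continuousOn
    (hF'.mono (Set.prod_mono_left hrs))
  have hF'₀ : ContinuousOn (F' x₀) (Set.uIcc a b) :=
    hF'.comp (f := fun t => (x₀, t)) (by fun_prop) fun t ht => ⟨mem_of_mem_nhds hs, ht⟩
  refine intervalIntegral.hasFDerivAt_integral_of_dominated_of_fderiv_le
    (bound := fun _ => C) (closedBall_mem_nhds x₀ hr) ?_
    (hF x₀ (mem_of_mem_nhds hs)).intervalIntegrable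
    hF'₀.intervalIntegrable.def'.aestronglyMeasurable ?_ intervalIntegrable_const ?_
  · filter_upwards [hs] with x hx
    exact (hF x hx).intervalIntegrable.def'.aestronglyMeasurable
  · exact .of_forall fun t ht x hx => hC (x, t) ⟨hx, Set.uIoc_subset_uIcc ht⟩
  · exact .of_forall fun t ht x hx => hderiv x (hrs hx) t (Set.uIoc_subset_uIcc ht)

end Parametric

section CircleIntegral

variable {E G : Type*} [NormedAddCommGroup E] [NormedSpace ℂ E]
  [NormedAddCommGroup G] [NormedSpace ℂ G]

theorem contDiffAt_one_circleIntegral [FiniteDimensional ℂ E] {K : E × ℂ → G} {c : ℂ} {r : ℝ}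
    {x₀ : E} (hr : 0 ≤ r) (hK : ∀ ζ ∈ sphere c r, ContDiffAt ℂ 1 K (x₀, ζ)) :
    ContDiffAt ℂ 1 (fun x => ∮ ζ in C(c, r), K (x, ζ)) x₀ := by
  have : ProperSpace E := FiniteDimensional.proper ℂ E
  rw [contDiffAt_one_iff_eventually_differentiableAt]
  have hnear : ∀ᶠ x in 𝓝 x₀, ∀ ζ ∈ sphere c r, ContDiffAt ℂ 1 K (x, ζ) :=
    (isCompact_sphere c r).eventually_forall_of_forall_eventually fun ζ hζ =>
      (hK ζ hζ).eventually (by simp)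
  filter_upwards [hnear.eventually_nhds] with x₁ hx₁
  have hsphere : ∀ θ, circleMap c r θ ∈ sphere c r := circleMap_mem_sphere c hr
  refine (hasFDerivAt_intervalIntegral_of_continuousOn (𝕜 := ℂ) hx₁
    (F' := fun x θ => deriv (circleMap c r) θ •
      (fderiv ℂ K (x, circleMap c r θ)).comp (.inl ℂ E ℂ)) ?_ ?_ ?_).differentiableAt
  · intro x hx θ _
    simp only [deriv_circleMap]
    have hKθ : ContinuousAt K (x, circleMap c r θ) := (hx _ (hsphere θ)).continuousAt
    refine ContinuousAt.continuousWithinAt (ContinuousAt.smul ?_ ?_)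
    · fun_prop
    · exact ContinuousAt.comp (g := K) hKθ (by fun_prop)
  · rintro ⟨x, θ⟩ ⟨hx, -⟩
    simp only [uncurry_def, deriv_circleMap]
    have hKθ : ContinuousAt (fderiv ℂ K) (x, circleMap c r θ) :=
      (hx _ (hsphere θ)).continuousAt_fderiv one_ne_zero
    refine ContinuousAt.continuousWithinAt (ContinuousAt.fun_smul ?_ ?_)
    · fun_prop
    · exact (ContinuousAt.comp (g := fderiv ℂ K) (f := fun p : E × ℝ => (p.1, circleMap c r p.2))
        hKθ (by fun_prop)).clm_comp continuousAt_const
  · intro x hx θ _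
    exact (((hx _ (hsphere θ)).differentiableAt one_ne_zero).hasFDerivAt.comp x
      (hasFDerivAt_prodMk_left x _)).const_smul _

theorem sub_neg_eq_smul_circleIntegral [CompleteSpace G] {γ : ℂ → G} {r : ℝ} {x : ℂ}
    (hγ : DifferentiableOn ℂ γ (closedBall 0 r)) (hx : ‖x‖ < r) :
    γ x - γ (-x) =
      (2 * x) • (2 * Real.pi * Complex.I : ℂ)⁻¹ • ∮ ζ in C(0, r), (ζ ^ 2 - x ^ 2)⁻¹ • γ ζ := by
  have hr : 0 ≤ r := (norm_nonneg x).trans hx.le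
  have hne : ∀ w : ℂ, ‖w‖ < r → ∀ ζ ∈ sphere (0 : ℂ) r, ζ - w ≠ 0 := by
    rintro w hw ζ hζ h
    rw [← sub_eq_zero.1 h, mem_sphere_zero_iff_norm.1 hζ] at hw
    exact hw.false
  have hint : ∀ w : ℂ, ‖w‖ < r → CircleIntegrable (fun ζ => (ζ - w)⁻¹ • γ ζ) 0 r := fun w hw =>
    (ContinuousOn.smul (.inv₀ (by fun_prop) (hne w hw))
      (hγ.continuousOn.mono sphere_subset_closedBall)).circleIntegrable hr
  have hcauchy : ∀ w : ℂ, ‖w‖ < r →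
      ∮ ζ in C(0, r), (ζ - w)⁻¹ • γ ζ = (2 * Real.pi * Complex.I : ℂ) • γ w := fun w hw =>
    hγ.circleIntegral_sub_inv_smul (by simpa using hw)
  have hx' : ‖-x‖ < r := by rwa [norm_neg]
  calc γ x - γ (-x)
      = (2 * Real.pi * Complex.I : ℂ)⁻¹ •
          ∮ ζ in C(0, r), ((ζ - x)⁻¹ • γ ζ - (ζ - -x)⁻¹ • γ ζ) := by
        rw [circleIntegral.integral_sub (hint x hx) (hint (-x) hx'), hcauchy x hx,
          hcauchy (-x) hx', ← smul_sub, inv_smul_smul₀ Complex.two_pi_I_ne_zero]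
    _ = (2 * Real.pi * Complex.I : ℂ)⁻¹ •
          ∮ ζ in C(0, r), (2 * x) • (ζ ^ 2 - x ^ 2)⁻¹ • γ ζ := by
        congr 1
        refine circleIntegral.integral_congr hr fun ζ hζ => ?_
        have h₁ : ζ - x ≠ 0 := hne x hx ζ hζ
        have h₂ : ζ + x ≠ 0 := by simpa using hne (-x) hx' ζ hζ
        simp only [← sub_smul, smul_smul, sub_neg_eq_add, sq_sub_sq]
        congr 1
        field_simp
        ring
    _ = _ := by rw [circleIntegral.integral_smul, smul_comm]

end CircleIntegral

section Coordinate

variable {𝕜 E F : Type*} [NontriviallyNormedField 𝕜] [NormedAddCommGroup E] [NormedSpace 𝕜 E]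
  [NormedAddCommGroup F] [NormedSpace 𝕜 F] {j : E →ᴬ[𝕜] 𝕜} {e z₀ : E}

/-- The translate of `z` along `e` at which the affine coordinate `j` takes the value `t`; this
reading requires `j.contLinear e = 1`. -/
def coordUpdate (j : E →ᴬ[𝕜] 𝕜) (e z : E) (t : 𝕜) : E := z + (t - j z) • e

/-- The affine reflection along `e` in the hyperplane `j = 0`, where `j.contLinear e = 1`. -/
def coordReflection (j : E →ᴬ[𝕜] 𝕜) (e z : E) : E := coordUpdate j e z (-j z)

/-- The quotient map of `coordReflection j e`: it squares the coordinate `j` and keeps the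
complementary ones. -/
def coordFold (j : E →ᴬ[𝕜] 𝕜) (e z : E) : E := coordUpdate j e z (j z ^ 2)

theorem apply_coordUpdate (he : j.contLinear e = 1) (z : E) (t : 𝕜) :
    j (coordUpdate j e z t) = t := by
  have h := j.map_vadd z ((t - j z) • e)
  simp only [vadd_eq_add, map_smul, he, smul_eq_mul, mul_one, sub_add_cancel] at h
  rwa [coordUpdate, add_comm]

theorem coordUpdate_coordUpdate (he : j.contLinear e = 1) (z : E) (s t : 𝕜) :
    coordUpdate j e (coordUpdate j e z s) t = coordUpdate j e z t := by
  rw [coordUpdate, apply_coordUpdate he, coordUpdate, coordUpdate]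
  module

theorem coordUpdate_of_apply_eq {z : E} {t : 𝕜} (h : j z = t) : coordUpdate j e z t = z := by
  simp [coordUpdate, h]

theorem coordFold_of_apply_eq_zero {z : E} (h : j z = 0) : coordFold j e z = z :=
  coordUpdate_of_apply_eq (by simp [h])

theorem contDiff_coordUpdate {n : WithTop ℕ∞} :
    ContDiff 𝕜 n fun p : E × 𝕜 => coordUpdate j e p.1 p.2 :=
  contDiff_fst.add ((contDiff_snd.sub (j.contDiff.comp contDiff_fst)).smul contDiff_const)

theorem tendsto_coordUpdate (hz₀ : j z₀ = 0) :
    Tendsto (fun p : E × 𝕜 => coordUpdate j e p.1 p.2) (𝓝 (z₀, 0)) (𝓝 z₀) :=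
  (contDiff_coordUpdate (n := 0)).continuous.tendsto' _ _ (coordUpdate_of_apply_eq hz₀)

theorem tendsto_coordFold (hz₀ : j z₀ = 0) : Tendsto (coordFold j e) (𝓝 z₀) (𝓝 z₀) :=
  Continuous.tendsto' (by unfold coordFold coordUpdate; fun_prop) _ _
    (coordFold_of_apply_eq_zero hz₀)

theorem nhds_le_map_coordFold [IsAlgClosed 𝕜] (he : j.contLinear e = 1) (hz₀ : j z₀ = 0) :
    𝓝 z₀ ≤ map (coordFold j e) (𝓝 z₀) := by
  intro s hs
  obtain ⟨r, hr, hrs⟩ :=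
    exists_closedBall_eventually_forall ((tendsto_coordUpdate hz₀).eventually hs)
  have hsmall : ∀ᶠ w in 𝓝 z₀, ‖j w‖ < r ^ 2 :=
    (j.continuous.norm.tendsto' z₀ 0 (by simp [hz₀])).eventually_lt_const (by positivity)
  filter_upwards [hrs, hsmall] with w hw hwr
  obtain ⟨t, ht⟩ := IsAlgClosed.exists_pow_nat_eq (j w) two_pos
  have htr : ‖t‖ < r := lt_of_pow_lt_pow_left₀ 2 hr.le (by rwa [← norm_pow, ht])
  have hfold : coordFold j e (coordUpdate j e w t) = w := by
    rw [coordFold, apply_coordUpdate he, coordUpdate_coordUpdate he,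
      coordUpdate_of_apply_eq ht.symm]
  have hmem : coordFold j e (coordUpdate j e w t) ∈ s := hw t (by simpa using htr.le)
  rwa [hfold] at hmem

theorem frequently_apply_ne_zero (hj : j ≠ 0) (z₀ : E) : ∃ᶠ z in 𝓝 z₀, j z ≠ 0 := by
  intro h
  have hzero : j =ᶠ[𝓝 z₀] fun _ => 0 := h.mono fun z hz => not_not.1 hz
  have hlin : j.contLinear = 0 :=
    j.hasFDerivAt.unique ((hasFDerivAt_const 0 z₀).congr_of_eventuallyEq hzero)
  refine hj (ContinuousAffineMap.ext fun z => ?_)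
  simpa [hlin, hzero.self_of_nhds, eq_comm] using j.contLinear_map_vsub z z₀

theorem eq_of_eventually_smul_eq_smul (hj : j ≠ 0) {a b : E → F} (ha : ContinuousAt a z₀)
    (hb : ContinuousAt b z₀) (hab : ∀ᶠ z in 𝓝 z₀, j z • a z = j z • b z) : a z₀ = b z₀ :=
  tendsto_nhds_unique_of_frequently_eq ha hb <|
    ((frequently_apply_ne_zero hj z₀).and_eventually hab).mono fun _ hz =>
      smul_right_injective F hz.1 hz.2

theorem det_fderiv_comp {f φ : E → E} {z : E} (hφ : DifferentiableAt 𝕜 φ (f z))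
    (hf : DifferentiableAt 𝕜 f z) :
    (fderiv 𝕜 (φ ∘ f) z).det = (fderiv 𝕜 φ (f z)).det * (fderiv 𝕜 f z).det := by
  rw [fderiv_comp z hφ hf]
  exact LinearMap.det_comp (fderiv 𝕜 φ (f z) : E →ₗ[𝕜] E) (fderiv 𝕜 f z : E →ₗ[𝕜] E)

theorem det_fderiv_of_comp_eventuallyEq {φ : E → E} {σ : E →ᴬ[𝕜] E} {z : E}
    (hφ : DifferentiableAt 𝕜 φ (σ z)) (hφσ : φ ∘ σ =ᶠ[𝓝 z] φ) :
    (fderiv 𝕜 φ z).det = (fderiv 𝕜 φ (σ z)).det * σ.contLinear.det := by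
  rw [← hφσ.fderiv_eq, det_fderiv_comp hφ σ.differentiableAt, σ.fderiv]

theorem det_id_add_smulRight [FiniteDimensional 𝕜 E] (l : E →L[𝕜] 𝕜) (e : E) :
    (ContinuousLinearMap.id 𝕜 E + l.smulRight e).det = 1 + l e := by
  have h : ((ContinuousLinearMap.id 𝕜 E + l.smulRight e : E →L[𝕜] E) : E →ₗ[𝕜] E) =
      LinearMap.transvection (l : E →ₗ[𝕜] 𝕜) e := by
    ext v
    simp [LinearMap.transvection.apply]
  rw [ContinuousLinearMap.det, h, LinearMap.transvection.det, ContinuousLinearMap.coe_coe]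

theorem hasFDerivAt_coordFold (z : E) : HasFDerivAt (coordFold j e)
    (ContinuousLinearMap.id 𝕜 E + ((2 * j z - 1) • j.contLinear).smulRight e) z := by
  have hj : HasFDerivAt j j.contLinear z := j.hasFDerivAt
  refine ((hasFDerivAt_id z).add (((hj.pow 2).sub hj).smul_const e)).congr_fderiv ?_
  ext v
  simp [sub_mul]

theorem det_fderiv_coordFold [FiniteDimensional 𝕜 E] (he : j.contLinear e = 1) (z : E) :
    (fderiv 𝕜 (coordFold j e) z).det = 2 * j z := by
  rw [(hasFDerivAt_coordFold z).fderiv, det_id_add_smulRight]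
  simp [he]

/-- Differentiate `σ ∘ π = π`, where `π` is the projection onto the hyperplane `j = 0` along `e`. -/
theorem contLinear_eq_id_add_smulRight_of_fixed {σ : E →ᴬ[𝕜] E} (he : j.contLinear e = 1)
    (hz₀ : j z₀ = 0) (hfix : ∀ᶠ z in 𝓝 z₀, j z = 0 → σ z = z) :
    σ.contLinear =
      ContinuousLinearMap.id 𝕜 E + j.contLinear.smulRight (σ.contLinear e - e) := by
  have hproj : Tendsto (coordUpdate j e · 0) (𝓝 z₀) (𝓝 z₀) :=
    Continuous.tendsto' (by unfold coordUpdate; fun_prop) _ _ (coordUpdate_of_apply_eq hz₀)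
  have hproj' : HasFDerivAt (coordUpdate j e · 0)
      (ContinuousLinearMap.id 𝕜 E + (-j.contLinear).smulRight e) z₀ :=
    (hasFDerivAt_id z₀).add ((j.hasFDerivAt.const_sub 0).smul_const e)
  have hfixproj : (fun z => σ (coordUpdate j e z 0)) =ᶠ[𝓝 z₀] (coordUpdate j e · 0) :=
    (hproj.eventually hfix).mono fun z hz => hz (apply_coordUpdate he z 0)
  have hlin := (hproj'.congr_of_eventuallyEq hfixproj).unique (σ.hasFDerivAt.comp z₀ hproj')
  ext v
  have hv := DFunLike.congr_fun hlin v
  simp only [add_apply, ContinuousLinearMap.comp_apply, ContinuousLinearMap.smulRight_apply,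
    neg_apply, ContinuousLinearMap.id_apply, map_add, map_smul] at hv ⊢
  linear_combination (norm := module) -hv

theorem contLinear_ne_zero_of_fixed [CharZero 𝕜] {σ : E →ᴬ[𝕜] E} (hσ : σ.contLinear.det = -1)
    (hz₀ : j z₀ = 0) (hfix : ∀ᶠ z in 𝓝 z₀, j z = 0 → σ z = z) : j.contLinear ≠ 0 := by
  intro hj
  have hconst : ∀ z, j z = 0 := fun z => by
    simpa [hj, hz₀, eq_comm] using j.contLinear_map_vsub z z₀
  have hid : σ.contLinear = ContinuousLinearMap.id 𝕜 E :=
    σ.hasFDerivAt.unique ((hasFDerivAt_id z₀).congr_of_eventuallyEq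
      (hfix.mono fun z hz => hz (hconst z)))
  have hone : (1 : 𝕜) = -1 := by
    rw [← hσ, hid]
    exact LinearMap.det_id.symm
  norm_num at hone

theorem exists_eq_coordReflection [FiniteDimensional 𝕜 E] [CharZero 𝕜] {σ : E →ᴬ[𝕜] E}
    (hσ : σ.contLinear.det = -1) (hz₀ : j z₀ = 0)
    (hfix : ∀ᶠ z in 𝓝 z₀, j z = 0 → σ z = z) :
    ∃ e, j.contLinear e = 1 ∧ ∀ z, σ z = coordReflection j e z := by
  obtain ⟨e₀, he₀⟩ : ∃ e₀, j.contLinear e₀ = 1 :=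
    LinearMap.surjective (f := (j.contLinear : E →ₗ[𝕜] 𝕜))
      (by exact_mod_cast contLinear_ne_zero_of_fixed hσ hz₀ hfix) 1
  have hσlin := contLinear_eq_id_add_smulRight_of_fixed he₀ hz₀ hfix
  have hu : j.contLinear (σ.contLinear e₀ - e₀) = -2 := by
    rw [hσlin, det_id_add_smulRight] at hσ
    linear_combination hσ
  refine ⟨-(1 / 2 : 𝕜) • (σ.contLinear e₀ - e₀), by rw [map_smul, hu]; norm_num, fun z => ?_⟩
  have hσz := σ.map_vadd z₀ (z - z₀)
  have hjz := j.contLinear_map_vsub z z₀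
  simp only [vadd_eq_add, vsub_eq_sub, sub_add_cancel, hz₀, sub_zero] at hσz hjz
  rw [hσz, hfix.self_of_nhds hz₀, coordReflection, coordUpdate]
  nth_rewrite 1 [hσlin]
  simp only [add_apply, ContinuousLinearMap.smulRight_apply, ContinuousLinearMap.id_apply, hjz]
  module

end Coordinate

section Inverse

variable {𝕜 E G : Type*} [RCLike 𝕜] [NormedAddCommGroup E] [NormedSpace 𝕜 E]
  [FiniteDimensional 𝕜 E] [NormedAddCommGroup G] [NormedSpace 𝕜 G] {Φ : E → E} {p : E}

theorem map_nhds_eq_of_det_fderiv_ne_zero (hΦ : ContDiffAt 𝕜 1 Φ p)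
    (hdet : (fderiv 𝕜 Φ p).det ≠ 0) : map Φ (𝓝 p) = 𝓝 (Φ p) := by
  have : CompleteSpace E := FiniteDimensional.complete 𝕜 E
  exact HasStrictFDerivAt.map_nhds_eq_of_equiv (f := Φ)
    (f' := (fderiv 𝕜 Φ p).toContinuousLinearEquivOfDetNeZero hdet)
    (hΦ.hasStrictFDerivAt one_ne_zero)

theorem exists_comp_eventuallyEq_of_det_fderiv_ne_zero (hΦ : ContDiffAt 𝕜 1 Φ p)
    (hdet : (fderiv 𝕜 Φ p).det ≠ 0) {h : E → G} (hh : ContDiffAt 𝕜 1 h p) :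
    ∃ q : E → G, ContDiffAt 𝕜 1 q (Φ p) ∧ q ∘ Φ =ᶠ[𝓝 p] h := by
  have : CompleteSpace E := FiniteDimensional.complete 𝕜 E
  have hΦ' : HasStrictFDerivAt Φ
      ((fderiv 𝕜 Φ p).toContinuousLinearEquivOfDetNeZero hdet : E →L[𝕜] E) p :=
    hΦ.hasStrictFDerivAt one_ne_zero
  refine ⟨h ∘ hΦ.localInverse hΦ'.hasFDerivAt one_ne_zero,
    ContDiffAt.comp _ ?_ (hΦ.to_localInverse hΦ'.hasFDerivAt one_ne_zero), ?_⟩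
  · rwa [hΦ.localInverse_apply_image]
  · exact hΦ'.eventually_left_inverse.mono fun z hz => congrArg h hz

end Inverse

section Even

variable {E G : Type*} [NormedAddCommGroup E] [NormedSpace ℂ E] [FiniteDimensional ℂ E]
  [NormedAddCommGroup G] [NormedSpace ℂ G] {j : E →ᴬ[ℂ] ℂ} {e z₀ : E}

/-- The averaged Cauchy kernel `j(z) / (ζ² - j(z)²)` depends on `z` through `j(z)²` only, apart from
the factor `j(z)`. -/
theorem exists_eventually_eq_smul_comp_coordFold [CompleteSpace G] {g : E → G}
    (he : j.contLinear e = 1) (hz₀ : j z₀ = 0) (hg : ContDiffAt ℂ 1 g z₀)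
    (hodd : ∀ᶠ z in 𝓝 z₀, g (coordReflection j e z) = -g z) :
    ∃ h : E → G, ContDiffAt ℂ 1 h z₀ ∧ ∀ᶠ z in 𝓝 z₀, g z = j z • h (coordFold j e z) := by
  obtain ⟨r, hr, hgr⟩ := exists_closedBall_eventually_forall
    ((tendsto_coordUpdate (e := e) hz₀).eventually
      (hg.eventually (by simp) : ∀ᶠ z in 𝓝 z₀, ContDiffAt ℂ 1 g z))
  have hjr : ∀ᶠ z in 𝓝 z₀, ‖j z‖ < r :=
    (j.continuous.norm.tendsto' z₀ 0 (by simp [hz₀])).eventually_lt_const hr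
  refine ⟨fun w => (2 * Real.pi * Complex.I : ℂ)⁻¹ •
    ∮ ζ in C(0, r), (ζ ^ 2 - j w)⁻¹ • g (coordUpdate j e w ζ), ?_, ?_⟩
  · refine (contDiffAt_one_circleIntegral (E := E)
      (K := fun p => (p.2 ^ 2 - j p.1)⁻¹ • g (coordUpdate j e p.1 p.2)) hr.le
      fun ζ hζ => ContDiffAt.smul (ContDiffAt.inv ?_ ?_) ?_).const_smul _
    · exact ((contDiff_snd.pow 2).sub (j.contDiff.comp contDiff_fst)).contDiffAt
    · have : ζ ≠ 0 := ne_of_mem_sphere hζ hr.ne'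
      simpa [hz₀]
    · exact ContDiffAt.comp (z₀, ζ) (hgr.self_of_nhds ζ (sphere_subset_closedBall hζ))
        contDiff_coordUpdate.contDiffAt
  · filter_upwards [hgr, hjr, hodd] with z hgz hjz hoddz
    have hline : DifferentiableOn ℂ (fun ζ => g (coordUpdate j e z ζ)) (closedBall 0 r) :=
      fun ζ hζ => (((hgz ζ hζ).differentiableAt one_ne_zero).comp ζ
        (by unfold coordUpdate; fun_prop)).differentiableWithinAt
    have hcauchy := sub_neg_eq_smul_circleIntegral hline hjz
    rw [coordUpdate_of_apply_eq rfl, ← coordReflection, hoddz, sub_neg_eq_add, ← two_smul ℂ,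
      mul_smul] at hcauchy
    simp only [coordFold, apply_coordUpdate he, coordUpdate_coordUpdate he]
    exact smul_right_injective G two_ne_zero hcauchy

theorem exists_eventuallyEq_comp_coordFold [CompleteSpace G] {f : E → G}
    (he : j.contLinear e = 1) (hz₀ : j z₀ = 0) (hf : ContDiffAt ℂ 1 f z₀)
    (heven : ∀ᶠ z in 𝓝 z₀, f (coordReflection j e z) = f z) :
    ∃ Φ : E → G, ContDiffAt ℂ 1 Φ z₀ ∧ f =ᶠ[𝓝 z₀] Φ ∘ coordFold j e := by
  have hj : j ≠ 0 := by rintro rfl; simp at he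
  obtain ⟨Φ, hΦ, hfΦ⟩ := exists_eventually_eq_smul_comp_coordFold (g := fun z => j z • f z) he hz₀
    (j.contDiff.contDiffAt.smul hf) <| by
      filter_upwards [heven] with z hz
      rw [hz, coordReflection, apply_coordUpdate he, neg_smul]
  refine ⟨Φ, hΦ, ?_⟩
  filter_upwards [hfΦ.eventually_nhds, hf.eventually (by simp),
    (tendsto_coordFold hz₀).eventually (hΦ.eventually (by simp))] with z hz hfz hΦz
  exact eq_of_eventually_smul_eq_smul hj hfz.continuousAt
    (hΦz.continuousAt.comp (hasFDerivAt_coordFold z).continuousAt) hz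

/-- The chain rule gives `j = J_f = (J_Φ ∘ fold) · 2j`, hence `J_Φ = 1/2` at `z₀`. -/
theorem exists_eventuallyEq_comp_coordFold_det_ne_zero {f : E → E}
    (he : j.contLinear e = 1) (hz₀ : j z₀ = 0) (hf : ContDiffAt ℂ 1 f z₀)
    (heven : ∀ᶠ z in 𝓝 z₀, f (coordReflection j e z) = f z)
    (hJ : ∀ᶠ z in 𝓝 z₀, (fderiv ℂ f z).det = j z) :
    ∃ Φ : E → E, ContDiffAt ℂ 1 Φ z₀ ∧ (fderiv ℂ Φ z₀).det ≠ 0 ∧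
      f =ᶠ[𝓝 z₀] Φ ∘ coordFold j e := by
  have : CompleteSpace E := FiniteDimensional.complete ℂ E
  have hj : j ≠ 0 := by rintro rfl; simp at he
  obtain ⟨Φ, hΦ, hfΦ⟩ := exists_eventuallyEq_comp_coordFold he hz₀ hf heven
  have hfold := tendsto_coordFold (e := e) hz₀
  have hchain : ∀ᶠ z in 𝓝 z₀,
      j z • (fderiv ℂ Φ (coordFold j e z)).det = j z • (1 / 2 : ℂ) := by
    filter_upwards [hJ, hfΦ.eventuallyEq_nhds, hfold.eventually (hΦ.eventually (by simp))]
      with z hJz hfz hΦz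
    rw [hfz.fderiv_eq, det_fderiv_comp (hΦz.differentiableAt one_ne_zero)
      (hasFDerivAt_coordFold z).differentiableAt, det_fderiv_coordFold he] at hJz
    simp only [smul_eq_mul]
    linear_combination (1 / 2) * hJz
  have hcont : ContinuousAt (fun z => (fderiv ℂ Φ (coordFold j e z)).det) z₀ := by
    refine ContinuousLinearMap.continuous_det.continuousAt.comp
      (ContinuousAt.comp (g := fderiv ℂ Φ) ?_ (hasFDerivAt_coordFold z₀).continuousAt)
    rw [coordFold_of_apply_eq_zero hz₀]
    exact hΦ.continuousAt_fderiv one_ne_zero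
  have hdet := eq_of_eventually_smul_eq_smul hj hcont continuousAt_const hchain
  rw [coordFold_of_apply_eq_zero hz₀] at hdet
  exact ⟨Φ, hΦ, by rw [hdet]; norm_num, hfΦ⟩

theorem nhds_le_map_of_critical {f : E → E} (he : j.contLinear e = 1) (hz₀ : j z₀ = 0)
    (hf : ContDiffAt ℂ 1 f z₀) (heven : ∀ᶠ z in 𝓝 z₀, f (coordReflection j e z) = f z)
    (hJ : ∀ᶠ z in 𝓝 z₀, (fderiv ℂ f z).det = j z) : 𝓝 (f z₀) ≤ map f (𝓝 z₀) := by
  obtain ⟨Φ, hΦ, hdet, hfΦ⟩ :=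
    exists_eventuallyEq_comp_coordFold_det_ne_zero he hz₀ hf heven hJ
  calc 𝓝 (f z₀) = map Φ (𝓝 z₀) := by
        rw [map_nhds_eq_of_det_fderiv_ne_zero hΦ hdet, hfΦ.eq_of_nhds, comp_apply,
          coordFold_of_apply_eq_zero hz₀]
    _ ≤ map Φ (map (coordFold j e) (𝓝 z₀)) := map_mono (nhds_le_map_coordFold he hz₀)
    _ = map f (𝓝 z₀) := by rw [map_map, map_congr hfΦ]

theorem exists_eventually_eq_smul_comp_of_critical [CompleteSpace G] {f : E → E} {g : E → G}
    (he : j.contLinear e = 1) (hz₀ : j z₀ = 0) (hf : ContDiffAt ℂ 1 f z₀)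
    (heven : ∀ᶠ z in 𝓝 z₀, f (coordReflection j e z) = f z)
    (hJ : ∀ᶠ z in 𝓝 z₀, (fderiv ℂ f z).det = j z) (hg : ContDiffAt ℂ 1 g z₀)
    (hodd : ∀ᶠ z in 𝓝 z₀, g (coordReflection j e z) = -g z) :
    ∃ q : E → G, ContDiffAt ℂ 1 q (f z₀) ∧ ∀ᶠ z in 𝓝 z₀, g z = j z • q (f z) := by
  obtain ⟨Φ, hΦ, hdet, hfΦ⟩ :=
    exists_eventuallyEq_comp_coordFold_det_ne_zero he hz₀ hf heven hJ
  obtain ⟨h, hh, hgh⟩ := exists_eventually_eq_smul_comp_coordFold he hz₀ hg hodd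
  obtain ⟨q, hq, hqΦ⟩ := exists_comp_eventuallyEq_of_det_fderiv_ne_zero hΦ hdet hh
  refine ⟨q, ?_, ?_⟩
  · rwa [hfΦ.eq_of_nhds, comp_apply, coordFold_of_apply_eq_zero hz₀]
  · filter_upwards [hgh, hfΦ, (tendsto_coordFold hz₀).eventually hqΦ] with z hgz hfz hqz
    rw [hgz, hfz, comp_apply, ← hqz, comp_apply]

theorem exists_eventually_eq_smul_comp_of_regular {f : E → E} {g : E → G} (hz₀ : j z₀ ≠ 0)
    (hf : ContDiffAt ℂ 1 f z₀) (hdet : (fderiv ℂ f z₀).det ≠ 0) (hg : ContDiffAt ℂ 1 g z₀) :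
    ∃ q : E → G, ContDiffAt ℂ 1 q (f z₀) ∧ ∀ᶠ z in 𝓝 z₀, g z = j z • q (f z) := by
  obtain ⟨q, hq, hqf⟩ := exists_comp_eventuallyEq_of_det_fderiv_ne_zero hf hdet
    ((j.contDiff.contDiffAt.inv hz₀).smul hg)
  refine ⟨q, hq, ?_⟩
  filter_upwards [hqf, j.continuous.continuousAt.eventually_ne hz₀] with z hz hjz
  exact (eq_inv_smul_iff₀ hjz).1 hz |>.symm

end Even

section Fibres

variable {X Y : Type*} {σ : X → X} {φ : X → Y} {U C : Set X} {z w : X}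

theorem eq_of_card_fiber_eq_one {v : Y} (hv : Nat.card {x ∈ U | φ x = v} = 1) (hz : z ∈ U)
    (hzv : φ z = v) (hw : w ∈ U) (hwv : φ w = v) : z = w := by
  obtain ⟨_, -⟩ := Nat.card_eq_one_iff_unique.1 hv
  exact congrArg Subtype.val
    (Subsingleton.elim (⟨z, hz, hzv⟩ : {x ∈ U | φ x = v}) ⟨w, hw, hwv⟩)

theorem eq_of_card_fiber_eq_two {v : Y} {x : X} (hv : Nat.card {x ∈ U | φ x = v} = 2)
    (hx : x ∈ U) (hxv : φ x = v) (hz : z ∈ U) (hzv : φ z = v) (hzx : z ≠ x)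
    (hw : w ∈ U) (hwv : φ w = v) (hwx : w ≠ x) : z = w := by
  obtain ⟨y, -, hy⟩ := (Nat.card_eq_two_iff' (⟨x, hx, hxv⟩ : {x ∈ U | φ x = v})).1 hv
  have hzy := hy ⟨z, hz, hzv⟩ (by simpa using hzx)
  have hwy := hy ⟨w, hw, hwv⟩ (by simpa using hwx)
  exact congrArg Subtype.val (hzy.trans hwy.symm)

theorem eq_or_eq_of_apply_eq (hσU : Set.MapsTo σ U U) (hφσ : ∀ z ∈ U, φ (σ z) = φ z)
    (hfib2 : ∀ v ∈ φ '' U \ φ '' C, Nat.card {x ∈ U | φ x = v} = 2)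
    (hfib1 : ∀ v ∈ φ '' C, Nat.card {x ∈ U | φ x = v} = 1)
    (hfix : ∀ z ∈ U, σ z = z → z ∈ C) (hz : z ∈ U) (hw : w ∈ U) (hwz : φ w = φ z) :
    w = z ∨ w = σ z := by
  by_cases hC : φ z ∈ φ '' C
  · exact .inl (eq_of_card_fiber_eq_one (hfib1 _ hC) hw hwz hz rfl)
  · refine or_iff_not_imp_left.2 fun hne => ?_
    exact eq_of_card_fiber_eq_two (hfib2 _ ⟨⟨z, hz, rfl⟩, hC⟩) hz rfl hw hwz hne (hσU hz)
      (hφσ z hz) fun h => hC ⟨z, hfix z hz h, rfl⟩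

end Fibres

section Descent

variable {𝕜 E F G : Type*} [NontriviallyNormedField 𝕜] [NormedAddCommGroup E] [NormedSpace 𝕜 E]
  [NormedAddCommGroup F] [NormedSpace 𝕜 F] [NormedAddCommGroup G] [NormedSpace 𝕜 G]

theorem exists_differentiableOn_image {X : Type*} [TopologicalSpace X] {U : Set X}
    (hU : IsOpen U) {φ : X → F} {k : X → G} (hopen : ∀ z ∈ U, 𝓝 (φ z) ≤ map φ (𝓝 z))
    (hfibre : ∀ z ∈ U, ∀ w ∈ U, φ w = φ z → k w = k z)
    (hloc : ∀ z ∈ U, ∃ q : F → G, DifferentiableAt 𝕜 q (φ z) ∧ k =ᶠ[𝓝 z] q ∘ φ) :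
    ∃ f : F → G, DifferentiableOn 𝕜 f (φ '' U) ∧ ∀ z ∈ U, f (φ z) = k z := by
  have hfac : (U.domRestrict k).FactorsThrough (U.domRestrict φ) :=
    fun w z hwz => hfibre z z.2 w w.2 hwz
  have hf : ∀ z ∈ U, extend (U.domRestrict φ) (U.domRestrict k) 0 (φ z) = k z :=
    fun z hz => hfac.extend_apply 0 ⟨z, hz⟩
  refine ⟨extend (U.domRestrict φ) (U.domRestrict k) 0, ?_, hf⟩
  rintro _ ⟨z, hz, rfl⟩
  obtain ⟨q, hq, hkq⟩ := hloc z hz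
  have hfq : ∀ᶠ w in 𝓝 z, extend (U.domRestrict φ) (U.domRestrict k) 0 (φ w) = q (φ w) := by
    filter_upwards [hU.mem_nhds hz, hkq] with w hw hkw using (hf w hw).trans hkw
  exact (hq.congr_of_eventuallyEq (hopen z hz hfq)).differentiableWithinAt

variable {U : Set E} {j : E →ᴬ[𝕜] 𝕜} {φ : E → F} {g : E → G}

theorem exists_eq_smul_eventuallyEq_comp (hj : j ≠ 0) (hU : IsOpen U)
    (hφ : ∀ z ∈ U, ContinuousAt φ z)
    (hloc : ∀ z ∈ U, ∃ q : F → G,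
      ContDiffAt 𝕜 1 q (φ z) ∧ ∀ᶠ w in 𝓝 z, g w = j w • q (φ w)) :
    ∃ k : E → G, (∀ z ∈ U, g z = j z • k z) ∧
      ∀ z ∈ U, ∃ q : F → G, ContDiffAt 𝕜 1 q (φ z) ∧ k =ᶠ[𝓝 z] q ∘ φ := by
  choose! q hq hgq using hloc
  refine ⟨fun z => q z (φ z), fun z hz => (hgq z hz).self_of_nhds,
    fun z₀ hz₀ => ⟨q z₀, hq z₀ hz₀, ?_⟩⟩
  have hqz₀ : ∀ᶠ z in 𝓝 z₀, ContDiffAt 𝕜 1 (q z₀) (φ z) :=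
    (hφ z₀ hz₀).eventually ((hq z₀ hz₀).eventually (by simp))
  filter_upwards [hU.mem_nhds hz₀, hqz₀, (hgq z₀ hz₀).eventually_nhds] with z hz hqz hgz
  refine eq_of_eventually_smul_eq_smul (a := q z ∘ φ) (b := q z₀ ∘ φ) hj
    ((hq z hz).continuousAt.comp (hφ z hz)) (hqz.continuousAt.comp (hφ z hz)) ?_
  filter_upwards [hgq z hz, hgz] with w hw hw₀ using hw.symm.trans hw₀

/-- The quotient `g / j` is `σ`-invariant, hence constant on the fibres of `φ`. -/
theorem exists_eq_smul_comp_of_local {σ : E → E} (hj : j ≠ 0) (hU : IsOpen U)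
    (hσU : Set.MapsTo σ U U) (hσ : ∀ z ∈ U, ContinuousAt σ z) (hφ : ∀ z ∈ U, ContinuousAt φ z)
    (hfibre : ∀ z ∈ U, ∀ w ∈ U, φ w = φ z → w = z ∨ w = σ z)
    (hopen : ∀ z ∈ U, 𝓝 (φ z) ≤ map φ (𝓝 z))
    (hjσ : ∀ z ∈ U, j (σ z) = -j z) (hgσ : ∀ z ∈ U, g (σ z) = -g z)
    (hloc : ∀ z ∈ U, ∃ q : F → G,
      ContDiffAt 𝕜 1 q (φ z) ∧ ∀ᶠ w in 𝓝 z, g w = j w • q (φ w)) :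
    ∃ f : F → G, DifferentiableOn 𝕜 f (φ '' U) ∧ ∀ z ∈ U, g z = j z • f (φ z) := by
  obtain ⟨k, hgk, hk⟩ := exists_eq_smul_eventuallyEq_comp hj hU hφ hloc
  have hkc : ∀ z ∈ U, ContinuousAt k z := fun z hz => by
    obtain ⟨q, hq, hkq⟩ := hk z hz
    exact (hq.continuousAt.comp (hφ z hz)).congr_of_eventuallyEq hkq
  have hkσ : ∀ z ∈ U, k (σ z) = k z := fun z hz => by
    refine eq_of_eventually_smul_eq_smul (a := k ∘ σ) hj
      ((hkc _ (hσU hz)).comp (hσ z hz)) (hkc z hz) ?_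
    filter_upwards [hU.mem_nhds hz] with w hw
    have hgw := hgσ w hw
    rwa [hgk _ (hσU hw), hjσ w hw, neg_smul, neg_inj, hgk w hw] at hgw
  obtain ⟨f, hf, hfk⟩ := exists_differentiableOn_image (𝕜 := 𝕜) (k := k) hU hopen
    (fun z hz w hw hwz => by
      rcases hfibre z hz w hw hwz with rfl | rfl
      exacts [rfl, hkσ z hz])
    fun z hz => (hk z hz).imp fun q hq => ⟨hq.1.differentiableAt one_ne_zero, hq.2⟩
  exact ⟨f, hf, fun z hz => by rw [hfk z hz, hgk z hz]⟩

end Descent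

section Main

variable {E G : Type*} [NormedAddCommGroup E] [NormedSpace ℂ E] [FiniteDimensional ℂ E]
  [NormedAddCommGroup G] [NormedSpace ℂ G]
  {σ : E →ᴬ[ℂ] E} {j : E →ᴬ[ℂ] ℂ} {φ : E → E} {g : E → G} {z₀ : E}

theorem nhds_le_map_and_exists_eventually_eq_smul_comp [CompleteSpace G]
    (hσ : σ.contLinear.det = -1) (hφ : ContDiffAt ℂ 1 φ z₀) (hg : ContDiffAt ℂ 1 g z₀)
    (hJ : ∀ᶠ z in 𝓝 z₀, (fderiv ℂ φ z).det = j z)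
    (hfix : ∀ᶠ z in 𝓝 z₀, j z = 0 → σ z = z)
    (hφσ : ∀ᶠ z in 𝓝 z₀, φ (σ z) = φ z) (hgσ : ∀ᶠ z in 𝓝 z₀, g (σ z) = -g z) :
    𝓝 (φ z₀) ≤ map φ (𝓝 z₀) ∧
      ∃ q : E → G, ContDiffAt ℂ 1 q (φ z₀) ∧ ∀ᶠ z in 𝓝 z₀, g z = j z • q (φ z) := by
  by_cases hz₀ : j z₀ = 0
  · obtain ⟨e, he, hσe⟩ := exists_eq_coordReflection hσ hz₀ hfix
    simp only [hσe] at hφσ hgσ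
    exact ⟨nhds_le_map_of_critical he hz₀ hφ hφσ hJ,
      exists_eventually_eq_smul_comp_of_critical he hz₀ hφ hφσ hJ hg hgσ⟩
  · have hdet : (fderiv ℂ φ z₀).det ≠ 0 := by rwa [hJ.self_of_nhds]
    exact ⟨(map_nhds_eq_of_det_fderiv_ne_zero hφ hdet).ge,
      exists_eventually_eq_smul_comp_of_regular hz₀ hφ hdet hg⟩

theorem stmt_8_general [CompleteSpace G] {U : Set E} (hσ : σ.contLinear.det = -1)
    (hU : IsOpen U) (hσU : Set.MapsTo σ U U) (hφ : DifferentiableOn ℂ φ U)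
    (hfib2 : ∀ v ∈ φ '' U \ φ '' {z ∈ U | (fderiv ℂ φ z).det = 0},
      Nat.card {z ∈ U | φ z = v} = 2)
    (hfib1 : ∀ v ∈ φ '' {z ∈ U | (fderiv ℂ φ z).det = 0}, Nat.card {z ∈ U | φ z = v} = 1)
    (hφσ : ∀ z ∈ U, φ (σ z) = φ z) (hJ : ∀ z ∈ U, (fderiv ℂ φ z).det = j z)
    (hg : DifferentiableOn ℂ g U) (hgσ : ∀ z ∈ U, g (σ z) = -g z) :
    ∃ f : E → G,
      DifferentiableOn ℂ f (φ '' U) ∧ ∀ z ∈ U, g z = (fderiv ℂ φ z).det • f (φ z) := by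
  have hnhds : ∀ z ∈ U, U ∈ 𝓝 z := fun z hz => hU.mem_nhds hz
  have hφ1 : ∀ z ∈ U, ContDiffAt ℂ 1 φ z := fun z hz =>
    contDiffAt_one_iff_eventually_differentiableAt.2 (hφ.eventually_differentiableAt (hnhds z hz))
  have hg1 : ∀ z ∈ U, ContDiffAt ℂ 1 g z := fun z hz =>
    contDiffAt_one_iff_eventually_differentiableAt.2 (hg.eventually_differentiableAt (hnhds z hz))
  have hjσ : ∀ z ∈ U, j (σ z) = -j z := fun z hz => by
    have h := det_fderiv_of_comp_eventuallyEq
      ((hφ1 _ (hσU hz)).differentiableAt one_ne_zero) (eventually_of_mem (hnhds z hz) hφσ)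
    rwa [hJ z hz, hJ _ (hσU hz), hσ, mul_neg_one, ← neg_eq_iff_eq_neg, eq_comm] at h
  have hfix : ∀ z ∈ U, j z = 0 → σ z = z := fun z hz hz0 =>
    eq_of_card_fiber_eq_one (hfib1 (φ z) ⟨z, ⟨hz, by rw [hJ z hz, hz0]⟩, rfl⟩) (hσU hz)
      (hφσ z hz) hz rfl
  have hfibre : ∀ z ∈ U, ∀ w ∈ U, φ w = φ z → w = z ∨ w = σ z := fun z hz w hw =>
    eq_or_eq_of_apply_eq hσU hφσ hfib2 hfib1
      (fun x hx hσx => ⟨hx, by rw [hJ x hx, ← self_eq_neg, ← hjσ x hx, hσx]⟩) hz hw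
  have hlocal := fun z hz => nhds_le_map_and_exists_eventually_eq_smul_comp hσ (hφ1 z hz)
    (hg1 z hz) (eventually_of_mem (hnhds z hz) hJ) (eventually_of_mem (hnhds z hz) hfix)
    (eventually_of_mem (hnhds z hz) hφσ) (eventually_of_mem (hnhds z hz) hgσ)
  obtain rfl | ⟨z₀, hz₀⟩ := U.eq_empty_or_nonempty
  · exact ⟨0, by simp⟩
  have hj : j ≠ 0 := by
    rintro rfl
    exact contLinear_ne_zero_of_fixed hσ rfl (eventually_of_mem (hnhds z₀ hz₀) hfix) rfl
  obtain ⟨f, hf, hgf⟩ := exists_eq_smul_comp_of_local hj hU hσU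
    (fun z _ => σ.continuous.continuousAt) (fun z hz => (hφ1 z hz).continuousAt) hfibre
    (fun z hz => (hlocal z hz).1) hjσ hgσ fun z hz => (hlocal z hz).2
  exact ⟨f, hf, fun z hz => by rw [hJ z hz, hgf z hz]⟩

end Main

/-- Under the hypotheses of the main theorem (σ affine-linear
involution with `J_σ = -1`, `φ : U → V` σ-invariant 2-proper with affine-linear
Jacobian), every holomorphic `g` on `U` with `g ∘ σ = -g` can be written as
`g = J_φ · (f ∘ φ)` for some `f` holomorphic on `V`. -/
theorem stmt_8 (d : ℕ) (hd : 1 ≤ d)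
    (σ : EuclideanSpace ℂ (Fin d) → EuclideanSpace ℂ (Fin d))
    (A : EuclideanSpace ℂ (Fin d) →ₗ[ℂ] EuclideanSpace ℂ (Fin d))
    (B : EuclideanSpace ℂ (Fin d))
    (hσ : ∀ z, σ z = A z + B)
    (hσinv : ∀ z, σ (σ z) = z)
    (hdetA : LinearMap.det A = -1)
    (U V : Set (EuclideanSpace ℂ (Fin d)))
    (hUopen : IsOpen U) (hUconn : IsConnected U)
    (hVopen : IsOpen V) (hVconn : IsConnected V)
    (hUinv : σ '' U ⊆ U)
    (φ : EuclideanSpace ℂ (Fin d) → EuclideanSpace ℂ (Fin d))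
    (hφholo : DifferentiableOn ℂ φ U)
    (hφmaps : Set.MapsTo φ U V)
    (hφsurj : φ '' U = V)
    (hφproper : ∀ K : Set (EuclideanSpace ℂ (Fin d)), K ⊆ V → IsCompact K →
      IsCompact {z ∈ U | φ z ∈ K})
    (hfib2 : ∀ v ∈ V \ (φ '' {z ∈ U | (fderiv ℂ φ z).det = 0}),
      Nat.card {z ∈ U | φ z = v} = 2)
    (hfib1 : ∀ v ∈ φ '' {z ∈ U | (fderiv ℂ φ z).det = 0},
      Nat.card {z ∈ U | φ z = v} = 1)
    (hφσ : ∀ z ∈ U, φ (σ z) = φ z)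
    (hJaff : ∃ (l : EuclideanSpace ℂ (Fin d) →ₗ[ℂ] ℂ) (c : ℂ),
      ∀ z ∈ U, (fderiv ℂ φ z).det = l z + c)
    (g : EuclideanSpace ℂ (Fin d) → ℂ)
    (hg : DifferentiableOn ℂ g U)
    (hgodd : ∀ z ∈ U, g (σ z) = - g z) :
    ∃ f : EuclideanSpace ℂ (Fin d) → ℂ,
      DifferentiableOn ℂ f V ∧ ∀ z ∈ U, g z = (fderiv ℂ φ z).det * f (φ z) := by
  obtain ⟨l, c, hJ⟩ := hJaff
  obtain rfl : σ = ⇑(A.toContinuousLinearMap.toContinuousAffineMap +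
    ContinuousAffineMap.const ℂ (EuclideanSpace ℂ (Fin d)) B) := funext hσ
  subst hφsurj
  exact stmt_8_general (j := l.toContinuousLinearMap.toContinuousAffineMap +
    ContinuousAffineMap.const ℂ _ c) (by simpa using hdetA) hUopen
    (Set.mapsTo_iff_image_subset.2 hUinv) hφholo hfib2 hfib1 hφσ hJ hg hgodd
end

section
/- Fix an integer d ≥ 2. Define κ : ℂ^d × ℂ^d → ℂ by κ(z, w) := (1/4)·exp(Σ_{j=1}^{d−1} z_j·conj(w_j)) · Σ_{n=0}^{∞} (z_d·conj(w_d))ⁿ / (2n+1)!. Then κ is a positive semidefinite kernel on ℂ^d. (This is the reproducing kernel of the space obtained by transferring the Segal–Bargmann space of ℂ^d under the map φ(z) = (z₁, …, z_{d−1}, z_d²).) -/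
/-!
A positive semidefinite kernel on `X` is a `Matrix.PosSemidef` matrix indexed by `X`, with `X`
possibly infinite. By the Schur product theorem the entrywise powers of such a kernel are positive
semidefinite, and the property passes to nonnegative combinations and to pointwise limits, so
applying entrywise a convergent power series with nonnegative coefficients preserves it. Both
`exp` and `u ↦ ∑ uⁿ / (2n+1)!` are such series. The first is applied to a sum of rank-one kernels
`z j * conj (w j)` and the second to a single one; the Segal–Bargmann kernel is `1/4` times the
Schur product of the results.
-/

open Complex

/-- The kernel obtained by transferring the Segal–Bargmann space of `ℂ^d` under
`φ(z) = (z₁, …, z_{d-1}, z_d²)`: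
`κ(z,w) = (1/4)·exp(Σ_{j<d-1} z_j conj w_j) · Σ_n (z_d conj w_d)ⁿ/(2n+1)!`. -/
noncomputable def sbKernel (d : ℕ) (hd : 2 ≤ d) (z w : Fin d → ℂ) : ℂ :=
  (4⁻¹ : ℂ) *
    Complex.exp (∑ j : Fin d, if (j : ℕ) < d - 1 then z j * (starRingEnd ℂ) (w j) else 0) *
    ∑' n : ℕ, (z ⟨d - 1, by omega⟩ * (starRingEnd ℂ) (w ⟨d - 1, by omega⟩)) ^ n
        / (Nat.factorial (2 * n + 1) : ℂ)

open scoped Matrix ComplexOrder Nat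

section StarRing

variable {X R : Type*} [PartialOrder R]

theorem posSemidef_vecMulVec_star [Ring R] [StarRing R] [StarOrderedRing R] (f : X → R) :
    (Matrix.vecMulVec f (star f)).PosSemidef := by
  refine ⟨by simp [Matrix.IsHermitian, Matrix.conjTranspose_vecMulVec], fun x ↦ ?_⟩
  have hsum : (x.sum fun i xi ↦ x.sum fun j xj ↦ star xi * Matrix.vecMulVec f (star f) i j * xj)
      = (x.sum fun i xi ↦ star xi * f i) * star (x.sum fun i xi ↦ star xi * f i) := by
    simp only [Finsupp.sum, Matrix.vecMulVec_apply, Pi.star_apply, star_sum, star_mul, star_star,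
      Finset.sum_mul_sum, mul_assoc]
  exact hsum ▸ mul_star_self_nonneg _

/-- The rank-one kernel `z k * star (w k)` on functions `ι → R`: the `k`-th summand of the kernel
`∑ k, z k * star (w k)`. -/
def coordKernel {ι : Type*} (R : Type*) [Mul R] [Star R] (k : ι) : Matrix (ι → R) (ι → R) R :=
  Matrix.vecMulVec (fun z ↦ z k) (star fun z ↦ z k)

theorem posSemidef_coordKernel {ι : Type*} [Ring R] [StarRing R] [StarOrderedRing R] (k : ι) :
    (coordKernel R k).PosSemidef :=
  posSemidef_vecMulVec_star _

theorem sum_sum_mul_star_mul_nonneg [Fintype X] [CommRing R] [StarRing R] {A : Matrix X X R}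
    (hA : A.PosSemidef) (c : X → R) : 0 ≤ ∑ i, ∑ j, c i * star (c j) * A i j := by
  have h := hA.dotProduct_mulVec_nonneg (star c)
  simpa only [dotProduct, Matrix.mulVec, star_star, Pi.star_apply, Finset.mul_sum, mul_assoc,
    mul_comm (A _ _)] using h

variable [Ring R] [StarRing R] [TopologicalSpace R] [IsTopologicalRing R] [ContinuousStar R]
  [OrderClosedTopology R]

theorem isClosed_setOf_posSemidef : IsClosed {A : Matrix X X R | A.PosSemidef} := by
  have hherm : IsClosed {A : Matrix X X R | A.IsHermitian} :=
    isClosed_eq (by fun_prop) continuous_id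
  have hform (x : X →₀ R) : IsClosed {A : Matrix X X R |
      0 ≤ x.sum fun i xi ↦ x.sum fun j xj ↦ star xi * A i j * xj} :=
    isClosed_le continuous_const (by unfold Finsupp.sum; fun_prop)
  simp only [Matrix.PosSemidef, Set.ofPred_and, Set.ofPred_forall]
  exact hherm.inter (isClosed_iInter hform)

theorem posSemidef_of_hasSum [AddLeftMono R] {ι : Type*} {A : ι → Matrix X X R} {B : Matrix X X R}
    (hA : ∀ i, (A i).PosSemidef) (hB : HasSum A B) : B.PosSemidef :=
  isClosed_setOf_posSemidef.mem_of_tendsto hB <|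
    .of_forall fun s ↦ Matrix.posSemidef_sum s fun i _ ↦ hA i

end StarRing

section RCLike

variable {X 𝕜 : Type*} [RCLike 𝕜] {A : Matrix X X 𝕜}

theorem posSemidef_map_pow (hA : A.PosSemidef) (m : ℕ) : (A.map (· ^ m)).PosSemidef := by
  induction m with
  | zero => simpa [Matrix.vecMulVec, Matrix.map] using posSemidef_vecMulVec_star (1 : X → 𝕜)
  | succ m ih =>
    simp only [pow_succ]
    exact ih.hadamard hA

theorem posSemidef_map_of_hasSum_pow (hA : A.PosSemidef) {a : ℕ → 𝕜} (ha : ∀ m, 0 ≤ a m)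
    {f : 𝕜 → 𝕜} (hf : ∀ i j, HasSum (fun m ↦ a m * A i j ^ m) (f (A i j))) :
    (A.map f).PosSemidef :=
  posSemidef_of_hasSum (fun m ↦ (posSemidef_map_pow hA m).smul (ha m)) <|
    Pi.hasSum.2 fun i ↦ Pi.hasSum.2 (hf i)

theorem posSemidef_map_exp (hA : A.PosSemidef) : (A.map NormedSpace.exp).PosSemidef :=
  posSemidef_map_of_hasSum_pow hA (a := fun m ↦ (m ! : 𝕜)⁻¹) (fun m ↦ by positivity) fun i j ↦ by
    simpa only [div_eq_inv_mul] using NormedSpace.expSeries_div_hasSum_exp (A i j)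

theorem summable_pow_div_factorial_two_mul_add_one (u : 𝕜) :
    Summable fun m : ℕ ↦ u ^ m / ((2 * m + 1)! : 𝕜) := by
  refine .of_norm_bounded (Real.summable_pow_div_factorial ‖u‖) fun m ↦ ?_
  rw [norm_div, norm_pow, RCLike.norm_natCast]
  gcongr
  omega

theorem posSemidef_map_tsum_pow_div_factorial (hA : A.PosSemidef) :
    (A.map fun u ↦ ∑' m : ℕ, u ^ m / ((2 * m + 1)! : 𝕜)).PosSemidef :=
  posSemidef_map_of_hasSum_pow hA (a := fun m ↦ ((2 * m + 1)! : 𝕜)⁻¹) (fun m ↦ by positivity)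
    fun i j ↦ by
      simpa only [div_eq_inv_mul] using (summable_pow_div_factorial_two_mul_add_one (A i j)).hasSum

end RCLike

theorem of_sbKernel_eq_smul_hadamard (d : ℕ) (hd : 2 ≤ d) :
    Matrix.of (sbKernel d hd) = (4⁻¹ : ℂ) •
      ((∑ k : Fin d with k.val < d - 1, coordKernel ℂ k).map NormedSpace.exp ⊙
        (coordKernel ℂ (⟨d - 1, by omega⟩ : Fin d)).map
          fun u ↦ ∑' m : ℕ, u ^ m / ((2 * m + 1)! : ℂ)) := by
  ext z w
  simp [sbKernel, coordKernel, Matrix.sum_apply, Matrix.vecMulVec_apply, ← Finset.sum_filter,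
    Complex.exp_eq_exp_ℂ, mul_assoc]

theorem posSemidef_sbKernel (d : ℕ) (hd : 2 ≤ d) : (Matrix.of (sbKernel d hd)).PosSemidef := by
  have hexp := posSemidef_map_exp <|
    Matrix.posSemidef_sum {k : Fin d | k.val < d - 1} fun k _ ↦ posSemidef_coordKernel (R := ℂ) k
  have hlast := posSemidef_map_tsum_pow_div_factorial <|
    posSemidef_coordKernel (R := ℂ) (⟨d - 1, by omega⟩ : Fin d)
  have hquarter : (0 : ℂ) ≤ 4⁻¹ := by positivity
  exact of_sbKernel_eq_smul_hadamard d hd ▸ (hexp.hadamard hlast).smul hquarter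

/-- the transferred Segal–Bargmann kernel is a positive
semidefinite kernel on `ℂ^d`. -/
theorem stmt_17 (d : ℕ) (hd : 2 ≤ d) :
    ∀ (n : ℕ) (p : Fin n → (Fin d → ℂ)) (c : Fin n → ℂ),
      (∑ i, ∑ j, c i * (starRingEnd ℂ) (c j) * sbKernel d hd (p i) (p j)).im = 0 ∧
      0 ≤ (∑ i, ∑ j, c i * (starRingEnd ℂ) (c j) * sbKernel d hd (p i) (p j)).re := by
  intro n p c
  have hnonneg := sum_sum_mul_star_mul_nonneg ((posSemidef_sbKernel d hd).submatrix p) c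
  obtain ⟨hre, him⟩ := Complex.nonneg_iff.1 hnonneg
  exact ⟨him.symm, hre⟩
end
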